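/- arXiv:0704.3756 — 12 statements merged into one kernel-verified Lean document; each statement's English description precedes it below -/
import Mathlib

section
/- Let X and Y be metric spaces, f : X → Y continuous, A ⊆ X closed, and B ⊆ Y closed. Suppose that f restricted to A is a homeomorphism from A onto B, and that f is a local homeomorphism at every point a ∈ A (i.e., there is an open neighborhood W of a such that f(W) is open and f|W is a homeomorphism onto f(W)). Then there exist open sets U ⊇ A in X and V ⊇ B in Y such that f restricted to U is a homeomorphism from U onto V. -/
/-!
The set `U` is a union of balls `B(a, δ a)`, `a ∈ A`. Let `B(a, r a)` be a ball on which `f` is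
injective and open. Since the inverse of `f|A` is continuous at `f a`, there is `s a ≤ r a / 2` such
that `dist (f a') (f a) < s a` forces `dist a' a < r a / 2` for `a' ∈ A`; and `δ a ≤ s a` is chosen
with `f (B(a, δ a)) ⊆ B(f a, s a / 2)`. If `f x = f x'` with `x ∈ B(a, δ a)`, `x' ∈ B(a', δ a')`
and, say, `s a' ≤ s a`, then `dist (f a') (f a) < s a`, so `dist a' a < r a / 2`, while
`δ a' ≤ s a' ≤ s a ≤ r a / 2`. Hence `x` and `x'` both lie in `B(a, r a)`, where `f` is injective.
Ordering the two points by `s` is what makes a global patching argument unnecessary.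
Finally `f` is open near every point of `U`, so the continuous bijection `U → f '' U` is open.
-/

open Metric in
/-- Global injectivity near `A`. Hypothesis `hinv` is the continuity of the inverse of `f|A`
(and implies that `f` is injective on `A`). The open set `W` only bounds `U` from outside: it serves
to keep `U` in the region where `f` is open. -/
lemma exists_open_injOn {X Y : Type*} [MetricSpace X] [MetricSpace Y]
    {f : X → Y} (hf : Continuous f) {A : Set X}
    (hinv : ∀ a ∈ A, ∀ ε > 0, ∃ s > 0, ∀ a' ∈ A, dist (f a') (f a) < s → dist a' a < ε)
    {W : Set X} (hW : IsOpen W) (hAW : A ⊆ W)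
    (hinj : ∀ a ∈ A, ∃ r > 0, Set.InjOn f (ball a r)) :
    ∃ U, IsOpen U ∧ A ⊆ U ∧ U ⊆ W ∧ Set.InjOn f U := by
  have key : ∀ a : A, ∃ r s δ : ℝ, Set.InjOn f (ball a r) ∧ 0 < δ ∧ δ ≤ s ∧ s ≤ r / 2 ∧
      (∀ a' ∈ A, dist (f a') (f a) < s → dist a' a < r / 2) ∧
      (∀ x ∈ ball (a : X) δ, dist (f x) (f a) < s / 2) ∧ ball (a : X) δ ⊆ W := by
    rintro ⟨a, ha⟩
    obtain ⟨r, hr, hri⟩ := hinj a ha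
    obtain ⟨s, hs, hsi⟩ := hinv a ha (r / 2) (by positivity)
    have hs' : 0 < min s (r / 2) := lt_min hs (by positivity)
    obtain ⟨d, hd, hdi⟩ := Metric.continuous_iff.1 hf a (min s (r / 2) / 2) (by positivity)
    obtain ⟨w, hw, hwi⟩ := Metric.isOpen_iff.1 hW a (hAW ha)
    refine ⟨r, min s (r / 2), min (min d w) (min s (r / 2)), hri, lt_min (lt_min hd hw) hs',
      min_le_right _ _, min_le_right _ _, fun a' ha' h => hsi a' ha' (h.trans_le (min_le_left _ _)),
      fun x hx => hdi x ?_, fun x hx => hwi ?_⟩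
    · exact (mem_ball.1 hx).trans_le ((min_le_left _ _).trans (min_le_left _ _))
    · exact (mem_ball.1 hx).trans_le ((min_le_left _ _).trans (min_le_right _ _))
  choose r s δ hri hδ hδs hsr hinv' hδf hδW using key
  refine ⟨⋃ a : A, ball (a : X) (δ a), isOpen_iUnion fun _ => isOpen_ball,
    fun a ha => Set.mem_iUnion.2 ⟨⟨a, ha⟩, mem_ball_self (hδ _)⟩, Set.iUnion_subset hδW, ?_⟩
  have main : ∀ a a' : A, s a' ≤ s a → ∀ x ∈ ball (a : X) (δ a), ∀ x' ∈ ball (a' : X) (δ a'),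
      f x = f x' → x = x' := by
    intro a a' hs x hx x' hx' hxx
    have h1 := hδf a x hx
    have h2 := hδf a' x' hx'
    have h3 : dist (a' : X) a < r a / 2 := by
      refine hinv' a a' a'.2 ?_
      have := dist_triangle_left (f a') (f a) (f x')
      rw [hxx] at h1
      linarith
    have h4 := dist_triangle x' a' a
    rw [mem_ball] at hx hx'
    have h5 := hδs a
    have h6 := hδs a'
    have h7 := hsr a
    refine hri a (mem_ball.2 ?_) (mem_ball.2 ?_) hxx
    · linarith [hδ a]
    · linarith
  intro x hx x' hx' hxx
  obtain ⟨a, ha⟩ := Set.mem_iUnion.1 hx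
  obtain ⟨a', ha'⟩ := Set.mem_iUnion.1 hx'
  rcases le_total (s a') (s a) with h | h
  · exact main a a' h x ha x' ha' hxx
  · exact (main a' a h x' ha' x ha hxx.symm).symm

/-- Semiglobal inverse function theorem, topological form: a continuous map between
metric spaces which restricts to a homeomorphism from a closed set `A` onto a closed
set `B`, and which is a local homeomorphism at every point of `A`, is a homeomorphism
from some open neighborhood `U` of `A` onto some open neighborhood `V` of `B`. -/
theorem semiglobal_inverse_function
    {X Y : Type*} [MetricSpace X] [MetricSpace Y]
    (f : X → Y) (hf : Continuous f)
    (A : Set X) (hA : IsClosed A) (B : Set Y) (hB : IsClosed B)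
    (hAB : Set.BijOn f A B)
    (hrestr : ∃ e : A ≃ₜ B, ∀ a : A, (e a : Y) = f a)
    (hloc : ∀ a ∈ A, ∃ W : Set X, IsOpen W ∧ a ∈ W ∧ IsOpen (f '' W) ∧
      ∃ eW : W ≃ₜ (f '' W), ∀ w : W, (eW w : Y) = f w) :
    ∃ U : Set X, ∃ V : Set Y,
      IsOpen U ∧ IsOpen V ∧ A ⊆ U ∧ B ⊆ V ∧ Set.BijOn f U V ∧
      ∃ e : U ≃ₜ V, ∀ x : U, (e x : Y) = f x := by
  choose! W hWo haW hfW hWe using hloc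
  have hemb : ∀ a ∈ A, Topology.IsOpenEmbedding ((W a).domRestrict f) := by
    intro a ha
    obtain ⟨e, he⟩ := hWe a ha
    have : (W a).domRestrict f = Subtype.val ∘ e := funext fun w => (he w).symm
    rw [this]
    exact (hfW a ha).isOpenEmbedding_subtypeVal.comp e.isOpenEmbedding
  obtain ⟨U, hUo, hAU, hUW, hUi⟩ := exists_open_injOn (A := A) hf (W := ⋃ a ∈ A, W a) (by
      obtain ⟨e, he⟩ := hrestr
      intro a ha ε hε
      obtain ⟨s, hs, h⟩ := Metric.continuous_iff.1 e.symm.continuous (e ⟨a, ha⟩) ε hε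
      refine ⟨s, hs, fun a' ha' hd => ?_⟩
      have := h (e ⟨a', ha'⟩) (by rw [Subtype.dist_eq, he, he]; exact hd)
      simpa [Subtype.dist_eq] using this)
    (isOpen_biUnion hWo) (fun a ha => Set.mem_biUnion ha (haW a ha)) (by
      intro a ha
      obtain ⟨r, hr, hrW⟩ := Metric.isOpen_iff.1 (hWo a ha) a (haW a ha)
      exact ⟨r, hr, (Set.injOn_iff_injective.2 (hemb a ha).injective).mono hrW⟩)
  have hopen : ∀ O : Set X, IsOpen O → O ⊆ U → IsOpen (f '' O) := by
    intro O hO hOU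
    have : f '' O = ⋃ a ∈ A, (W a).domRestrict f '' (Subtype.val ⁻¹' O) := by
      ext y
      simp only [Set.mem_iUnion, Set.mem_image, Set.mem_preimage]
      constructor
      · rintro ⟨x, hx, rfl⟩
        obtain ⟨a, ha, hxa⟩ := Set.mem_iUnion₂.1 (hUW (hOU hx))
        exact ⟨a, ha, ⟨x, hxa⟩, hx, rfl⟩
      · rintro ⟨a, ha, x, hx, rfl⟩
        exact ⟨x, hx, rfl⟩
    rw [this]
    exact isOpen_biUnion fun a ha =>
      (hemb a ha).isOpenMap _ (hO.preimage continuous_subtype_val)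
  have hres : Topology.IsOpenEmbedding (U.domRestrict f) := by
    refine .of_continuous_injective_isOpenMap (hf.comp continuous_subtype_val)
      (Set.injOn_iff_injective.1 hUi) fun O hO => ?_
    have : U.domRestrict f '' O = f '' (Subtype.val '' O) := by
      rw [Set.image_image]; rfl
    rw [this]
    exact hopen _ (hUo.isOpenMap_subtype_val O hO) (Subtype.coe_image_subset U O)
  exact ⟨U, f '' U, hUo, hopen U hUo subset_rfl, hAU, hAB.image_eq ▸ Set.image_mono hAU,
    hUi.bijOn_image,
    hres.toIsEmbedding.toHomeomorph.trans (Homeomorph.setCongr (Set.range_domRestrict f U)),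
    fun _ => rfl⟩
end

section
/- Let M be a topological space, N a metric space, g : M → N a continuous map, S ⊆ M a subset (the 'solution set'), N₀ ⊆ N a closed subset, and γ₀ : N₀ → M a continuous map such that for every n ∈ N₀, γ₀(n) ∈ S and g(γ₀(n)) = n. Suppose that for every n ∈ N₀ there exist open sets Uₙ ∋ γ₀(n) in M and Vₙ ∋ n in N and a continuous map γₙ : Vₙ → Uₙ such that for every n' ∈ Vₙ, γₙ(n') is the unique point m ∈ Uₙ with m ∈ S and g(m) = n'. Then there exist an open set U ⊇ γ₀(N₀) in M, an open set V ⊇ N₀ in N, and a continuous map γ : V → U such that for every n ∈ V, γ(n) ∈ S with g(γ(n)) = n, and γ(n) is the unique point of U with these two properties. -/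
/-!
On `N₀`, continuity of `γ₀` and local uniqueness force each local family `γ i` to agree with `γ₀`
near its base point. By paracompactness `N₀` is covered by the interiors of a locally finite family
of closed sets `C i`, each so small that this agreement holds on `N₀ ∩ C i`. Let `U`
consist of the points `m` over `V` lying in `Ui i` for *every* `i` with `g m ∈ C i`, where `V` is the
interior of the set of those `n` lying in some `C i` and such that all the local solutions attached
to the `C i` containing `n` lie in all the corresponding `Ui j`. Local finiteness makes `U` open and
makes `V` a neighbourhood of `N₀`. Over `V` the local solutions coincide by uniqueness, they lie in
`U`, and gluing along a locally finite closed cover gives continuity.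
-/

open Set Filter Topology

/-- Gluing along a locally finite closed family `C i`, once `γ₀` is known to map `N₀ ∩ C i`
into `Ui i`, so that it agrees there with the local family `γ i` by uniqueness. -/
theorem glue_of_locallyFinite
    {M N ι : Type*} [TopologicalSpace M] [TopologicalSpace N]
    {g : M → N} (hg : Continuous g) {S : Set M} {N₀ : Set N} {γ₀ : N → M}
    (hγ₀ : ∀ n ∈ N₀, γ₀ n ∈ S ∧ g (γ₀ n) = n)
    {Ui : ι → Set M} {Vi C : ι → Set N} {γ : ι → N → M}
    (hU : ∀ i, IsOpen (Ui i)) (hV : ∀ i, IsOpen (Vi i))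
    (hγ : ∀ i, ContinuousOn (γ i) (Vi i))
    (hsol : ∀ i, ∀ n ∈ Vi i, γ i n ∈ Ui i ∧ γ i n ∈ S ∧ g (γ i n) = n ∧
      ∀ m ∈ Ui i, m ∈ S → g m = n → m = γ i n)
    (hC : ∀ i, IsClosed (C i)) (hCV : ∀ i, C i ⊆ Vi i) (hlf : LocallyFinite C)
    (hcov : ∀ n ∈ N₀, ∃ i, C i ∈ 𝓝 n)
    (hmem : ∀ i, ∀ n ∈ N₀, n ∈ C i → γ₀ n ∈ Ui i) :
    ∃ U : Set M, ∃ V : Set N,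
      IsOpen U ∧ IsOpen V ∧ γ₀ '' N₀ ⊆ U ∧ N₀ ⊆ V ∧
      ∃ γ : N → M, ContinuousOn γ V ∧
        ∀ n ∈ V, γ n ∈ U ∧ γ n ∈ S ∧ g (γ n) = n ∧
          ∀ m ∈ U, m ∈ S → g m = n → m = γ n := by
  classical
  set A : Set N := {n | (∃ i, n ∈ C i) ∧ ∀ i j, n ∈ C i → n ∈ C j → γ i n ∈ Ui j} with hA
  have hN₀A : N₀ ⊆ interior A := by
    intro n hn
    rw [mem_interior_iff_mem_nhds]
    obtain ⟨k, hk⟩ := hcov n hn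
    have hfin : {i | n ∈ C i}.Finite := hlf.point_finite n
    have hev : ∀ᶠ y in 𝓝 n, ∀ i ∈ {i | n ∈ C i}, ∀ j ∈ {i | n ∈ C i}, γ i y ∈ Ui j := by
      refine (eventually_all_finite hfin).2 fun i hi => (eventually_all_finite hfin).2 fun j hj => ?_
      have hc : ContinuousAt (γ i) n := (hγ i).continuousAt ((hV i).mem_nhds (hCV i hi))
      have he : γ₀ n = γ i n :=
        (hsol i n (hCV i hi)).2.2.2 _ (hmem i n hn hi) (hγ₀ n hn).1 (hγ₀ n hn).2
      exact hc.eventually_mem ((hU j).mem_nhds (he ▸ hmem j n hn hj))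
    filter_upwards [hk, hev, hlf.eventually_subset hC n] with y hy hy' hsub
    exact ⟨⟨k, hy⟩, fun i j hi hj => hy' i (hsub hi) j (hsub hj)⟩
  have hBopen : IsOpen {m | ∀ i, g m ∈ C i → m ∈ Ui i} := by
    -- The complement is a locally finite union of closed sets.
    have hcl : IsClosed (⋃ i, g ⁻¹' C i ∩ (Ui i)ᶜ) :=
      ((hlf.preimage_continuous hg).subset fun i => inter_subset_left).isClosed_iUnion
        fun i => ((hC i).preimage hg).inter (hU i).isClosed_compl
    convert hcl.isOpen_compl using 1
    ext m
    simp
  -- The choice of index is immaterial on `A` by `hG` below; values of `G` off `A` play no role.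
  let G : N → M := fun n => if h : ∃ i, n ∈ C i then γ h.choose n else γ₀ n
  have hG : ∀ n ∈ A, ∀ i, n ∈ C i → G n = γ i n := by
    intro n hn i hi
    have hGn : G n = γ hn.1.choose n := dif_pos hn.1
    have hk : n ∈ C hn.1.choose := hn.1.choose_spec
    obtain ⟨-, h2, h3, -⟩ := hsol _ n (hCV _ hk)
    rw [hGn]
    exact (hsol i n (hCV i hi)).2.2.2 _ (hn.2 _ i hk hi) h2 h3
  refine ⟨{m | ∀ i, g m ∈ C i → m ∈ Ui i} ∩ g ⁻¹' interior A, interior A,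
    hBopen.inter (isOpen_interior.preimage hg), isOpen_interior, ?_, hN₀A, G, ?_, ?_⟩
  · rintro _ ⟨n, hn, rfl⟩
    refine ⟨fun i hi => hmem i n hn ?_, ?_⟩
    · rwa [(hγ₀ n hn).2] at hi
    · rw [mem_preimage, (hγ₀ n hn).2]
      exact hN₀A hn
  · rw [continuousOn_iff_continuous_domRestrict]
    refine (hlf.preimage_continuous continuous_subtype_val).continuous ?_
      (fun i => (hC i).preimage continuous_subtype_val) fun i => ?_
    · refine eq_univ_of_forall fun x => ?_
      obtain ⟨i, hi⟩ := (interior_subset x.2).1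
      exact mem_iUnion.2 ⟨i, hi⟩
    · refine ((hγ i).comp continuous_subtype_val.continuousOn fun x hx => hCV i hx).congr ?_
      intro x hx
      exact hG x (interior_subset x.2) i hx
  · intro n hn
    have hnA := interior_subset hn
    obtain ⟨i, hi⟩ := hnA.1
    obtain ⟨-, h2, h3, h4⟩ := hsol i n (hCV i hi)
    rw [hG n hnA i hi]
    refine ⟨⟨fun j hj => hnA.2 i j hi (by rwa [h3] at hj), by rwa [mem_preimage, h3]⟩, h2, h3, ?_⟩
    rintro m ⟨hm, -⟩ hmS rfl
    exact h4 m (hm i hi) hmS rfl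

/-- Semiglobal patching of locally unique continuous families of solutions:
given a continuous solution family `γ₀` along a closed set `N₀` in a metric space,
and for each `n ∈ N₀` a local continuous family of solutions, unique in an open set,
there are open neighborhoods `U ⊇ γ₀(N₀)` and `V ⊇ N₀` and a continuous `γ : V → U`
giving for each `n ∈ V` the unique solution in `U` over `n`. -/
theorem semiglobal_solution_family
    {M N : Type*} [TopologicalSpace M] [MetricSpace N]
    (g : M → N) (hg : Continuous g)
    (S : Set M) (N₀ : Set N) (hN₀ : IsClosed N₀)
    (γ₀ : N → M) (hγ₀cont : ContinuousOn γ₀ N₀)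
    (hγ₀ : ∀ n ∈ N₀, γ₀ n ∈ S ∧ g (γ₀ n) = n)
    (hloc : ∀ n ∈ N₀, ∃ Un : Set M, ∃ Vn : Set N,
      IsOpen Un ∧ IsOpen Vn ∧ γ₀ n ∈ Un ∧ n ∈ Vn ∧
      ∃ γn : N → M, ContinuousOn γn Vn ∧
        ∀ n' ∈ Vn, γn n' ∈ Un ∧ γn n' ∈ S ∧ g (γn n') = n' ∧
          ∀ m ∈ Un, m ∈ S → g m = n' → m = γn n') :
    ∃ U : Set M, ∃ V : Set N,
      IsOpen U ∧ IsOpen V ∧ γ₀ '' N₀ ⊆ U ∧ N₀ ⊆ V ∧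
      ∃ γ : N → M, ContinuousOn γ V ∧
        ∀ n ∈ V, γ n ∈ U ∧ γ n ∈ S ∧ g (γ n) = n ∧
          ∀ m ∈ U, m ∈ S → g m = n → m = γ n := by
  -- Shrink `Vn` to a neighbourhood `O` whose closure stays in `Vn` and over which `γ₀` stays in `Un`.
  have key : ∀ n : N₀, ∃ Un : Set M, ∃ Vn O : Set N, ∃ γn : N → M,
      IsOpen Un ∧ IsOpen Vn ∧ ContinuousOn γn Vn ∧
      (∀ n' ∈ Vn, γn n' ∈ Un ∧ γn n' ∈ S ∧ g (γn n') = n' ∧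
          ∀ m ∈ Un, m ∈ S → g m = n' → m = γn n') ∧
      IsOpen O ∧ (n : N) ∈ O ∧ closure O ⊆ Vn ∧ ∀ n' ∈ N₀, n' ∈ closure O → γ₀ n' ∈ Un := by
    rintro ⟨n, hn⟩
    obtain ⟨Un, Vn, hUn, hVn, hnU, hnV, γn, hc, hs⟩ := hloc n hn
    have h1 : ∀ᶠ y in 𝓝 n, y ∈ N₀ → γ₀ y ∈ Un :=
      eventually_nhdsWithin_iff.1 ((hγ₀cont n hn).eventually_mem (hUn.mem_nhds hnU))
    obtain ⟨t, ht, htc, hsub⟩ :=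
      exists_mem_nhds_isClosed_subset (inter_mem (hVn.mem_nhds hnV) h1)
    have hcl : closure (interior t) ⊆ t := closure_minimal interior_subset htc
    exact ⟨Un, Vn, interior t, γn, hUn, hVn, hc, hs, isOpen_interior,
      mem_interior_iff_mem_nhds.2 ht, fun y hy => (hsub (hcl hy)).1,
      fun y hy hy' => (hsub (hcl hy')).2 hy⟩
  choose Ui Vi O γ hU hV hγ hsol hO hnO hOV hOU using key
  obtain ⟨W, hWo, hWcov, hWlf, hWO⟩ := precise_refinement_set hN₀ O hO
    fun n hn => mem_iUnion.2 ⟨⟨n, hn⟩, hnO ⟨n, hn⟩⟩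
  refine glue_of_locallyFinite hg hγ₀ hU hV hγ hsol (C := fun i => closure (W i))
    (fun i => isClosed_closure) (fun i => (closure_mono (hWO i)).trans (hOV i)) hWlf.closure
    (fun n hn => ?_) (fun i n hn hni => hOU i n hn (closure_mono (hWO i) hni))
  obtain ⟨i, hi⟩ := mem_iUnion.1 (hWcov hn)
  exact ⟨i, mem_of_superset ((hWo i).mem_nhds hi) subset_closure⟩
end

section
/- Let E and F be Banach spaces, U ⊆ E × ℝ open, (x₀, 0) ∈ U, r ≥ 1 an integer, and let f₁, f₂ : U → F be C^r maps with f₁(x, 0) = f₂(x, 0) for all (x, 0) ∈ U. Then the following are equivalent: (i) there exists a function δf, defined on a neighborhood of (x₀, 0) and continuous at (x₀, 0), such that f₂(x, t) − f₁(x, t) = t^r · δf(x, t) near (x₀, 0); (ii) for every k with 1 ≤ k ≤ r − 1 and every x in some neighborhood of x₀, the partial derivatives satisfy ∂^k f₂/∂t^k (x, 0) = ∂^k f₁/∂t^k (x, 0). Moreover, in that case every such δf satisfies δf(x₀, 0) = (1/r!) · ∂^r/∂t^r (f₂ − f₁)(x₀, 0). -/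
open scoped Topology

/-!
Put `g = f₂ - f₁`, a `C^r` map near `(x₀, 0)` vanishing on the slice `t = 0`. Everything follows
from a Taylor estimate with remainder that is uniform in the parameter `x`
(`isLittleO_of_slice_derivs_eq_zero`): if the `t`-derivatives of `G` of order `< n` vanish at
`(x, 0)` for all `x` near `x₀`, and the `n`-th one vanishes at `(x₀, 0)`, then
`G (x, t) = o(t ^ n)` as `(x, t) → (x₀, 0)`. It holds because `∂ₜⁿ G` is jointly continuous, hence
small near `(x₀, 0)`, and integrating `n` times in `t` turns this smallness into a factor `|t| ^ n`.

If the Taylor coefficients match, the estimate applied to `g (x, t) - t ^ r • c` with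
`c = (r!)⁻¹ ∂ₜʳ g (x₀, 0)` shows that the quotient `t ^ (-r) • g (x, t)`, extended by the constant
`c` to `t = 0`, is continuous at `(x₀, 0)`.

Conversely, a function of one variable that is `o(t ^ n)` has vanishing derivatives up to order `n`
at `0` (`iteratedDeriv_eq_zero_of_isLittleO`). A witness `δf` is bounded near `(x₀, 0)`, so every
nearby slice of `g` is `O(t ^ r) = o(t ^ (r - 1))`; and the slice of `g` through `x₀` minus
`t ^ r • δf (x₀, 0)` is `o(t ^ r)`, which identifies the residual.
-/

open Filter Asymptotics Metric

lemma ContDiffOn.slice {E F : Type*} [NormedAddCommGroup E] [NormedSpace ℝ E]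
    [NormedAddCommGroup F] [NormedSpace ℝ F] {n : WithTop ℕ∞} {U : Set (E × ℝ)} {G : E × ℝ → F}
    (hG : ContDiffOn ℝ n G U) (hU : IsOpen U) {x : E} {t : ℝ} (h : (x, t) ∈ U) :
    ContDiffAt ℝ n (fun s => G (x, s)) t :=
  (hG.contDiffAt (hU.mem_nhds h)).comp (f := fun s : ℝ => (x, s)) t
    (contDiff_const.prodMk contDiff_id).contDiffAt

lemma iteratedDeriv_pow_smul_const_zero {F : Type*} [NormedAddCommGroup F] [NormedSpace ℝ F]
    (k n : ℕ) (c : F) :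
    iteratedDeriv k (fun t : ℝ => t ^ n • c) 0 = if k = n then (n.factorial : ℝ) • c else 0 := by
  have h : ContDiffAt ℝ k (fun t : ℝ => t ^ n) 0 := by fun_prop
  rw [iteratedDeriv_smul_const h c, iteratedDeriv_fun_pow_zero]
  split_ifs <;> simp

/-- Joint continuity of the partial derivative `∂ₜⁿ G`. -/
lemma continuousOn_iteratedDeriv_slice {E F : Type*} [NormedAddCommGroup E] [NormedSpace ℝ E]
    [NormedAddCommGroup F] [NormedSpace ℝ F] {U : Set (E × ℝ)} (hU : IsOpen U) (n : ℕ) :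
    ∀ G : E × ℝ → F, ContDiffOn ℝ n G U →
      ContinuousOn (fun p : E × ℝ => iteratedDeriv n (fun t => G (p.1, t)) p.2) U := by
  induction n with
  | zero => intro G hG; simpa using hG.continuousOn
  | succ n ih =>
    intro G hG
    -- The slices of `∂ₜ G = (x, t) ↦ DG (x, t) (0, 1)` are the derivatives of the slices of `G`.
    have h1 : ContDiffOn ℝ n (fun p => fderiv ℝ G p ((0 : E), (1 : ℝ))) U :=
      (hG.fderiv_of_isOpen hU (by simp)).clm_apply contDiffOn_const
    refine (ih _ h1).congr fun p hp => ?_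
    simp only [iteratedDeriv_succ']
    refine Filter.EventuallyEq.iteratedDeriv_eq n ?_
    have hc : ContinuousAt (fun t : ℝ => (p.1, t)) p.2 := by fun_prop
    filter_upwards [hc.preimage_mem_nhds (hU.mem_nhds hp)] with t ht
    have hd : DifferentiableAt ℝ G (p.1, t) :=
      (hG.contDiffAt (hU.mem_nhds ht)).differentiableAt (by simp)
    have hl : HasDerivAt (fun s : ℝ => (p.1, s)) ((0 : E), (1 : ℝ)) t :=
      (hasDerivAt_const t p.1).prodMk (hasDerivAt_id t)
    exact (hd.hasFDerivAt.comp_hasDerivAt t hl).deriv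

/-- The Taylor bound, with the sharp factor `1 / n!` dropped. -/
lemma norm_le_of_iteratedDeriv_bound {F : Type*} [NormedAddCommGroup F] [NormedSpace ℝ F]
    {ε M : ℝ} (n : ℕ) :
    ∀ h : ℝ → F, ContDiffOn ℝ n h (ball 0 ε) → (∀ k < n, iteratedDeriv k h 0 = 0) →
      (∀ s ∈ ball (0 : ℝ) ε, ‖iteratedDeriv n h s‖ ≤ M) →
      ∀ t ∈ ball (0 : ℝ) ε, ‖h t‖ ≤ M * |t| ^ n := by
  induction n with
  | zero => intro h _ _ hM t ht; simpa using hM t ht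
  | succ n ih =>
    intro h hh hz hM t ht
    have hs := (contDiffOn_succ_iff_deriv_of_isOpen (n := n) isOpen_ball).1 hh
    have ihd := ih (deriv h) hs.2.2
      (fun k hk => by simpa [iteratedDeriv_succ'] using hz (k + 1) (by omega))
      (fun s hs => by simpa [iteratedDeriv_succ'] using hM s hs)
    have hM0 : 0 ≤ M := (norm_nonneg _).trans (hM t ht)
    have ht' : |t| < ε := by simpa using ht
    have hsub : closedBall (0 : ℝ) |t| ⊆ ball 0 ε := closedBall_subset_ball ht'
    have key := Convex.norm_image_sub_le_of_norm_deriv_le (𝕜 := ℝ) (f := h) (C := M * |t| ^ n)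
      (s := closedBall (0 : ℝ) |t|) (x := 0) (y := t)
      (fun y hy => (hs.1 y (hsub hy)).differentiableAt (isOpen_ball.mem_nhds (hsub hy)))
      (fun y hy => (ihd y (hsub hy)).trans (by
        have : |y| ≤ |t| := by simpa using hy
        gcongr))
      (convex_closedBall _ _) (by simp) (by simp)
    have h0 : h 0 = 0 := by simpa using hz 0 (by omega)
    simpa [h0, pow_succ, mul_assoc] using key

/-- Taylor's theorem with Peano remainder, uniformly in the parameter `x` near `x₀`. -/
lemma isLittleO_of_slice_derivs_eq_zero {E F : Type*} [NormedAddCommGroup E] [NormedSpace ℝ E]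
    [NormedAddCommGroup F] [NormedSpace ℝ F] {U : Set (E × ℝ)} (hU : IsOpen U) {n : ℕ}
    {G : E × ℝ → F} (hG : ContDiffOn ℝ n G U) {x₀ : E} (hx₀ : (x₀, (0 : ℝ)) ∈ U)
    (hlow : ∀ᶠ x in 𝓝 x₀, ∀ k < n, iteratedDeriv k (fun t => G (x, t)) 0 = 0)
    (htop : iteratedDeriv n (fun t => G (x₀, t)) 0 = 0) :
    G =o[𝓝 (x₀, 0)] fun p => p.2 ^ n := by
  rw [isLittleO_iff]
  intro c hc
  have hcont := (continuousOn_iteratedDeriv_slice hU n G hG).continuousAt (hU.mem_nhds hx₀)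
  have hsmall : ∀ᶠ p : E × ℝ in 𝓝 (x₀, 0), ‖iteratedDeriv n (fun t => G (p.1, t)) p.2‖ < c := by
    refine hcont.norm.eventually_lt continuousAt_const ?_
    simpa [htop] using hc
  obtain ⟨ε, hε, hball⟩ := Metric.eventually_nhds_iff_ball.1
    (hsmall.and (hU.mem_nhds hx₀))
  have hprod : ∀ x ∈ ball x₀ ε, ∀ s ∈ ball (0 : ℝ) ε, (x, s) ∈ ball (x₀, (0 : ℝ)) ε := by
    intro x hx s hs
    rw [← ball_prod_same]
    exact ⟨hx, hs⟩
  filter_upwards [ball_mem_nhds (x₀, (0 : ℝ)) hε,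
    continuousAt_fst.eventually hlow] with p hp hpl
  rw [← ball_prod_same] at hp
  have := norm_le_of_iteratedDeriv_bound (M := c) n (fun t => G (p.1, t))
    (fun s hs => (hG.slice hU (hball _ (hprod _ hp.1 s hs)).2).contDiffWithinAt) hpl
    (fun s hs => (hball _ (hprod _ hp.1 s hs)).1.le) p.2 hp.2
  simpa using this

lemma iteratedDeriv_eq_zero_of_isLittleO {F : Type*} [NormedAddCommGroup F] [NormedSpace ℝ F]
    {n : ℕ} {h : ℝ → F} (hh : ContDiffAt ℝ n h 0) (ho : h =o[𝓝 0] fun t : ℝ => t ^ n) :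
    ∀ k ≤ n, iteratedDeriv k h 0 = 0 := by
  intro k
  induction k using Nat.strong_induction_on with
  | _ k ih =>
  intro hk
  -- `c` is the `k`-th Taylor coefficient: `h - t ^ k • c = o(t ^ k)` and `h = o(t ^ k)`.
  set c : F := (k.factorial : ℝ)⁻¹ • iteratedDeriv k h 0 with hc
  have hfac : (k.factorial : ℝ) ≠ 0 := by positivity
  have hhk : ContDiffAt ℝ k h 0 := hh.of_le (by exact_mod_cast hk)
  obtain ⟨u, hu, hhu⟩ := hhk.contDiffOn le_rfl (by simp)
  obtain ⟨V, hVu, hV, h0V⟩ := _root_.mem_nhds_iff.1 (by simpa using hu : u ∈ 𝓝 (0 : ℝ))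
  have hq : ∀ j ≤ k, iteratedDeriv j (fun t => h t - t ^ k • c) 0 = 0 := by
    intro j hj
    rw [iteratedDeriv_fun_sub (hhk.of_le (by exact_mod_cast hj)) (by fun_prop),
      iteratedDeriv_pow_smul_const_zero]
    rcases hj.eq_or_lt with rfl | hj
    · simp [hc, smul_smul, hfac]
    · simp [hj.ne, ih j hj (by omega)]
  -- The one-variable case of the estimate is that of a function independent of the parameter.
  have hG := isLittleO_of_slice_derivs_eq_zero (E := ℝ) (U := Prod.snd ⁻¹' V)
    (hV.preimage continuous_snd) (n := k) (G := fun p : ℝ × ℝ => h p.2 - p.2 ^ k • c) (x₀ := 0)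
    (((hhu.mono hVu).comp contDiff_snd.contDiffOn (fun _ hp => hp)).sub
      (by fun_prop)) h0V
    (Eventually.of_forall fun _ j hj => hq j hj.le) (hq k le_rfl)
  have hq' : (fun t => h t - t ^ k • c) =o[𝓝 0] fun t : ℝ => t ^ k :=
    hG.comp_tendsto (k := fun t : ℝ => ((0 : ℝ), t)) (Continuous.tendsto' (by fun_prop) _ _ rfl)
  have hok : h =o[𝓝 0] fun t : ℝ => t ^ k := by
    refine ho.trans_isBigO (IsBigO.of_bound 1 ?_)
    filter_upwards [ball_mem_nhds (0 : ℝ) one_pos] with t ht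
    have ht' : |t| ≤ 1 := by simpa using (mem_ball.1 ht).le
    simpa using pow_le_pow_of_le_one (abs_nonneg t) ht' hk
  have hcc : (fun t : ℝ => t ^ k • c) =o[𝓝 0] fun t : ℝ => t ^ k := by
    simpa using hok.sub hq'
  suffices hc0 : c = 0 by
    rw [hc, smul_eq_zero] at hc0
    exact hc0.resolve_left (inv_ne_zero hfac)
  by_contra hne
  have hpos : 0 < ‖c‖ := norm_pos_iff.2 hne
  have hev := (isLittleO_iff.1 hcc) (half_pos hpos)
  obtain ⟨t, ht, ht0⟩ := ((hev.filter_mono nhdsWithin_le_nhds).and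
    (self_mem_nhdsWithin : {0}ᶜ ∈ 𝓝[≠] (0 : ℝ))).exists
  have hp : 0 < |t| ^ k := pow_pos (abs_pos.2 ht0) k
  rw [norm_smul, norm_pow, Real.norm_eq_abs] at ht
  nlinarith

/-- Characterization of `r`-th order contact in terms of Taylor expansions in `t`:
for `C^r` maps `f₁, f₂` on an open subset of `E × ℝ` agreeing on the slice `t = 0`,
`f₂ = f₁ + O(t^r)` at `(x₀, 0)` iff the `t`-partial derivatives of order `1 ≤ k ≤ r - 1`
of `f₁` and `f₂` agree at `(x, 0)` for all `x` near `x₀`; and every residual witness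
`δf` satisfies `δf (x₀, 0) = (1/r!) ∂ᵣ/∂tᵣ (f₂ - f₁)(x₀, 0)`. -/
theorem contact_iff_taylor_match
    {E F : Type*}
    [NormedAddCommGroup E] [NormedSpace ℝ E] [CompleteSpace E]
    [NormedAddCommGroup F] [NormedSpace ℝ F] [CompleteSpace F]
    (U : Set (E × ℝ)) (hU : IsOpen U) (x₀ : E) (hx₀ : (x₀, (0 : ℝ)) ∈ U)
    (r : ℕ) (hr : 1 ≤ r)
    (f₁ f₂ : E × ℝ → F)
    (hf₁ : ContDiffOn ℝ r f₁ U) (hf₂ : ContDiffOn ℝ r f₂ U)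
    (hslice : ∀ x : E, (x, (0 : ℝ)) ∈ U → f₁ (x, 0) = f₂ (x, 0)) :
    ((∃ δf : E × ℝ → F, ContinuousAt δf (x₀, 0) ∧
        ∀ᶠ p in 𝓝 (x₀, (0 : ℝ)), f₂ p - f₁ p = p.2 ^ r • δf p) ↔
      (∀ᶠ x in 𝓝 x₀, ∀ k : ℕ, 1 ≤ k → k ≤ r - 1 →
        iteratedDeriv k (fun t => f₂ (x, t)) 0 =
          iteratedDeriv k (fun t => f₁ (x, t)) 0)) ∧
    (∀ δf : E × ℝ → F, ContinuousAt δf (x₀, 0) →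
      (∀ᶠ p in 𝓝 (x₀, (0 : ℝ)), f₂ p - f₁ p = p.2 ^ r • δf p) →
      δf (x₀, 0) = (r.factorial : ℝ)⁻¹ •
        iteratedDeriv r (fun t => f₂ (x₀, t) - f₁ (x₀, t)) 0) := by
  have hg : ContDiffOn ℝ r (fun p => f₂ p - f₁ p) U := hf₂.sub hf₁
  have hUx : ∀ᶠ x in 𝓝 x₀, (x, (0 : ℝ)) ∈ U :=
    (Continuous.tendsto' (by fun_prop : Continuous fun x : E => (x, (0 : ℝ))) x₀ _ rfl).eventually
      (hU.mem_nhds hx₀)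
  have hsub : ∀ x, (x, (0 : ℝ)) ∈ U → ∀ k ≤ r,
      iteratedDeriv k (fun t => f₂ (x, t) - f₁ (x, t)) 0 =
        iteratedDeriv k (fun t => f₂ (x, t)) 0 - iteratedDeriv k (fun t => f₁ (x, t)) 0 := by
    intro x hx k hk
    have hk' : (k : WithTop ℕ∞) ≤ r := by exact_mod_cast hk
    exact iteratedDeriv_fun_sub ((hf₂.slice hU hx).of_le hk') ((hf₁.slice hU hx).of_le hk')
  have hslice_tendsto : ∀ x : E, Tendsto (fun t : ℝ => (x, t)) (𝓝 0) (𝓝 (x, 0)) := fun x =>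
    Continuous.tendsto' (by fun_prop) _ _ rfl
  refine ⟨⟨?_, ?_⟩, ?_⟩
  · rintro ⟨δf, hδ, heq⟩
    have hbd : ∀ᶠ p in 𝓝 (x₀, (0 : ℝ)), ‖δf p‖ < ‖δf (x₀, 0)‖ + 1 :=
      hδ.norm.eventually_lt continuousAt_const (by simp)
    have hx := (heq.and hbd).eventually_nhds
    have hx' := (Continuous.tendsto' (by fun_prop : Continuous fun x : E => (x, (0 : ℝ))) x₀ _
      rfl).eventually hx
    filter_upwards [hUx, hx'] with x hxU hxe k hk1 hkr
    have hO : (fun t => f₂ (x, t) - f₁ (x, t)) =O[𝓝 0] fun t : ℝ => t ^ r := by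
      refine IsBigO.of_bound (‖δf (x₀, 0)‖ + 1) ?_
      filter_upwards [(hslice_tendsto x).eventually hxe] with t ht
      rw [ht.1, norm_smul, mul_comm]
      gcongr
      exact ht.2.le
    have ho := hO.trans_isLittleO (isLittleO_pow_pow (𝕜 := ℝ) (show r - 1 < r by omega))
    have := iteratedDeriv_eq_zero_of_isLittleO
      ((hg.slice hU hxU).of_le (by exact_mod_cast Nat.sub_le r 1)) ho k hkr
    rw [hsub x hxU k (by omega)] at this
    exact sub_eq_zero.1 this
  · intro hmatch
    set c : F := (r.factorial : ℝ)⁻¹ • iteratedDeriv r (fun t => f₂ (x₀, t) - f₁ (x₀, t)) 0 with hc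
    have hfac : (r.factorial : ℝ) ≠ 0 := by positivity
    have hG := isLittleO_of_slice_derivs_eq_zero hU (n := r)
      (G := fun p : E × ℝ => (f₂ p - f₁ p) - p.2 ^ r • c) (hg.sub (by fun_prop)) hx₀
      (by
        filter_upwards [hUx, hmatch] with x hxU hxm k hk
        rw [iteratedDeriv_fun_sub ((hg.slice hU hxU).of_le (by exact_mod_cast hk.le))
          (by fun_prop), iteratedDeriv_pow_smul_const_zero, if_neg hk.ne, sub_zero,
          hsub x hxU k hk.le, sub_eq_zero]
        rcases Nat.eq_zero_or_pos k with rfl | hk0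
        · simpa using (hslice x hxU).symm
        · exact hxm k hk0 (by omega))
      (by
        rw [iteratedDeriv_fun_sub (hg.slice hU hx₀) (by fun_prop),
          iteratedDeriv_pow_smul_const_zero]
        simp [hc, smul_smul, hfac])
    refine ⟨fun p => if p.2 = 0 then c else (p.2 ^ r)⁻¹ • (f₂ p - f₁ p), ?_, ?_⟩
    · rw [Metric.continuousAt_iff']
      intro ε hε
      filter_upwards [(isLittleO_iff.1 hG) (half_pos hε)] with p hp
      by_cases h0 : p.2 = 0
      · simpa [h0] using hε
      · have hpr : p.2 ^ r ≠ 0 := pow_ne_zero _ h0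
        have hfactor : (f₂ p - f₁ p) - p.2 ^ r • c =
            p.2 ^ r • ((p.2 ^ r)⁻¹ • (f₂ p - f₁ p) - c) := by
          rw [smul_sub, smul_inv_smul₀ hpr]
        rw [hfactor, norm_smul, mul_comm] at hp
        have := le_of_mul_le_mul_right hp (norm_pos_iff.2 hpr)
        simp only [h0, if_false, if_true, dist_eq_norm]
        linarith
    · filter_upwards [hU.mem_nhds hx₀] with p hpU
      by_cases h0 : p.2 = 0
      · obtain ⟨x, t⟩ := p
        obtain rfl : t = 0 := h0
        simp [hslice x hpU, zero_pow (by omega : r ≠ 0)]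
      · simp [h0, smul_smul]
  · intro δf hδ heq
    set d : F := δf (x₀, 0) with hd
    have hfac : (r.factorial : ℝ) ≠ 0 := by positivity
    have ho : (fun t => (f₂ (x₀, t) - f₁ (x₀, t)) - t ^ r • d) =o[𝓝 0] fun t : ℝ => t ^ r := by
      rw [isLittleO_iff]
      intro ε hε
      filter_upwards [(hslice_tendsto x₀).eventually heq,
        (hslice_tendsto x₀).eventually (Metric.continuousAt_iff'.1 hδ ε hε)] with t ht ht'
      rw [ht, ← smul_sub, norm_smul, mul_comm]
      rw [dist_eq_norm] at ht'
      gcongr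
    have := iteratedDeriv_eq_zero_of_isLittleO ((hg.slice hU hx₀).sub (by fun_prop)) ho r le_rfl
    rw [iteratedDeriv_fun_sub (hg.slice hU hx₀) (by fun_prop),
      iteratedDeriv_pow_smul_const_zero, if_pos rfl, sub_eq_zero] at this
    rw [this, smul_smul, inv_mul_cancel₀ hfac, one_smul]
end

section
/- Let E and F be Banach spaces, U ⊆ E × ℝ open, and let f : U → F be a C^k map, k ≥ 1, such that f(x, 0) = 0 whenever (x, 0) ∈ U. Then the function f̂ : U → F defined by f̂(x, t) = f(x, t)/t for t ≠ 0 and f̂(x, 0) = (∂f/∂t)(x, 0) is C^(k−1). -/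
/-!
The question is local. Away from `t = 0` the quotient `t⁻¹ • f` is as smooth as `f`. Near a point
`(x₀, 0)` of `U` take a ball inside `U`; it is stable under `(x, t) ↦ (x, s t)` for `s ∈ [0, 1]`,
so the fundamental theorem of calculus and `f (x, 0) = 0` give Hadamard's formula
`f̂ (x, t) = ∫ s in 0..1, ∂f/∂t (x, s t)`, valid at `t = 0` as well. The integrand is `C^(k-1)`
in `(x, t)`, and a parametric integral over a compact interval inherits this regularity.

The last fact (`hasFTaylorSeriesUpToOn_integral`) is proved for all orders at once by integrating
the whole Taylor series termwise, rather than by induction on the order; an induction would replace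
the target `F` by a space of linear maps, in a different universe. The integrands
`∂f/∂t ∘ (x, t) ↦ (x, s t)` have Taylor series depending continuously on `s`, because precomposition
with a linear map acts explicitly on Taylor series.
-/

open Set Filter Topology MeasureTheory

namespace DivByTime

section ParametricIntegral

lemma continuous_slice {H G : Type*} [TopologicalSpace H] [TopologicalSpace G]
    {φ : H → ℝ → G} {V : Set H}
    (hφ : ContinuousOn (fun z : H × ℝ => φ z.1 z.2) (V ×ˢ univ)) {x : H} (hx : x ∈ V) :
    Continuous (φ x) := by
  have : ContinuousOn (fun s : ℝ => φ x s) univ :=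
    hφ.comp (f := fun s : ℝ => (x, s)) (by fun_prop) (fun s _ => ⟨hx, mem_univ _⟩)
  exact continuousOn_univ.1 this

/-- The domination hypothesis for parametric integrals, from compactness of `[0, 1]`. -/
lemma exists_bound {H G : Type*} [TopologicalSpace H] [NormedAddCommGroup G]
    {φ : H → ℝ → G} {V : Set H} (hV : IsOpen V)
    (hφ : ContinuousOn (fun z : H × ℝ => φ z.1 z.2) (V ×ˢ univ)) {x : H} (hx : x ∈ V) :
    ∃ C : ℝ, ∀ᶠ y in 𝓝 x, ∀ s ∈ Icc (0 : ℝ) 1, ‖φ y s‖ ≤ C := by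
  obtain ⟨C, hC⟩ := isCompact_Icc.exists_bound_of_continuousOn
    (continuous_slice hφ hx).continuousOn (s := Icc (0 : ℝ) 1)
  refine ⟨C + 1, isCompact_Icc.eventually_forall_of_forall_eventually fun s hs => ?_⟩
  have hc : ContinuousAt (fun z : H × ℝ => φ z.1 z.2) (x, s) :=
    hφ.continuousAt ((hV.prod isOpen_univ).mem_nhds ⟨hx, mem_univ _⟩)
  have := hc.norm.eventually_lt (continuousAt_const (y := C + 1))
    (lt_of_le_of_lt (hC s hs) (lt_add_one C))
  exact this.mono fun z hz => hz.le

lemma continuousOn_integral {H G : Type*} [NormedAddCommGroup H] [NormedAddCommGroup G]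
    [NormedSpace ℝ G] {φ : H → ℝ → G} {V : Set H} (hV : IsOpen V)
    (hφ : ContinuousOn (fun z : H × ℝ => φ z.1 z.2) (V ×ˢ univ)) :
    ContinuousOn (fun x => ∫ s in (0 : ℝ)..1, φ x s) V := by
  intro x hx
  obtain ⟨C, hC⟩ := exists_bound hV hφ hx
  refine ContinuousAt.continuousWithinAt ?_
  refine intervalIntegral.continuousAt_of_dominated_interval (bound := fun _ => C) ?_ ?_ (by simp)
    ?_
  · filter_upwards [hV.mem_nhds hx] with y hy
    exact (continuous_slice hφ hy).aestronglyMeasurable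
  · filter_upwards [hC] with y hy
    refine ae_of_all _ fun s hs => hy s ?_
    rw [uIoc_of_le zero_le_one] at hs
    exact Ioc_subset_Icc_self hs
  · refine ae_of_all _ fun s _ => ?_
    have hc : ContinuousAt (fun z : H × ℝ => φ z.1 z.2) (x, s) :=
      hφ.continuousAt ((hV.prod isOpen_univ).mem_nhds ⟨hx, mem_univ _⟩)
    exact hc.comp (f := fun y : H => (y, s)) (by fun_prop)

variable {H G : Type*} [NormedAddCommGroup H] [NormedSpace ℝ H]
  [NormedAddCommGroup G] [NormedSpace ℝ G]

lemma hasFDerivAt_integral {φ : H → ℝ → G} {φ' : H → ℝ → H →L[ℝ] G}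
    {V : Set H} (hV : IsOpen V)
    (hφ : ContinuousOn (fun z : H × ℝ => φ z.1 z.2) (V ×ˢ univ))
    (hφ' : ContinuousOn (fun z : H × ℝ => φ' z.1 z.2) (V ×ˢ univ))
    (hd : ∀ s, ∀ x ∈ V, HasFDerivAt (fun y => φ y s) (φ' x s) x) {x : H} (hx : x ∈ V) :
    HasFDerivAt (fun x => ∫ s in (0 : ℝ)..1, φ x s) (∫ s in (0 : ℝ)..1, φ' x s) x := by
  obtain ⟨C, hC⟩ := exists_bound hV hφ' hx
  refine intervalIntegral.hasFDerivAt_integral_of_dominated_of_fderiv_le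
    (bound := fun _ => C) (inter_mem (hV.mem_nhds hx) hC) ?_
    ((continuous_slice hφ hx).intervalIntegrable _ _)
    (continuous_slice hφ' hx).aestronglyMeasurable ?_ (by simp) ?_
  · filter_upwards [hV.mem_nhds hx] with y hy
    exact (continuous_slice hφ hy).aestronglyMeasurable
  · refine ae_of_all _ fun s hs y hy => hy.2 s ?_
    rw [uIoc_of_le zero_le_one] at hs
    exact Ioc_subset_Icc_self hs
  · exact ae_of_all _ fun s _ y hy => hd s y hy.1

/-- Termwise integration of Taylor series depending continuously on a parameter. -/
lemma hasFTaylorSeriesUpToOn_integral [CompleteSpace G] {n : ℕ∞} {φ : ℝ → H → G}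
    {P : ℝ → H → FormalMultilinearSeries ℝ H G} {V : Set H} (hV : IsOpen V)
    (hP : ∀ s, HasFTaylorSeriesUpToOn n (φ s) (P s) V)
    (hc : ∀ m : ℕ, m ≤ (n : WithTop ℕ∞) →
      ContinuousOn (fun z : H × ℝ => P z.2 z.1 m) (V ×ˢ univ)) :
    HasFTaylorSeriesUpToOn n (fun x => ∫ s in (0 : ℝ)..1, φ s x)
      (fun x m => ∫ s in (0 : ℝ)..1, P s x m) V := by
  refine ⟨fun x hx => ?_, fun m hm x hx => ?_, fun m hm => ?_⟩
  · have h := (continuousMultilinearCurryFin0 ℝ H G).toLinearIsometry.intervalIntegral_comp_comm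
      (a := 0) (b := 1) (μ := volume) (fun s => P s x 0)
    refine h.symm.trans ?_
    exact intervalIntegral.integral_congr fun s _ => (hP s).zero_eq x hx
  · have hm' : ((m + 1 : ℕ) : WithTop ℕ∞) ≤ n := by
      have : ((m : ℕ∞) : WithTop ℕ∞) < n := hm
      have h2 : (m : ℕ∞) < n := by exact_mod_cast this
      have h3 : ((m + 1 : ℕ) : ℕ∞) ≤ n := by
        push_cast
        exact Order.add_one_le_of_lt h2
      exact_mod_cast h3
    let L : (H [×(m + 1)]→L[ℝ] G) →L[ℝ] (H →L[ℝ] (H [×m]→L[ℝ] G)) :=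
      (continuousMultilinearCurryLeftEquiv ℝ
        (fun _ : Fin (m + 1) => H) G).toContinuousLinearEquiv.toContinuousLinearMap
    have h := ContinuousLinearMap.intervalIntegral_comp_comm (𝕜 := ℝ)
      (E := H [×(m + 1)]→L[ℝ] G) (F := H →L[ℝ] (H [×m]→L[ℝ] G)) L
      ((continuous_slice (φ := fun y s => P s y (m + 1)) (hc (m + 1) hm') hx).intervalIntegrable
        (μ := volume) 0 1)
    have key := hasFDerivAt_integral (φ := fun y s => P s y m)
      (φ' := fun y s => L (P s y (m + 1))) hV (hc m hm.le)
      (L.continuous.comp_continuousOn (hc (m + 1) hm'))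
      (fun s y hy => ((hP s).fderivWithin m hm y hy).hasFDerivAt (hV.mem_nhds hy)) hx
    refine HasFDerivAt.hasFDerivWithinAt ?_
    exact key.congr_fderiv h
  · exact continuousOn_integral (φ := fun y s => P s y m) hV (hc m hm)

end ParametricIntegral

variable {E F : Type*} [NormedAddCommGroup E] [NormedSpace ℝ E]
  [NormedAddCommGroup F] [NormedSpace ℝ F]

/-- The retraction of `ℝ` onto `[0, 1]`. It makes the integrands below defined and continuous for
every real value of the integration variable. -/
noncomputable def clamp (s : ℝ) : ℝ := max 0 (min 1 s)

lemma continuous_clamp : Continuous clamp := by unfold clamp; fun_prop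

lemma abs_clamp_le (s : ℝ) : |clamp s| ≤ 1 := by
  unfold clamp
  rw [abs_of_nonneg (le_max_left _ _)]
  exact max_le zero_le_one (min_le_left _ _)

lemma clamp_of_mem {s : ℝ} (hs : s ∈ Icc (0 : ℝ) 1) : clamp s = s := by
  simp [clamp, hs.1, hs.2]

/-- The linear map `(x, t) ↦ (x, clamp s * t)`. -/
noncomputable def scale (E : Type*) [NormedAddCommGroup E] [NormedSpace ℝ E] (s : ℝ) :
    E × ℝ →L[ℝ] E × ℝ :=
  ContinuousLinearMap.inl ℝ E ℝ ∘L ContinuousLinearMap.fst ℝ E ℝ +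
    clamp s • (ContinuousLinearMap.inr ℝ E ℝ ∘L ContinuousLinearMap.snd ℝ E ℝ)

lemma scale_apply (s : ℝ) (p : E × ℝ) : scale E s p = (p.1, clamp s * p.2) := by
  simp [scale]

lemma continuous_scale : Continuous (scale E) := by
  unfold scale
  exact continuous_const.add (continuous_clamp.smul continuous_const)

lemma scale_mem_ball {x₀ : E} {r : ℝ} {p : E × ℝ} (hp : p ∈ Metric.ball (x₀, (0 : ℝ)) r) (s : ℝ) :
    scale E s p ∈ Metric.ball (x₀, (0 : ℝ)) r := by
  rw [scale_apply]
  rw [Metric.mem_ball, Prod.dist_eq, max_lt_iff] at hp ⊢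
  refine ⟨hp.1, lt_of_le_of_lt ?_ hp.2⟩
  simp only [dist_zero_right, Real.norm_eq_abs, abs_mul]
  exact mul_le_of_le_one_left (abs_nonneg _) (abs_clamp_le s)

lemma contDiffOn_integral_scale [CompleteSpace F] {x₀ : E} {r : ℝ} {n : ℕ} {g : E × ℝ → F}
    (hg : ContDiffOn ℝ n g (Metric.ball (x₀, 0) r)) :
    ContDiffOn ℝ n (fun p => ∫ s in (0 : ℝ)..1, g (scale E s p)) (Metric.ball (x₀, 0) r) := by
  set V := Metric.ball (x₀, (0 : ℝ)) r with hVdef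
  have hV : IsOpen V := Metric.isOpen_ball
  have hQ := hg.ftaylorSeriesWithin hV.uniqueDiffOn
  set Q := ftaylorSeriesWithin ℝ g V
  have hP : ∀ s, HasFTaylorSeriesUpToOn ((n : ℕ∞) : WithTop ℕ∞) (fun p => g (scale E s p))
      (fun p m => (Q (scale E s p) m).compContinuousLinearMap fun _ => scale E s) V := fun s =>
    (hQ.compContinuousLinearMap (scale E s)).mono fun p hp => scale_mem_ball hp s
  refine (hasFTaylorSeriesUpToOn_integral (n := (n : ℕ∞)) hV hP fun m hm => ?_).contDiffOn
  have h1 : ContinuousOn (fun z : (E × ℝ) × ℝ => Q (scale E z.2 z.1) m) (V ×ˢ univ) := by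
    refine (hQ.cont m hm).comp (f := fun z : (E × ℝ) × ℝ => scale E z.2 z.1) ?_ ?_
    · exact ((continuous_scale.comp continuous_snd).clm_apply continuous_fst).continuousOn
    · exact fun z hz => scale_mem_ball hz.1 _
  have h2 : Continuous (fun z : (E × ℝ) × ℝ =>
      ContinuousMultilinearMap.compContinuousLinearMapContinuousMultilinear ℝ
        (fun _ : Fin m => E × ℝ) (fun _ => E × ℝ) F (fun _ => scale E z.2)) :=
    (ContinuousMultilinearMap.cont _).comp
      (continuous_pi fun _ => continuous_scale.comp continuous_snd)
  exact h2.continuousOn.clm_apply h1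

/-- Hadamard's formula, including the value at `t = 0`. -/
lemma hadamard [CompleteSpace F] {x₀ : E} {r : ℝ} {f : E × ℝ → F}
    (hf : ContDiffOn ℝ 1 f (Metric.ball (x₀, 0) r))
    (hslice : ∀ x : E, (x, (0 : ℝ)) ∈ Metric.ball (x₀, (0 : ℝ)) r → f (x, 0) = 0)
    {p : E × ℝ} (hp : p ∈ Metric.ball (x₀, (0 : ℝ)) r) :
    (if p.2 = 0 then deriv (fun t => f (p.1, t)) 0 else p.2⁻¹ • f p) =
      ∫ s in (0 : ℝ)..1, fderiv ℝ f (scale E s p) (0, 1) := by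
  obtain ⟨x, t⟩ := p
  have hV : IsOpen (Metric.ball (x₀, (0 : ℝ)) r) := Metric.isOpen_ball
  have hfd : ∀ q ∈ Metric.ball (x₀, (0 : ℝ)) r, HasFDerivAt f (fderiv ℝ f q) q := fun q hq =>
    ((hf.differentiableOn (by simp)).differentiableAt (hV.mem_nhds hq)).hasFDerivAt
  have h0 : (x, (0 : ℝ)) ∈ Metric.ball (x₀, (0 : ℝ)) r := by
    have := scale_mem_ball hp 0
    simpa [scale_apply, clamp] using this
  by_cases ht : t = 0
  · subst ht
    have hpath : HasDerivAt (fun τ : ℝ => (x, τ)) ((0 : E), (1 : ℝ)) 0 :=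
      (hasDerivAt_const _ _).prodMk (hasDerivAt_id _)
    have := ((hfd _ h0).comp_hasDerivAt (0 : ℝ) hpath).deriv
    simpa [scale_apply, Function.comp_def] using this
  · have hcont : Continuous fun s : ℝ => fderiv ℝ f (scale E s (x, t)) (0, 1) := by
      have h1 : ContinuousOn (fderiv ℝ f) (Metric.ball (x₀, (0 : ℝ)) r) :=
        hf.continuousOn_fderiv_of_isOpen hV le_rfl
      have h2 : Continuous fun s : ℝ => fderiv ℝ f (scale E s (x, t)) :=
        h1.comp_continuous (continuous_scale.clm_apply continuous_const)
          fun s => scale_mem_ball hp s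
      exact h2.clm_apply continuous_const
    have hder : ∀ s ∈ uIcc (0 : ℝ) 1, HasDerivAt (fun s : ℝ => f (x, s * t))
        (t • fderiv ℝ f (scale E s (x, t)) (0, 1)) s := by
      intro s hs
      rw [uIcc_of_le zero_le_one] at hs
      have hmem := scale_mem_ball hp s
      simp only [scale_apply, clamp_of_mem hs] at hmem ⊢
      have hpath : HasDerivAt (fun τ : ℝ => (x, τ * t)) ((0 : E), 1 * t) s :=
        (hasDerivAt_const _ _).prodMk ((hasDerivAt_id s).mul_const t)
      have := (hfd _ hmem).comp_hasDerivAt s hpath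
      rw [← map_smul]
      simpa [Function.comp_def] using this
    have hftc := intervalIntegral.integral_eq_sub_of_hasDerivAt hder
      ((hcont.const_smul t).intervalIntegrable _ _)
    rw [intervalIntegral.integral_smul] at hftc
    simp only [one_mul, zero_mul, hslice x h0, sub_zero] at hftc
    rw [if_neg ht, ← hftc, smul_smul, inv_mul_cancel₀ ht, one_smul]

end DivByTime

open DivByTime

/-- Division by the time function: if `f` is `C^k` on an open subset of `E × ℝ` and
vanishes on the slice `t = 0`, then the map `f̂` defined by `f̂(x, t) = f(x, t) / t`
for `t ≠ 0` and `f̂(x, 0) = ∂f/∂t (x, 0)` is `C^(k-1)`. -/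
theorem div_by_time_function
    {E F : Type*}
    [NormedAddCommGroup E] [NormedSpace ℝ E] [CompleteSpace E]
    [NormedAddCommGroup F] [NormedSpace ℝ F] [CompleteSpace F]
    (U : Set (E × ℝ)) (hU : IsOpen U) (k : ℕ) (hk : 1 ≤ k)
    (f : E × ℝ → F) (hf : ContDiffOn ℝ k f U)
    (hslice : ∀ x : E, (x, (0 : ℝ)) ∈ U → f (x, 0) = 0) :
    ContDiffOn ℝ (k - 1 : ℕ)
      (fun p : E × ℝ =>
        if p.2 = 0 then deriv (fun t => f (p.1, t)) 0 else p.2⁻¹ • f p) U := by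
  obtain ⟨n, rfl⟩ : ∃ n, k = n + 1 := ⟨k - 1, by omega⟩
  rw [Nat.add_sub_cancel]
  rintro ⟨x₀, t₀⟩ hp₀
  refine ContDiffAt.contDiffWithinAt ?_
  by_cases ht₀ : t₀ = 0
  · subst ht₀
    obtain ⟨r, hr, hball⟩ := Metric.isOpen_iff.1 hU _ hp₀
    have hfB := hf.mono hball
    have hg : ContDiffOn ℝ n (fun p => fderiv ℝ f p (0, 1)) (Metric.ball (x₀, (0 : ℝ)) r) :=
      (hfB.fderiv_of_isOpen Metric.isOpen_ball (by norm_cast)).clm_apply contDiffOn_const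
    have hI := (contDiffOn_integral_scale hg).contDiffAt (Metric.ball_mem_nhds _ hr)
    refine hI.congr_of_eventuallyEq ?_
    filter_upwards [Metric.ball_mem_nhds _ hr] with p hp
    exact hadamard (hfB.of_le (by norm_cast)) (fun x hx => hslice x (hball hx)) hp
  · have hfA : ContDiffAt ℝ n f (x₀, t₀) :=
      (hf.contDiffAt (hU.mem_nhds hp₀)).of_le (by exact_mod_cast n.le_succ)
    have hq : ContDiffAt ℝ n (fun p : E × ℝ => p.2⁻¹ • f p) (x₀, t₀) :=
      (contDiffAt_snd.inv ht₀).smul hfA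
    refine hq.congr_of_eventuallyEq ?_
    have hne : ∀ᶠ p : E × ℝ in 𝓝 (x₀, t₀), p.2 ≠ 0 :=
      continuousAt_snd.eventually_ne ht₀
    filter_upwards [hne] with p hp
    rw [if_neg hp]
end

section
/- Let E and F be Banach spaces, U ⊆ E open, h : U → ℝ a C^∞ function, and ψ : U → F a C^k map, k ≥ 1, such that ψ(m) = 0 for every m ∈ h⁻¹(0). Let m₀ ∈ h⁻¹(0) and suppose dh(m₀) ≠ 0. Then there exist an open neighborhood W of m₀ in U and a C^(k−1) map φ : W → F such that ψ(m) = h(m) · φ(m) for all m ∈ W. Moreover, for every m ∈ W ∩ h⁻¹(0) with dh(m) ≠ 0, φ(m) is the unique vector e ∈ F satisfying Dψ(m)(v) = (dh(m)(v)) · e for all v ∈ E. -/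
/-!
Write `ℓ = dh(m₀)` and pick `v` with `ℓ v = 1`. The map `Φ(x) = (x - m₀) + (h(x) - ℓ(x - m₀)) v`
has derivative `id` at `m₀`, hence is a local diffeomorphism there, and `ℓ ∘ Φ = h`: in the
coordinates given by `Φ` the function `h` becomes the linear form `ℓ`. The map `f = ψ ∘ Φ⁻¹`
vanishes on `ker ℓ`, and integrating its derivative along the segment from the projection
`y - ℓ(y) v ∈ ker ℓ` to `y` gives Hadamard's formula
`f(y) = ℓ(y) • ∫₀¹ Df(y - (1 - t) ℓ(y) v) v dt` (`hadamard_linear_form`).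
The integral is `C^(k-1)` in `y` by differentiation under the integral sign
(`contDiffOn_integral_unit`), and composing it with `Φ` gives the quotient `φ`.

On the zero set, the identity `Dψ(m) = dh(m) ⊗ φ(m)` only needs continuity of `φ`
(`hasFDerivAt_smul_of_eq_zero`), which matters when `k = 1`; uniqueness follows from `dh(m) ≠ 0`.
-/

open scoped ContDiff

namespace SmoothDivision

open Set Filter Topology MeasureTheory

universe u v

/-- A jointly continuous function is bounded on a tube around `{y₀} × [0, 1]`. -/
lemma exists_bound_tube {E : Type*} {G : Type*} [TopologicalSpace E]
    [NormedAddCommGroup G] {O : Set (E × ℝ)} (hO : IsOpen O) {f : E × ℝ → G}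
    (hf : ContinuousOn f O) {y₀ : E} (hy₀ : ∀ t ∈ Icc (0 : ℝ) 1, (y₀, t) ∈ O) :
    ∃ s ∈ 𝓝 y₀, ∃ C : ℝ, ∀ y ∈ s, ∀ t ∈ Icc (0 : ℝ) 1, (y, t) ∈ O ∧ ‖f (y, t)‖ ≤ C := by
  have hsub : ({y₀} : Set E) ×ˢ Icc (0 : ℝ) 1 ⊆ O := by
    rintro ⟨y, t⟩ ⟨rfl, ht⟩
    exact hy₀ t ht
  have hK : IsCompact (({y₀} : Set E) ×ˢ Icc (0 : ℝ) 1) := isCompact_singleton.prod isCompact_Icc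
  obtain ⟨C, hC⟩ := hK.exists_bound_of_continuousOn (hf.mono hsub)
  have hopen : IsOpen (O ∩ f ⁻¹' Metric.ball 0 (C + 1)) :=
    hf.isOpen_inter_preimage hO Metric.isOpen_ball
  obtain ⟨s, w, hs, -, hys, hw, hsw⟩ := generalized_tube_lemma isCompact_singleton isCompact_Icc
    hopen (fun p hp => ⟨hsub hp, by simpa using (hC p hp).trans_lt (lt_add_one C)⟩)
  refine ⟨s, hs.mem_nhds (hys rfl), C + 1, fun y hy t ht => ?_⟩
  have := hsw (mk_mem_prod hy (hw ht))
  exact ⟨this.1, by simpa using (mem_ball_zero_iff.1 this.2).le⟩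

lemma continuousOn_slice {E : Type*} {G : Type*} [TopologicalSpace E] [TopologicalSpace G]
    {O : Set (E × ℝ)} {f : E × ℝ → G} (hf : ContinuousOn f O) {y : E}
    (hy : ∀ t ∈ Icc (0 : ℝ) 1, (y, t) ∈ O) :
    ContinuousOn (fun t => f (y, t)) (Icc 0 1) :=
  hf.comp (by fun_prop) hy

lemma aestronglyMeasurable_slice {G : Type*} [NormedAddCommGroup G] {g : ℝ → G}
    (hg : ContinuousOn g (Icc 0 1)) :
    AEStronglyMeasurable g (volume.restrict (uIoc (0 : ℝ) 1)) := by
  rw [uIoc_of_le zero_le_one]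
  exact (hg.mono Ioc_subset_Icc_self).aestronglyMeasurable measurableSet_Ioc

lemma mem_Icc_of_uIoc {t : ℝ} (ht : t ∈ uIoc (0 : ℝ) 1) : t ∈ Icc (0 : ℝ) 1 := by
  rw [uIoc_of_le zero_le_one] at ht
  exact Ioc_subset_Icc_self ht

lemma continuousOn_integral_unit {E : Type*} {G : Type*}
    [NormedAddCommGroup E] [NormedAddCommGroup G] [NormedSpace ℝ G]
    {V : Set E} {O : Set (E × ℝ)} (hO : IsOpen O) (hVO : ∀ y ∈ V, ∀ t ∈ Icc (0 : ℝ) 1, (y, t) ∈ O)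
    {f : E × ℝ → G} (hf : ContinuousOn f O) :
    ContinuousOn (fun y => ∫ t in (0 : ℝ)..1, f (y, t)) V := by
  intro y₀ hy₀
  obtain ⟨s, hs, C, hC⟩ := exists_bound_tube hO hf (hVO y₀ hy₀)
  refine ContinuousAt.continuousWithinAt ?_
  refine intervalIntegral.continuousAt_of_dominated_interval (bound := fun _ => C) ?_ ?_
    intervalIntegrable_const ?_
  · filter_upwards [hs] with y hy
    exact aestronglyMeasurable_slice (continuousOn_slice hf fun t ht => (hC y hy t ht).1)
  · filter_upwards [hs] with y hy
    exact Eventually.of_forall fun t ht => (hC y hy t (mem_Icc_of_uIoc ht)).2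
  · refine Eventually.of_forall fun t ht => ?_
    have h1 : ContinuousAt f (y₀, t) :=
      hf.continuousAt (hO.mem_nhds (hVO y₀ hy₀ t (mem_Icc_of_uIoc ht)))
    exact h1.comp (f := fun y => (y, t)) (by fun_prop)

lemma hasFDerivAt_integral_unit {E : Type*} {G : Type*}
    [NormedAddCommGroup E] [NormedSpace ℝ E] [NormedAddCommGroup G] [NormedSpace ℝ G]
    {O : Set (E × ℝ)} (hO : IsOpen O) {y₀ : E} (hy₀ : ∀ t ∈ Icc (0 : ℝ) 1, (y₀, t) ∈ O)
    {f : E × ℝ → G} (hf : ContDiffOn ℝ 1 f O) :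
    HasFDerivAt (fun y => ∫ t in (0 : ℝ)..1, f (y, t))
      (∫ t in (0 : ℝ)..1, (fderiv ℝ f (y₀, t)).comp (ContinuousLinearMap.inl ℝ E ℝ)) y₀ := by
  have hf' : ContinuousOn
      (fun p => (fderiv ℝ f p).comp (ContinuousLinearMap.inl ℝ E ℝ)) O :=
    (hf.continuousOn_fderiv_of_isOpen hO le_rfl).clm_comp continuousOn_const
  obtain ⟨s, hs, C, hC⟩ := exists_bound_tube hO hf' hy₀
  refine intervalIntegral.hasFDerivAt_integral_of_dominated_of_fderiv_le (bound := fun _ => C)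
    (F := fun y t => f (y, t))
    (F' := fun y t => (fderiv ℝ f (y, t)).comp (ContinuousLinearMap.inl ℝ E ℝ))
    hs ?_ ?_ ?_ ?_ intervalIntegrable_const ?_
  · filter_upwards [hs] with y hy
    exact aestronglyMeasurable_slice
      (continuousOn_slice hf.continuousOn fun t ht => (hC y hy t ht).1)
  · apply ContinuousOn.intervalIntegrable_of_Icc zero_le_one
    exact continuousOn_slice hf.continuousOn hy₀
  · exact aestronglyMeasurable_slice (continuousOn_slice hf' hy₀)
  · exact Eventually.of_forall fun t ht y hy => (hC y hy t (mem_Icc_of_uIoc ht)).2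
  · refine Eventually.of_forall fun t ht y hy => ?_
    have h1 : HasFDerivAt f (fderiv ℝ f (y, t)) (y, t) :=
      ((hf.contDiffAt (hO.mem_nhds (hC y hy t (mem_Icc_of_uIoc ht)).1)).differentiableAt
        one_ne_zero).hasFDerivAt
    exact h1.comp (f := fun y => (y, t)) y (hasFDerivAt_prodMk_left y t)

/-- Version of `contDiffOn_integral_unit` with a universe constraint that makes `E →L[ℝ] G` live in
the same universe as `G`, so that the induction on the order of differentiability goes through. -/
lemma contDiffOn_integral_unit_aux {E : Type u} [NormedAddCommGroup E] [NormedSpace ℝ E]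
    {V : Set E} (hV : IsOpen V) {O : Set (E × ℝ)} (hO : IsOpen O)
    (hVO : ∀ y ∈ V, ∀ t ∈ Icc (0 : ℝ) 1, (y, t) ∈ O) (n : ℕ) :
    ∀ {G : Type (max u v)} [NormedAddCommGroup G] [NormedSpace ℝ G] {f : E × ℝ → G},
      ContDiffOn ℝ n f O → ContDiffOn ℝ n (fun y => ∫ t in (0 : ℝ)..1, f (y, t)) V := by
  induction n with
  | zero =>
    intro G _ _ f hf
    simp only [Nat.cast_zero, contDiffOn_zero] at hf ⊢
    exact continuousOn_integral_unit hO hVO hf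
  | succ n ih =>
    intro G _ _ f hf
    have hf1 : ContDiffOn ℝ 1 f O := hf.of_le (by exact_mod_cast Nat.le_add_left 1 n)
    have hder := fun y (hy : y ∈ V) => hasFDerivAt_integral_unit hO (hVO y hy) hf1
    push_cast at hf ⊢
    rw [contDiffOn_succ_iff_fderiv_of_isOpen hV]
    refine ⟨fun y hy => (hder y hy).differentiableAt.differentiableWithinAt, by simp, ?_⟩
    refine (ih (f := fun p => (fderiv ℝ f p).comp (ContinuousLinearMap.inl ℝ E ℝ)) ?_).congr
      fun y hy => (hder y hy).fderiv
    exact (hf.fderiv_of_isOpen hO le_rfl).clm_comp contDiffOn_const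

/-- Integration over `t ∈ [0, 1]` preserves `C^n` dependence on the parameter `y`. -/
lemma contDiffOn_integral_unit {E : Type u} [NormedAddCommGroup E] [NormedSpace ℝ E]
    {G : Type v} [NormedAddCommGroup G] [NormedSpace ℝ G]
    {V : Set E} (hV : IsOpen V) {O : Set (E × ℝ)} (hO : IsOpen O)
    (hVO : ∀ y ∈ V, ∀ t ∈ Icc (0 : ℝ) 1, (y, t) ∈ O) (n : ℕ) {f : E × ℝ → G}
    (hf : ContDiffOn ℝ n f O) :
    ContDiffOn ℝ n (fun y => ∫ t in (0 : ℝ)..1, f (y, t)) V := by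
  let e : ULift.{u} G ≃L[ℝ] G := ContinuousLinearEquiv.ulift
  have h1 := contDiffOn_integral_unit_aux.{u, v} hV hO hVO n
    (e.symm.contDiff.comp_contDiffOn hf)
  refine (e.contDiff.comp_contDiffOn h1).congr fun y _ => ?_
  simp only [Function.comp_apply, intervalIntegral, map_sub]
  rw [← e.integral_comp_comm, ← e.integral_comp_comm]
  simp

/-- Hadamard's lemma for a linear form: a `C^(n+1)` map vanishing on `ker ℓ` near `0` is, near `0`,
the product of `ℓ` and a `C^n` map. -/
lemma hadamard_linear_form {E F : Type*} [NormedAddCommGroup E] [NormedSpace ℝ E]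
    [NormedAddCommGroup F] [NormedSpace ℝ F] [CompleteSpace F]
    (ℓ : E →L[ℝ] ℝ) (v : E) (hv : ℓ v = 1) (n : ℕ) (f : E → F)
    (hf : ContDiffAt ℝ (n + 1 : ℕ) f 0) (hzero : ∀ᶠ y in 𝓝 0, ℓ y = 0 → f y = 0) :
    ∃ φ : E → F, ContDiffAt ℝ n φ 0 ∧ ∀ᶠ y in 𝓝 0, f y = ℓ y • φ y := by
  have hev := (hf.eventually (by simp)).and hzero
  obtain ⟨ε, hε, hB⟩ := Metric.eventually_nhds_iff_ball.1 hev
  set B : Set E := Metric.ball 0 ε with hBdef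
  have hfB : ContDiffOn ℝ (n + 1 : ℕ) f B := fun y hy => (hB y hy).1.contDiffWithinAt
  have hfB' : ContDiffOn ℝ n (fderiv ℝ f) B :=
    hfB.fderiv_of_isOpen Metric.isOpen_ball (by norm_cast)
  -- `a (y, t)` runs along the segment from the projection `y - ℓ y • v` to `y`
  let a : E × ℝ → E := fun p => p.1 - ((1 - p.2) * ℓ p.1) • v
  have ha : ContDiff ℝ n a := by fun_prop
  let V : Set E := B ∩ (fun y => y - ℓ y • v) ⁻¹' B
  have hV : IsOpen V :=
    Metric.isOpen_ball.inter (Metric.isOpen_ball.preimage (by fun_prop))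
  have hO : IsOpen (a ⁻¹' B) := Metric.isOpen_ball.preimage ha.continuous
  have hVO : ∀ y ∈ V, ∀ t ∈ Icc (0 : ℝ) 1, (y, t) ∈ a ⁻¹' B := by
    intro y hy t ht
    have := (convex_ball (0 : E) ε) hy.1 hy.2 ht.1 (sub_nonneg.2 ht.2) (by ring)
    have h2 : a (y, t) = t • y + (1 - t) • (y - ℓ y • v) := by
      simp only [a]; module
    rw [mem_preimage, h2]
    exact this
  have h0V : (0 : E) ∈ V := by simp [V, B, hε]
  refine ⟨fun y => ∫ t in (0 : ℝ)..1, fderiv ℝ f (a (y, t)) v, ?_, ?_⟩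
  · refine (contDiffOn_integral_unit hV hO hVO n
      (f := fun p => fderiv ℝ f (a p) v) ?_).contDiffAt (hV.mem_nhds h0V)
    exact (hfB'.comp ha.contDiffOn (fun p hp => hp)).clm_apply contDiffOn_const
  · filter_upwards [hV.mem_nhds h0V] with y hy
    have hderiv : ∀ t ∈ uIcc (0 : ℝ) 1,
        HasDerivAt (fun t => f (a (y, t))) (ℓ y • fderiv ℝ f (a (y, t)) v) t := by
      intro t ht
      rw [uIcc_of_le zero_le_one] at ht
      have h1 : HasFDerivAt f (fderiv ℝ f (a (y, t))) (a (y, t)) :=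
        ((hB _ (hVO y hy t ht)).1.differentiableAt (by simp)).hasFDerivAt
      have h2 : HasDerivAt (fun t => a (y, t)) (ℓ y • v) t := by
        have h3 : HasDerivAt (fun t : ℝ => (1 - t) * ℓ y) (-1 * ℓ y) t :=
          ((hasDerivAt_id t).const_sub 1).mul_const _
        have h4 := (h3.smul_const v).const_sub y
        convert h4 using 1
        module
      have := h1.comp_hasDerivAt t h2
      rwa [map_smul] at this
    have hcont : ContinuousOn (fun t => ℓ y • fderiv ℝ f (a (y, t)) v) (Icc (0 : ℝ) 1) := by
      refine continuousOn_const.smul (ContinuousOn.clm_apply ?_ continuousOn_const)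
      exact hfB'.continuousOn.comp (f := fun t => a (y, t))
        (ha.continuous.comp (by fun_prop)).continuousOn (hVO y hy)
    have hFTC := intervalIntegral.integral_eq_sub_of_hasDerivAt hderiv
      (hcont.intervalIntegrable_of_Icc zero_le_one)
    have hP : f (a (y, 0)) = 0 :=
      (hB _ (hVO y hy 0 (by simp))).2 (by simp [a, hv])
    rw [hP, intervalIntegral.integral_smul] at hFTC
    simpa [a] using hFTC.symm

/-- At a zero of `h`, the product `h • φ` is differentiable as soon as `φ` is continuous. -/
lemma hasFDerivAt_smul_of_eq_zero {E F : Type*} [NormedAddCommGroup E] [NormedSpace ℝ E]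
    [NormedAddCommGroup F] [NormedSpace ℝ F] {h : E → ℝ} {h' : E →L[ℝ] ℝ} {φ : E → F} {m : E}
    (hh : HasFDerivAt h h' m) (hm : h m = 0) (hφ : ContinuousAt φ m) :
    HasFDerivAt (fun x => h x • φ x) (h'.smulRight (φ m)) m := by
  have h1 : HasFDerivAt (fun x => h x • φ m) (h'.smulRight (φ m)) m := hh.smul_const (φ m)
  have hO : (fun x => h x) =O[𝓝 m] fun x => x - m := by simpa [hm] using hh.isBigO_sub
  have ho : (fun x => φ x - φ m) =o[𝓝 m] fun _ => (1 : ℝ) := by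
    rw [Asymptotics.isLittleO_one_iff]
    simpa using hφ.tendsto.sub_const (φ m)
  have h2 : (fun x => h x • (φ x - φ m)) =o[𝓝 m] fun x => x - m := by
    have := hO.norm_right.smul_isLittleO ho
    simp only [smul_eq_mul, mul_one] at this
    exact this.of_norm_right
  rw [hasFDerivAt_iff_isLittleO] at h1 ⊢
  refine (h1.add h2).congr_left fun x => ?_
  simp only [hm]
  module

end SmoothDivision

open SmoothDivision in
/-- Smooth divisibility by a function with `0` a regular value: a `C^k` map `ψ`
vanishing on the zero level set of the smooth function `h` can be written near a
regular zero `m₀` of `h` as `ψ = h • φ` with `φ` of class `C^(k-1)`; on the zero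
level set, `φ(m)` is the unique vector `e` with `Dψ(m)(v) = (dh(m)(v)) • e`. -/
theorem smooth_division_by_regular_function
    {E F : Type*}
    [NormedAddCommGroup E] [NormedSpace ℝ E] [CompleteSpace E]
    [NormedAddCommGroup F] [NormedSpace ℝ F] [CompleteSpace F]
    (U : Set E) (hU : IsOpen U)
    (h : E → ℝ) (hh : ContDiffOn ℝ ∞ h U)
    (k : ℕ) (hk : 1 ≤ k)
    (ψ : E → F) (hψ : ContDiffOn ℝ k ψ U)
    (hzero : ∀ m ∈ U, h m = 0 → ψ m = 0)
    (m₀ : E) (hm₀U : m₀ ∈ U) (hm₀ : h m₀ = 0) (hdh : fderiv ℝ h m₀ ≠ 0) :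
    ∃ W : Set E, IsOpen W ∧ m₀ ∈ W ∧ W ⊆ U ∧
      ∃ φ : E → F, ContDiffOn ℝ (k - 1 : ℕ) φ W ∧
        (∀ m ∈ W, ψ m = h m • φ m) ∧
        ∀ m ∈ W, h m = 0 → fderiv ℝ h m ≠ 0 →
          (∀ v : E, fderiv ℝ ψ m v = (fderiv ℝ h m v) • φ m) ∧
          (∀ e : F, (∀ v : E, fderiv ℝ ψ m v = (fderiv ℝ h m v) • e) → e = φ m) := by
  open Set Filter Topology in
  obtain ⟨n, rfl⟩ : ∃ n, k = n + 1 := ⟨k - 1, by omega⟩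
  simp only [Nat.add_sub_cancel]
  have hhU : ∀ m ∈ U, ContDiffAt ℝ (n + 1 : ℕ) h m := fun m hm =>
    (hh.contDiffAt (hU.mem_nhds hm)).of_le (by exact_mod_cast le_top)
  have hne : ((n + 1 : ℕ) : WithTop ℕ∞) ≠ 0 := by simp
  set ℓ := fderiv ℝ h m₀ with hℓ
  obtain ⟨v, hv⟩ : ∃ v, ℓ v = 1 := by
    obtain ⟨w, hw⟩ : ∃ w, ℓ w ≠ 0 := by
      by_contra! hcon
      exact hdh (ContinuousLinearMap.ext hcon)
    exact ⟨(ℓ w)⁻¹ • w, by simp [hw]⟩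
  -- the straightening diffeomorphism
  let Φ : E → E := fun x => (x - m₀) + (h x - ℓ (x - m₀)) • v
  have hΦ0 : Φ m₀ = 0 := by simp [Φ, hm₀]
  have hℓΦ : ∀ x, ℓ (Φ x) = h x := fun x => by simp [Φ, hv]
  have hΦc : ContDiffAt ℝ (n + 1 : ℕ) Φ m₀ := by
    have := hhU m₀ hm₀U
    fun_prop
  have hΦ' : HasFDerivAt Φ ((ContinuousLinearEquiv.refl ℝ E : E ≃L[ℝ] E) : E →L[ℝ] E) m₀ := by
    have h1 : HasFDerivAt h ℓ m₀ := ((hhU m₀ hm₀U).differentiableAt hne).hasFDerivAt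
    have h2 : HasFDerivAt (fun x => x - m₀) (ContinuousLinearMap.id ℝ E) m₀ :=
      (hasFDerivAt_id m₀).sub_const m₀
    have h3 := h2.add ((h1.sub (ℓ.hasFDerivAt.comp m₀ h2)).smul_const v)
    convert h3 using 1
    · rfl
    · ext x
      simp
  have hstrict := hΦc.hasStrictFDerivAt' hΦ' hne
  let g : E → E := hΦc.localInverse hΦ' hne
  have hg0 : g 0 = m₀ := by
    have := hΦc.localInverse_apply_image hΦ' hne
    rwa [hΦ0] at this
  have hgc : ContDiffAt ℝ (n + 1 : ℕ) g 0 := by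
    have := hΦc.to_localInverse hΦ' hne
    rwa [hΦ0] at this
  have hright : ∀ᶠ y in 𝓝 (0 : E), Φ (g y) = y := by
    have := hstrict.eventually_right_inverse
    rwa [hΦ0] at this
  have hleft : ∀ᶠ x in 𝓝 m₀, g (Φ x) = x := hstrict.eventually_left_inverse
  have hgU : ∀ᶠ y in 𝓝 (0 : E), g y ∈ U :=
    hgc.continuousAt.eventually_mem (by rw [hg0]; exact hU.mem_nhds hm₀U)
  obtain ⟨φ, hφc, hφ⟩ := hadamard_linear_form ℓ v hv n (ψ ∘ g)
    (ContDiffAt.comp 0 (by rw [hg0]; exact hψ.contDiffAt (hU.mem_nhds hm₀U)) hgc) (by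
      filter_upwards [hright, hgU] with y hy hyU hℓy
      exact hzero _ hyU (by rw [← hℓΦ, hy, hℓy]))
  have hφΦ : ContDiffAt ℝ n (φ ∘ Φ) m₀ :=
    ContDiffAt.comp m₀ (by rwa [hΦ0]) (hΦc.of_le (by exact_mod_cast Nat.le_succ n))
  have htend : Tendsto Φ (𝓝 m₀) (𝓝 0) := by
    have := hΦc.continuousAt.tendsto
    rwa [hΦ0] at this
  have hdiv : ∀ᶠ x in 𝓝 m₀, ψ x = h x • (φ ∘ Φ) x := by
    filter_upwards [hleft, htend.eventually hφ] with x hx hx2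
    simpa [hx, hℓΦ] using hx2
  obtain ⟨W, hW, hWo, hm₀W⟩ := eventually_nhds_iff.1
    ((hφΦ.eventually (by simp)).and (hdiv.and (hU.mem_nhds hm₀U)))
  refine ⟨W, hWo, hm₀W, fun m hm => (hW m hm).2.2, φ ∘ Φ,
    fun m hm => (hW m hm).1.contDiffWithinAt, fun m hm => (hW m hm).2.1, ?_⟩
  intro m hm hm0 hdm
  have hder : HasFDerivAt ψ ((fderiv ℝ h m).smulRight ((φ ∘ Φ) m)) m := by
    refine (hasFDerivAt_smul_of_eq_zero
      ((hhU m (hW m hm).2.2).differentiableAt hne).hasFDerivAt hm0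
      (hW m hm).1.continuousAt).congr_of_eventuallyEq ?_
    filter_upwards [hWo.mem_nhds hm] with x hx
    exact (hW x hx).2.1
  have hform : ∀ w : E, fderiv ℝ ψ m w = (fderiv ℝ h m w) • (φ ∘ Φ) m := fun w => by
    rw [hder.fderiv]; rfl
  refine ⟨hform, fun e he => ?_⟩
  obtain ⟨w, hw⟩ : ∃ w, fderiv ℝ h m w ≠ 0 := by
    by_contra! hcon
    exact hdm (ContinuousLinearMap.ext hcon)
  exact smul_right_injective F hw ((he w).symm.trans (hform w))
end

section
/- Let E, F, G be Banach spaces, U ⊆ E and V ⊆ F open, h_U : U → ℝ and h_V : V → ℝ functions, r ≥ 1 an integer, and x₀ ∈ U with h_U(x₀) = 0. Let f₁, f₂ : U → V be maps continuous at x₀ with f₁(x₀) = f₂(x₀) =: y₀ and h_V(fᵢ(x)) = 0 whenever h_U(x) = 0, and let g₁, g₂ : V → G with g₁ of class C¹. Suppose: (a) f₂(x) − f₁(x) = h_U(x)^r · δf(x) near x₀ with δf continuous at x₀; (b) g₂(y) − g₁(y) = h_V(y)^r · δg(y) near y₀ with δg continuous at y₀; and (c) there is a function φ, defined near x₀ and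 continuous at x₀, with h_V(f₂(x)) = h_U(x) · φ(x) near x₀. Then there is a function δ, defined near x₀ and continuous at x₀, with (g₂ ∘ f₂)(x) − (g₁ ∘ f₁)(x) = h_U(x)^r · δ(x) near x₀, and δ(x₀) = Dg₁(y₀)(δf(x₀)) + φ(x₀)^r · δg(y₀). -/
/-!
Write `L = Dg₁(y₀)` and split
`g₂ ∘ f₂ - g₁ ∘ f₁ = (g₂ - g₁) ∘ f₂ + L (f₂ - f₁) + N`, where
`N = g₁ ∘ f₂ - g₁ ∘ f₁ - L (f₂ - f₁)`. The first two terms are `hU ^ r` times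
`φ ^ r • δg ∘ f₂` and `L ∘ δf`. A `C¹` map is strictly differentiable, so
`N = o(f₂ - f₁) = o(hU ^ r)`; hence `N = hU ^ r • R` with `R` continuous at `x₀` and `R x₀ = 0`.
-/

open scoped Topology

/-- Composition formula for residuals: if `f₂ = f₁ + O(h_U^r)` at `x₀` with residual
`δf x₀`, `g₂ = g₁ + O(h_V^r)` at `y₀ = f₁ x₀ = f₂ x₀` with residual `δg y₀`,
`h_V ∘ f₂ = h_U · φ` with `φ` continuous at `x₀`, and `g₁` is `C¹`, then
`g₂ ∘ f₂ = g₁ ∘ f₁ + O(h_U^r)` at `x₀` with residual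
`Dg₁(y₀)(δf x₀) + φ(x₀)^r • δg y₀`. -/
theorem residual_composition_formula
    {E F G : Type*}
    [NormedAddCommGroup E] [NormedSpace ℝ E] [CompleteSpace E]
    [NormedAddCommGroup F] [NormedSpace ℝ F] [CompleteSpace F]
    [NormedAddCommGroup G] [NormedSpace ℝ G] [CompleteSpace G]
    (U : Set E) (hUopen : IsOpen U) (V : Set F) (hVopen : IsOpen V)
    (hU : E → ℝ) (hV : F → ℝ)
    (r : ℕ) (hr : 1 ≤ r)
    (x₀ : E) (hx₀U : x₀ ∈ U) (hhx₀ : hU x₀ = 0)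
    (f₁ f₂ : E → F)
    (hf₁c : ContinuousAt f₁ x₀) (hf₂c : ContinuousAt f₂ x₀)
    (heq : f₁ x₀ = f₂ x₀)
    (hmap₁ : Set.MapsTo f₁ U V) (hmap₂ : Set.MapsTo f₂ U V)
    (hzero : ∀ x ∈ U, hU x = 0 → hV (f₁ x) = 0 ∧ hV (f₂ x) = 0)
    (g₁ g₂ : F → G) (hg₁ : ContDiffOn ℝ 1 g₁ V)
    (δf : E → F) (hδfc : ContinuousAt δf x₀)
    (ha : ∀ᶠ x in 𝓝 x₀, f₂ x - f₁ x = hU x ^ r • δf x)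
    (δg : F → G) (hδgc : ContinuousAt δg (f₁ x₀))
    (hb : ∀ᶠ y in 𝓝 (f₁ x₀), g₂ y - g₁ y = hV y ^ r • δg y)
    (φ : E → ℝ) (hφc : ContinuousAt φ x₀)
    (hc : ∀ᶠ x in 𝓝 x₀, hV (f₂ x) = hU x * φ x) :
    ∃ δ : E → G, ContinuousAt δ x₀ ∧
      (∀ᶠ x in 𝓝 x₀, g₂ (f₂ x) - g₁ (f₁ x) = hU x ^ r • δ x) ∧
      δ x₀ = fderiv ℝ g₁ (f₁ x₀) (δf x₀) + φ x₀ ^ r • δg (f₁ x₀) := by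
  have hstrict : HasStrictFDerivAt g₁ (fderiv ℝ g₁ (f₁ x₀)) (f₁ x₀) :=
    (hg₁.contDiffAt (hVopen.mem_nhds (hmap₁ hx₀U))).hasStrictFDerivAt one_ne_zero
  set L := fderiv ℝ g₁ (f₁ x₀)
  have hf₂t : Filter.Tendsto f₂ (𝓝 x₀) (𝓝 (f₁ x₀)) := by
    rw [heq]; exact hf₂c
  set N : E → G := fun x => g₁ (f₂ x) - g₁ (f₁ x) - L (f₂ x - f₁ x) with hN
  have hNo : N =o[𝓝 x₀] fun x => hU x ^ r := by
    have h₁ : N =o[𝓝 x₀] fun x => f₂ x - f₁ x :=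
      hstrict.isLittleO.comp_tendsto (hf₂t.prodMk_nhds hf₁c)
    -- `δf` is bounded near `x₀`, hence `f₂ - f₁ = O(hU ^ r)`.
    have h₂ : (fun x => f₂ x - f₁ x) =O[𝓝 x₀] fun x => hU x ^ r := by
      have h₃ : (fun x => hU x ^ r • δf x) =O[𝓝 x₀] fun x => hU x ^ r • (1 : ℝ) :=
        (Asymptotics.isBigO_refl _ _).smul (hδfc.isBigO_one ℝ)
      simpa using (Filter.EventuallyEq.trans_isBigO ha h₃)
    exact h₁.trans_isBigO h₂
  set R : E → G := fun x => (hU x ^ r)⁻¹ • N x with hR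
  have hRx₀ : R x₀ = 0 := by simp [hR, hN, heq]
  have hRc : ContinuousAt R x₀ := by
    rw [ContinuousAt, hRx₀]
    exact hNo.tendsto_inv_smul_nhds_zero
  have hδgf : ContinuousAt (fun x => δg (f₂ x)) x₀ := by
    rw [heq] at hδgc
    exact hδgc.comp hf₂c
  refine ⟨fun x => L (δf x) + R x + φ x ^ r • δg (f₂ x), ?_, ?_, ?_⟩
  · exact ((L.continuous.continuousAt.comp hδfc).add hRc).add ((hφc.pow r).smul hδgf)
  · filter_upwards [ha, hf₂t.eventually hb, hc] with x hax hbx hcx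
    have hRx : hU x ^ r • R x = N x := by
      by_cases h : hU x ^ r = 0
      -- On the zero set of `hU` the inverse is junk, but there `f₂ x = f₁ x`, so `N x = 0`.
      · have : f₂ x = f₁ x := by rwa [h, zero_smul, sub_eq_zero] at hax
        simp [h, hN, this]
      · exact smul_inv_smul₀ h _
    have hLx : L (f₂ x - f₁ x) = hU x ^ r • L (δf x) := by rw [hax, map_smul]
    rw [hcx, mul_pow, mul_smul] at hbx
    rw [smul_add, smul_add, hRx, ← hLx, ← hbx]
    simp only [hN]
    abel
  · simp [hRx₀, heq]
end

section
/- Let E and F be Banach spaces, U ⊆ E and V ⊆ F open, h_U : U → ℝ and h_V : V → ℝ C^∞ functions having 0 as a regular value (their differentials are nonzero at every point of their zero sets). Let r ≥ 1 and let f₁, f₂ : U → V be C^k diffeomorphisms from U onto V with k ≥ r, such that fᵢ(h_U⁻¹(0)) = h_V⁻¹(0) for i = 1, 2. If f₂ = f₁ + O(h_U^r) at every point of h_U⁻¹(0), then f₂⁻¹ = f₁⁻¹ + O(h_V^r) at every point of h_V⁻¹(0). -/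
/-!
Near `y₀` write `x = g₂ y`, so that `g₂ y - g₁ y = g₁ (f₁ x) - g₁ (f₂ x)`. Strict
differentiability of `g₁` at `y₀` turns the contact `f₂ x - f₁ x = hU x ^ r • δ x` into
`g₂ y - g₁ y = hU (g₂ y) ^ r • L + o(hU (g₂ y) ^ r)` for a constant vector `L`.

It remains to compare the two defining functions. The function `φ = hU ∘ g₂` is `C¹` and vanishes
on the zero set of `hV`. A point `y` near `y₀` is moved into that zero set along a fixed
direction `v` transverse to it, by an amount `t = O(hV y)`; strict differentiability of `φ` and `hV`
along this displacement gives `φ = c * hV + o(hV)` at `y₀` (`exists_isLittleO_sub_mul`).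
Hence `g₂ - g₁ = hV ^ r • M + o(hV ^ r)` for a constant vector `M`, which gives
the claim (`exists_continuousAt_of_isLittleO`).
-/

open scoped Topology ContDiff
open Filter Asymptotics

/-- Points near a regular zero `y₀` of `ψ` can be moved into the zero set along a direction `v`
with `ψ' v = 1`, by an amount controlled by `ψ`. -/
lemma eventually_exists_zero_along {F : Type*} [NormedAddCommGroup F] [NormedSpace ℝ F]
    {ψ : F → ℝ} {ψ' : F →L[ℝ] ℝ} {y₀ v : F} (hψ : HasStrictFDerivAt ψ ψ' y₀)
    (h0 : ψ y₀ = 0) (hv : ψ' v = 1) (hcont : ∀ᶠ y in 𝓝 y₀, ContinuousAt ψ y) :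
    ∀ᶠ y in 𝓝 y₀, ∃ t : ℝ, |t| ≤ 2 * |ψ y| ∧ ψ (y - t • v) = 0 := by
  have hvpos : 0 < ‖v‖ := by
    rw [norm_pos_iff]; rintro rfl; simp at hv
  have hlo := hψ.isLittleO.def (c := (2 * ‖v‖)⁻¹) (by positivity)
  have hψc : Tendsto ψ (𝓝 y₀) (𝓝 0) := by
    simpa [h0] using hψ.hasFDerivAt.continuousAt.tendsto
  rw [nhds_prod_eq, eventually_prod_self_iff'] at hlo
  obtain ⟨W, hW, hlo⟩ := hlo
  obtain ⟨ε, hε, hball⟩ := Metric.mem_nhds_iff.1 (Filter.inter_mem hW hcont)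
  have hsmall : ∀ᶠ y in 𝓝 y₀, ‖y - y₀‖ + 2 * |ψ y| * ‖v‖ < ε := by
    have h : Tendsto (fun y => ‖y - y₀‖ + 2 * |ψ y| * ‖v‖) (𝓝 y₀)
        (𝓝 (‖y₀ - y₀‖ + 2 * |(0 : ℝ)| * ‖v‖)) :=
      ((tendsto_id.sub_const y₀).norm).add ((hψc.abs.const_mul 2).mul_const _)
    exact h.eventually (gt_mem_nhds (by simpa using hε))
  filter_upwards [hsmall] with y hy
  have hmem : ∀ t : ℝ, |t| ≤ 2 * |ψ y| → y - t • v ∈ Metric.ball y₀ ε := by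
    intro t ht
    rw [mem_ball_iff_norm]
    calc ‖y - t • v - y₀‖ = ‖(y - y₀) - t • v‖ := by congr 1; abel
      _ ≤ ‖y - y₀‖ + |t| * ‖v‖ := by
        simpa [norm_smul] using norm_sub_le (y - y₀) (t • v)
      _ ≤ ‖y - y₀‖ + 2 * |ψ y| * ‖v‖ := by gcongr
      _ < ε := hy
  have habs : ∀ t ∈ Set.uIcc 0 (2 * ψ y), |t| ≤ 2 * |ψ y| := by
    intro t ht
    have := Set.abs_sub_left_of_mem_uIcc ht
    simpa [abs_mul] using this
  have hc : ContinuousOn (fun t : ℝ => ψ (y - t • v)) (Set.uIcc 0 (2 * ψ y)) := by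
    intro t ht
    have h1 : ContinuousAt ψ (y - t • v) := (hball (hmem t (habs t ht))).2
    have h2 : ContinuousAt (fun t : ℝ => y - t • v) t := by fun_prop
    exact (ContinuousAt.comp (f := fun t : ℝ => y - t • v) h1 h2).continuousWithinAt
  have hyW : y ∈ W := by
    simpa using (hball (hmem 0 (by simp))).1
  -- The linear approximation at `t = 2 * ψ y` is `-ψ y`, with an error of at most `|ψ y|`,
  -- so `ψ` changes sign between `t = 0` and `t = 2 * ψ y`.
  have hend : |ψ y - ψ (y - (2 * ψ y) • v) - 2 * ψ y| ≤ |ψ y| := by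
    have h := hlo y hyW _ (hball (hmem (2 * ψ y) (by simp [abs_mul]))).1
    simp only [sub_sub_cancel, map_smul, hv, smul_eq_mul, mul_one, norm_smul, Real.norm_eq_abs,
      abs_mul, abs_two] at h
    calc _ ≤ _ := h
      _ = |ψ y| := by field_simp
  have h0mem : (0 : ℝ) ∈ Set.uIcc (ψ (y - (0 : ℝ) • v)) (ψ (y - (2 * ψ y) • v)) := by
    rw [Set.mem_uIcc]
    simp only [zero_smul, sub_zero]
    rcases le_total 0 (ψ y) with h | h
    · right
      rw [abs_of_nonneg h, abs_le] at hend
      constructor <;> linarith [hend.1]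
    · left
      rw [abs_of_nonpos h, abs_le] at hend
      constructor <;> linarith [hend.2]
  obtain ⟨t, ht, hzero⟩ := intermediate_value_uIcc hc h0mem
  exact ⟨t, habs t ht, hzero⟩

/-- A function strictly differentiable at a regular zero `y₀` of `ψ`, and vanishing on the zero set
of `ψ` near `y₀`, is a constant multiple of `ψ` up to an error small relative to `ψ` itself
(not merely relative to the distance to `y₀`). -/
lemma exists_isLittleO_sub_mul {F : Type*} [NormedAddCommGroup F] [NormedSpace ℝ F]
    {φ ψ : F → ℝ} {φ' ψ' : F →L[ℝ] ℝ} {y₀ : F} (hφ : HasStrictFDerivAt φ φ' y₀)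
    (hψ : HasStrictFDerivAt ψ ψ' y₀) (h0 : ψ y₀ = 0) (hne : ψ' ≠ 0)
    (hcont : ∀ᶠ y in 𝓝 y₀, ContinuousAt ψ y)
    (hz : ∀ᶠ y in 𝓝 y₀, ψ y = 0 → φ y = 0) :
    ∃ c : ℝ, (fun y => φ y - c * ψ y) =o[𝓝 y₀] ψ := by
  obtain ⟨w, hw⟩ : ∃ w, ψ' w ≠ 0 := by
    by_contra! h
    exact hne (ContinuousLinearMap.ext h)
  obtain ⟨v, hv⟩ : ∃ v, ψ' v = 1 := ⟨(ψ' w)⁻¹ • w, by simp [hw]⟩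
  obtain ⟨τ, hτ⟩ := (eventually_exists_zero_along hψ h0 hv hcont).choice
  have hψc : Tendsto ψ (𝓝 y₀) (𝓝 0) := by
    simpa [h0] using hψ.hasFDerivAt.continuousAt.tendsto
  have hτO : τ =O[𝓝 y₀] ψ := IsBigO.of_bound 2 (hτ.mono fun y hy => hy.1)
  have hτ0 : Tendsto τ (𝓝 y₀) (𝓝 0) := hτO.trans_tendsto hψc
  have hzt : Tendsto (fun y => y - τ y • v) (𝓝 y₀) (𝓝 y₀) := by
    simpa using tendsto_id.sub (hτ0.smul_const v)
  have hpair : Tendsto (fun y => (y, y - τ y • v)) (𝓝 y₀) (𝓝 (y₀, y₀)) :=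
    tendsto_id.prodMk_nhds hzt
  have hstep : (fun y => τ y • v) =O[𝓝 y₀] ψ := by
    refine IsBigO.trans (IsBigO.of_bound ‖v‖ (Eventually.of_forall fun y => ?_)) hτO
    rw [norm_smul, mul_comm]
  have key : ∀ {χ : F → ℝ} {χ' : F →L[ℝ] ℝ}, HasStrictFDerivAt χ χ' y₀ →
      (∀ᶠ y in 𝓝 y₀, χ (y - τ y • v) = 0) →
      (fun y => χ y - τ y * χ' v) =o[𝓝 y₀] ψ := by
    intro χ χ' hχ hχ0
    have h := hχ.isLittleO.comp_tendsto hpair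
    have h2 : (fun y => χ y - χ (y - τ y • v) - τ y * χ' v) =o[𝓝 y₀] ψ := by
      refine IsLittleO.trans_isBigO ?_ hstep
      simpa [Function.comp_def] using h
    refine h2.congr' (hχ0.mono fun y hy => ?_) EventuallyEq.rfl
    simp [hy]
  have e1 := key hφ (by
    filter_upwards [hzt.eventually hz, hτ] with y h1 h2 using h1 h2.2)
  have e2 := key hψ (hτ.mono fun y hy => hy.2)
  refine ⟨φ' v, (e1.sub (e2.const_mul_left (φ' v))).congr_left fun y => ?_⟩
  rw [hv]; ring

lemma isLittleO_pow_sub_mul_pow {α : Type*} {l : Filter α} {φ ψ : α → ℝ} {c : ℝ}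
    (h : (fun y => φ y - c * ψ y) =o[l] ψ) (n : ℕ) :
    (fun y => φ y ^ n - c ^ n * ψ y ^ n) =o[l] fun y => ψ y ^ n := by
  have hO : φ =O[l] ψ := by
    simpa using h.isBigO.add ((isBigO_refl ψ l).const_mul_left c)
  induction n with
  | zero => simpa using tendsto_const_nhds
  | succ n ih =>
    have h1 := (h.mul_isBigO (hO.pow n)).add
      (((isBigO_refl ψ l).const_mul_left c).mul_isLittleO ih)
    refine h1.congr (fun y => ?_) (fun y => ?_) <;> ring

/-- A function of the form `s • M + o(s)` is `s` times a function continuous at the base point. -/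
lemma exists_continuousAt_of_isLittleO {X E : Type*} [TopologicalSpace X]
    [NormedAddCommGroup E] [NormedSpace ℝ E] {w : X → E} {s : X → ℝ} {M : E} {y₀ : X}
    (hs : s y₀ = 0) (h : (fun y => w y - s y • M) =o[𝓝 y₀] s) :
    ∃ δ : X → E, ContinuousAt δ y₀ ∧ ∀ᶠ y in 𝓝 y₀, w y = s y • δ y := by
  -- Where `s y = 0`, the convention `0⁻¹ = 0` gives this function the value `M`.
  refine ⟨fun y => M + (s y)⁻¹ • (w y - s y • M), ?_, ?_⟩
  · have ht : Tendsto (fun y => (s y)⁻¹ • (w y - s y • M)) (𝓝 y₀) (𝓝 0) :=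
      h.tendsto_inv_smul_nhds_zero
    simpa [ContinuousAt, hs] using ht.const_add M
  · filter_upwards [h.def one_pos] with y hy
    by_cases hsy : s y = 0
    · simpa [hsy] using hy
    · simp [smul_smul, hsy]

/-- Contact of inverse diffeomorphisms: if `f₁, f₂ : U → V` are `C^k` diffeomorphisms
(`k ≥ r ≥ 1`) mapping the zero level set of `h_U` onto that of `h_V` (both smooth with
`0` a regular value), and `f₂ = f₁ + O(h_U^r)` at every point of `h_U⁻¹(0)`, then
`f₂⁻¹ = f₁⁻¹ + O(h_V^r)` at every point of `h_V⁻¹(0)`. -/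
theorem inverse_contact
    {E F : Type*}
    [NormedAddCommGroup E] [NormedSpace ℝ E] [CompleteSpace E]
    [NormedAddCommGroup F] [NormedSpace ℝ F] [CompleteSpace F]
    (U : Set E) (hUopen : IsOpen U) (V : Set F) (hVopen : IsOpen V)
    (hU : E → ℝ) (hV : F → ℝ)
    (hUsm : ContDiffOn ℝ ∞ hU U) (hVsm : ContDiffOn ℝ ∞ hV V)
    (hUreg : ∀ x ∈ U, hU x = 0 → fderiv ℝ hU x ≠ 0)
    (hVreg : ∀ y ∈ V, hV y = 0 → fderiv ℝ hV y ≠ 0)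
    (r k : ℕ) (hr : 1 ≤ r) (hkr : r ≤ k)
    (f₁ f₂ : E → F) (g₁ g₂ : F → E)
    (hf₁ : ContDiffOn ℝ k f₁ U) (hf₂ : ContDiffOn ℝ k f₂ U)
    (hg₁ : ContDiffOn ℝ k g₁ V) (hg₂ : ContDiffOn ℝ k g₂ V)
    (hbij₁ : Set.BijOn f₁ U V) (hbij₂ : Set.BijOn f₂ U V)
    (hinv₁left : ∀ x ∈ U, g₁ (f₁ x) = x) (hinv₁right : ∀ y ∈ V, f₁ (g₁ y) = y)
    (hinv₂left : ∀ x ∈ U, g₂ (f₂ x) = x) (hinv₂right : ∀ y ∈ V, f₂ (g₂ y) = y)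
    (hzmap₁ : f₁ '' {x ∈ U | hU x = 0} = {y ∈ V | hV y = 0})
    (hzmap₂ : f₂ '' {x ∈ U | hU x = 0} = {y ∈ V | hV y = 0})
    (hcontact : ∀ x₀ ∈ U, hU x₀ = 0 → ∃ δ : E → F, ContinuousAt δ x₀ ∧
      ∀ᶠ x in 𝓝 x₀, f₂ x - f₁ x = hU x ^ r • δ x) :
    ∀ y₀ ∈ V, hV y₀ = 0 → ∃ δ' : F → E, ContinuousAt δ' y₀ ∧
      ∀ᶠ y in 𝓝 y₀, g₂ y - g₁ y = hV y ^ r • δ' y := by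
  intro y₀ hy₀ hVy₀
  have hk : (k : WithTop ℕ∞) ≠ 0 := by
    have : k ≠ 0 := by omega
    exact_mod_cast this
  have hUV₂ : ∀ y ∈ V, g₂ y ∈ U := fun y hy => by
    obtain ⟨x, hx, rfl⟩ := hbij₂.surjOn hy
    rwa [hinv₂left x hx]
  have hx₀ := hUV₂ y₀ hy₀
  have hzero : ∀ y ∈ V, hV y = 0 → hU (g₂ y) = 0 := by
    intro y hy hy0
    obtain ⟨x, ⟨hx, hx0⟩, rfl⟩ : y ∈ f₂ '' {x ∈ U | hU x = 0} := by
      rw [hzmap₂]; exact ⟨hy, hy0⟩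
    rwa [hinv₂left x hx]
  have hUx₀ := hzero y₀ hy₀ hVy₀
  obtain ⟨δ, hδ, hδeq⟩ := hcontact _ hx₀ hUx₀
  have hr0 : r ≠ 0 := by omega
  have hf₁x₀ : f₁ (g₂ y₀) = y₀ := by
    have h := hδeq.self_of_nhds
    rw [hUx₀, zero_pow hr0, zero_smul, sub_eq_zero, hinv₂right y₀ hy₀] at h
    exact h.symm
  have hVn : ∀ᶠ y in 𝓝 y₀, y ∈ V := hVopen.mem_nhds hy₀
  have hUn : U ∈ 𝓝 (g₂ y₀) := hUopen.mem_nhds hx₀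
  have hg₂d := (hg₂.contDiffAt hVn).hasStrictFDerivAt hk
  have hg₁d := (hg₁.contDiffAt hVn).hasStrictFDerivAt hk
  have hUd := (hUsm.contDiffAt hUn).hasStrictFDerivAt (by simp)
  have hVd := (hVsm.contDiffAt hVn).hasStrictFDerivAt (by simp)
  have hg₂c : Tendsto g₂ (𝓝 y₀) (𝓝 (g₂ y₀)) := hg₂d.hasFDerivAt.continuousAt
  have hf₁c : Tendsto (fun y => f₁ (g₂ y)) (𝓝 y₀) (𝓝 y₀) := by
    have h := (hf₁.continuousOn.continuousAt hUn).tendsto.comp hg₂c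
    rwa [hf₁x₀] at h
  obtain ⟨c, hc⟩ := exists_isLittleO_sub_mul (hUd.comp y₀ hg₂d) hVd hVy₀
    (hVreg y₀ hy₀ hVy₀)
    (hVn.mono fun y hy => hVsm.continuousOn.continuousAt (hVopen.mem_nhds hy))
    (hVn.mono fun y hy => hzero y hy)
  have hpow : (fun y => hU (g₂ y) ^ r - c ^ r * hV y ^ r) =o[𝓝 y₀] fun y => hV y ^ r :=
    isLittleO_pow_sub_mul_pow hc r
  have hpowO : (fun y => hU (g₂ y) ^ r) =O[𝓝 y₀] fun y => hV y ^ r := by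
    simpa using hpow.isBigO.add
      ((isBigO_refl (fun y => hV y ^ r) (𝓝 y₀)).const_mul_left (c ^ r))
  have hδt : Tendsto (fun y => δ (g₂ y)) (𝓝 y₀) (𝓝 (δ (g₂ y₀))) := hδ.tendsto.comp hg₂c
  have hdiff : ∀ᶠ y in 𝓝 y₀, y - f₁ (g₂ y) = hU (g₂ y) ^ r • δ (g₂ y) := by
    filter_upwards [hVn, hg₂c.eventually hδeq] with y hy h
    rwa [hinv₂right y hy] at h
  have hdiffO : (fun y => f₁ (g₂ y) - y) =O[𝓝 y₀] fun y => hV y ^ r := by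
    have h := hpowO.smul (hδt.isBigO_one ℝ)
    simp only [smul_eq_mul, mul_one] at h
    refine (h.neg_left).congr' (hdiff.mono fun y hy => ?_) EventuallyEq.rfl
    simp only [← hy, neg_sub]
  set A := fderiv ℝ g₁ y₀
  -- First-order expansion of `g₂ y - g₁ y = g₁ (f₁ (g₂ y)) - g₁ y`.
  have e1 : (fun y => g₂ y - g₁ y - A (f₁ (g₂ y) - y)) =o[𝓝 y₀] fun y => hV y ^ r := by
    have h := (hg₁d.isLittleO.comp_tendsto (hf₁c.prodMk_nhds tendsto_id)).trans_isBigO hdiffO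
    refine h.congr' (hVn.mono fun y hy => ?_) EventuallyEq.rfl
    simp [hinv₁left _ (hUV₂ y hy), A]
  have e2 : (fun y => hU (g₂ y) ^ r • (A (δ (g₂ y)) - A (δ (g₂ y₀)))) =o[𝓝 y₀]
      fun y => hV y ^ r := by
    have h0 : Tendsto (fun y => A (δ (g₂ y)) - A (δ (g₂ y₀))) (𝓝 y₀) (𝓝 0) := by
      simpa using ((A.continuous.tendsto _).comp hδt).sub_const (A (δ (g₂ y₀)))
    simpa using hpowO.smul_isLittleO ((isLittleO_one_iff ℝ).2 h0)
  have e3 : (fun y => (hU (g₂ y) ^ r - c ^ r * hV y ^ r) • A (δ (g₂ y₀))) =o[𝓝 y₀]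
      fun y => hV y ^ r := by
    simpa using hpow.smul_isBigO
      (isBigO_const_const (A (δ (g₂ y₀))) (one_ne_zero (α := ℝ)) (𝓝 y₀))
  refine exists_continuousAt_of_isLittleO (s := fun y => hV y ^ r)
    (M := -(c ^ r • A (δ (g₂ y₀)))) (by simp [hVy₀, hr0]) ?_
  refine ((e1.sub e2).sub e3).congr' (hdiff.mono fun y hy => ?_) EventuallyEq.rfl
  have hA : A (f₁ (g₂ y) - y) = -(hU (g₂ y) ^ r • A (δ (g₂ y))) := by
    rw [← neg_sub, hy, map_neg, map_smul]
  simp only [hA]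
  module
end

section
/- Let E and F be Banach spaces, M ⊆ E open, N ⊆ F open, k ≥ 1, and let h : N → ℝ be a C^k function whose zero set Z := h⁻¹(0) satisfies dh(n) ≠ 0 for all n ∈ Z. Let U ⊆ N be open with Z ⊆ U and let γ : U → M × M be C^k. Suppose γ restricts to a C^k diffeomorphism from Z onto the diagonal Δ = {(m, m) : m ∈ M}; precisely, suppose there is a C^k map σ : M → N with σ(M) = Z, γ(σ(m)) = (m, m) for all m ∈ M, and σ(π₁(γ(n))) = n for all n ∈ Z, where π₁ is projection onto the first factor. Then there exist an open set Ũ with Z ⊆ Ũ ⊆ U and an open set V ⊆ M × ℝ with M × {0} ⊆ V such that: for every (m, s) ∈ V there is a unique m̃ ∈ M for which there exists n ∈ Ũ with γ(n) = (m, m̃) and h(n) = s; and the map f_γ : V → M defined by f_γ(m, s) := m̃ is C^k. -/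
/-!
Write `Z = h⁻¹(0)` and `G n = (π₁ (γ n), h n)`, a `C^k` map `U → M × ℝ` with `G (σ m) = (m, 0)`.
The required map is `fγ = π₂ ∘ γ ∘ G⁻¹`, so it suffices to invert `G` in the `C^k` sense on an open
neighbourhood of `Z`.

* The derivative of `G` is invertible at each point `z = σ m` of `Z`. With `A = D(π₁ ∘ γ)(z)`,
  `B = Dσ(m)` and `l = dh(z)`, differentiating `π₁ ∘ γ ∘ σ = id` and `h ∘ σ = 0` gives `A B = 1` and
  `l B = 0`. Since `σ ∘ π₁ ∘ γ` is the identity on `Z`, and by the implicit function theorem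
  (`fderiv_apply_eq_self_of_eqOn_levelSet`) every vector of `ker l` is tangent to `Z`, also
  `B A = 1` on `ker l`. Together with a vector `w` such that `l w = 1` these identities give an
  explicit inverse of `(A, l)` (`exists_equiv_eq_prod`). The inverse function theorem then
  provides local `C^k` inverses of `G` (`exists_local_inverse`).

* Injectivity of `G` on a whole neighbourhood of `Z` needs no paracompactness, because
  `ρ = σ ∘ π₁ ∘ γ` is determined by `G`. If `G` is injective on the ball of radius `3 r_m` around
  `σ m` for each `m`, let `U'` be the union over `m` of the sets of those `n` for which both `n` and
  `ρ n` lie within `r_m` of `σ m`. If `n` and `n'` belong to the pieces of `m` and `m'` with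
  `r_{m'} ≤ r_m`, and `G n = G n'`, then `ρ n = ρ n'`, hence both points lie within `3 r_m` of
  `σ m`, so they coincide (`exists_open_injOn`).
-/

open Set Filter Topology

/-- A map `r` that fixes the points of a regular level set of `h` has a derivative that fixes the
tangent vectors of that level set. -/
theorem fderiv_apply_eq_self_of_eqOn_levelSet
    {F : Type*} [NormedAddCommGroup F] [NormedSpace ℝ F] [CompleteSpace F]
    {h : F → ℝ} {h' : F →L[ℝ] ℝ} {z w : F} (hh : HasStrictFDerivAt h h' z) (hw : h' w = 1)
    {r : F → F} {r' : F →L[ℝ] F} (hr : HasFDerivAt r r' z)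
    (hfix : ∀ᶠ n in 𝓝 z, h n = h z → r n = n) (v : F) (hv : h' v = 0) : r' v = v := by
  have hrange : h'.range = ⊤ := by
    refine LinearMap.range_eq_top.2 fun s => ⟨s • w, ?_⟩
    simp [hw]
  -- `c` parametrizes the level set of `h` through `z` by the kernel of `h'`.
  set c := hh.implicitFunction h h' hrange (h z) with hc
  have hc0 : c 0 = z := hh.implicitFunction_apply_image hrange
  have hcd : HasFDerivAt c h'.ker.subtypeL 0 := (hh.to_implicitFunction hrange).hasFDerivAt
  have hlev : ∀ᶠ x in 𝓝 (0 : h'.ker), h (c x) = h z := by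
    have h1 := hh.map_implicitFunction_eq hrange
    have h2 : Tendsto (fun x : h'.ker => (h z, x)) (𝓝 0) (𝓝 (h z, 0)) :=
      (Continuous.prodMk_right (h z)).tendsto 0
    exact h2.eventually h1
  have hct : Tendsto c (𝓝 0) (𝓝 z) := by
    have := hcd.continuousAt.tendsto
    rwa [hc0] at this
  have heq : r ∘ c =ᶠ[𝓝 0] c := by
    filter_upwards [hlev, hct.eventually hfix] with x hx1 hx2 using hx2 hx1
  have hcomp : HasFDerivAt (r ∘ c) (r'.comp h'.ker.subtypeL) 0 := by
    refine HasFDerivAt.comp (0 : h'.ker) ?_ hcd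
    rwa [hc0]
  have huniq := (hcd.congr_of_eventuallyEq heq).unique hcomp
  have := congrArg (fun L => L ⟨v, hv⟩) huniq
  simpa using this.symm

/-- If `B` is a right inverse of `A` taking values in `ker l` and a left inverse of `A` on `ker l`,
where `l` takes the value `1`, then `(A, l)` is an isomorphism. -/
theorem exists_equiv_eq_prod
    {E F : Type*} [NormedAddCommGroup E] [NormedSpace ℝ E] [NormedAddCommGroup F] [NormedSpace ℝ F]
    (A : F →L[ℝ] E) (B : E →L[ℝ] F) (l : F →L[ℝ] ℝ) (w : F)
    (hAB : ∀ e, A (B e) = e) (hlB : ∀ e, l (B e) = 0) (hw : l w = 1)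
    (hBA : ∀ v, l v = 0 → B (A v) = v) :
    ∃ L : F ≃L[ℝ] E × ℝ, (L : F →L[ℝ] E × ℝ) = A.prod l := by
  let C : E × ℝ →L[ℝ] F :=
    B.comp (ContinuousLinearMap.fst ℝ E ℝ - (ContinuousLinearMap.snd ℝ E ℝ).smulRight (A w)) +
      (ContinuousLinearMap.snd ℝ E ℝ).smulRight w
  have hC : ∀ p : E × ℝ, C p = B (p.1 - p.2 • A w) + p.2 • w := fun p => rfl
  refine ⟨ContinuousLinearEquiv.equivOfInverse (A.prod l) C ?_ ?_, ?_⟩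
  · intro v
    have h1 : B (A (v - l v • w)) = v - l v • w := hBA _ (by simp [hw])
    rw [map_sub, map_smul] at h1
    rw [hC]
    simp [h1]
  · rintro ⟨e, s⟩
    rw [hC, ContinuousLinearMap.prod_apply]
    ext
    · simp only [map_add, map_smul, hAB]
      simp
    · simp [hlB, hw, -map_sub]
  · ext v <;> rfl

/-- The inverse function theorem in the form used below: `g` is a `C^k` inverse of `G` near every
point close to `z`. -/
theorem exists_local_inverse
    {F P : Type*} [NormedAddCommGroup F] [NormedSpace ℝ F] [CompleteSpace F]
    [NormedAddCommGroup P] [NormedSpace ℝ P] {k : ℕ} (hk : 1 ≤ k)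
    {G : F → P} {z : F} {L : F ≃L[ℝ] P} (hG : ContDiffAt ℝ k G z)
    (hL : HasFDerivAt G (L : F →L[ℝ] P) z) :
    ∃ g : P → F, ∀ᶠ n in 𝓝 z, g (G n) = n ∧ (∀ᶠ p in 𝓝 (G n), G (g p) = p) ∧
      ContDiffAt ℝ k g (G n) := by
  have hk0 : ((k : ℕ) : WithTop ℕ∞) ≠ 0 := by
    exact_mod_cast (by omega : k ≠ 0)
  have hs := hG.hasStrictFDerivAt' hL hk0
  refine ⟨hG.localInverse hL hk0, ?_⟩
  have h1 : ∀ᶠ n in 𝓝 z, hG.localInverse hL hk0 (G n) = n := hs.eventually_left_inverse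
  have h2 : ∀ᶠ q in 𝓝 (G z), G (hG.localInverse hL hk0 q) = q := hs.eventually_right_inverse
  have h3 := (hG.to_localInverse hL hk0).eventually (by simp)
  filter_upwards [h1, hG.continuousAt.eventually h2.eventually_nhds, hG.continuousAt.eventually h3]
    with n a b c using ⟨a, b, c⟩

/-- Let `G` be injective near each point of `Z`, and let `ρ` be a map fixing `Z` pointwise whose
value is determined by that of `G`. Then `Z` has an open neighbourhood on which `G` is injective
and every point of which satisfies a given property `Q` that holds near `Z`. -/
theorem exists_open_injOn_s12
    {F P : Type*} [NormedAddCommGroup F] {U Z : Set F} (hU : IsOpen U) (hZU : Z ⊆ U)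
    {G : F → P} {ρ : F → F} (hρ : ContinuousOn ρ U) (hρZ : ∀ z ∈ Z, ρ z = z)
    (hρG : ∀ n n', G n = G n' → ρ n = ρ n')
    (hinj : ∀ z ∈ Z, ∃ s ∈ 𝓝 z, InjOn G s) {Q : F → Prop} (hQ : ∀ z ∈ Z, ∀ᶠ n in 𝓝 z, Q n) :
    ∃ U' : Set F, IsOpen U' ∧ Z ⊆ U' ∧ U' ⊆ U ∧ InjOn G U' ∧ ∀ n ∈ U', Q n := by
  have key : ∀ z : Z, ∃ r : ℝ, 0 < r ∧ InjOn G (Metric.ball z.1 (3 * r)) ∧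
      ∀ n ∈ Metric.ball z.1 (3 * r), Q n := by
    rintro ⟨z, hz⟩
    obtain ⟨s, hs, hsi⟩ := hinj z hz
    obtain ⟨ε, hε, hb⟩ := Metric.mem_nhds_iff.1 (Filter.inter_mem hs (hQ z hz))
    refine ⟨ε / 3, by positivity, ?_, ?_⟩ <;> rw [show 3 * (ε / 3) = ε by ring]
    · exact hsi.mono fun n hn => (hb hn).1
    · exact fun n hn => (hb hn).2
  choose r hr hri hrQ using key
  let S : Z → Set F := fun z => Metric.ball z.1 (r z) ∩ (U ∩ ρ ⁻¹' Metric.ball z.1 (r z))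
  have hS : ∀ z, IsOpen (S z) := fun z =>
    Metric.isOpen_ball.inter (hρ.isOpen_inter_preimage hU Metric.isOpen_ball)
  -- The triangle inequality along `n'`, `z'`, `ρ n' = ρ n`, `z`.
  have hclose : ∀ z z' n n', n ∈ S z → n' ∈ S z' → ρ n = ρ n' → r z' ≤ r z →
      n' ∈ Metric.ball z.1 (3 * r z) := by
    rintro z z' n n' ⟨-, -, h2⟩ ⟨h3, -, h4⟩ he hle
    simp only [mem_preimage, Metric.mem_ball] at *
    rw [he] at h2
    have := dist_triangle4 n' z'.1 (ρ n') z.1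
    rw [dist_comm] at h4
    linarith
  have hinj' : ∀ z z' n n', n ∈ S z → n' ∈ S z' → r z' ≤ r z → G n = G n' → n = n' := by
    intro z z' n n' hn hn' hle he
    refine hri z ?_ (hclose z z' n n' hn hn' (hρG _ _ he) hle) he
    exact hclose z z n n hn hn rfl le_rfl
  refine ⟨⋃ z, S z, isOpen_iUnion hS, ?_, ?_, ?_, ?_⟩
  · intro z hz
    refine mem_iUnion.2 ⟨⟨z, hz⟩, ?_, hZU hz, ?_⟩
    · exact Metric.mem_ball_self (hr _)
    · rw [mem_preimage, hρZ z hz]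
      exact Metric.mem_ball_self (hr _)
  · exact iUnion_subset fun z n hn => hn.2.1
  · intro n hn n' hn' he
    obtain ⟨z, hz⟩ := mem_iUnion.1 hn
    obtain ⟨z', hz'⟩ := mem_iUnion.1 hn'
    rcases le_total (r z') (r z) with hle | hle
    · exact hinj' z z' n n' hz hz' hle he
    · exact (hinj' z' z n' n hz' hz hle he.symm).symm
  · intro n hn
    obtain ⟨z, hz⟩ := mem_iUnion.1 hn
    exact hrQ z n (hclose z z n n hz hz rfl le_rfl)

/-- The mapping-from-graph construction: if `γ : U → M × M` is `C^k` and restricts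
to a `C^k` diffeomorphism from the zero level set `Z` of `h` onto the diagonal of
`M × M` (with inverse `σ` composed with the first projection), then there are open
sets `U'` with `Z ⊆ U' ⊆ U` and `V ⊆ M × ℝ` containing `M × {0}` such that for every
`(m, s) ∈ V` there is a unique `m̃ ∈ M` with `γ(n) = (m, m̃)` and `h(n) = s` for some
`n ∈ U'`, and `(m, s) ↦ m̃` is `C^k` on `V`. -/
theorem mapping_from_graph
    {E F : Type*}
    [NormedAddCommGroup E] [NormedSpace ℝ E] [CompleteSpace E]
    [NormedAddCommGroup F] [NormedSpace ℝ F] [CompleteSpace F]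
    (M : Set E) (hMopen : IsOpen M) (N : Set F) (hNopen : IsOpen N)
    (k : ℕ) (hk : 1 ≤ k)
    (h : F → ℝ) (hh : ContDiffOn ℝ k h N)
    (hreg : ∀ n ∈ N, h n = 0 → fderiv ℝ h n ≠ 0)
    (U : Set F) (hUopen : IsOpen U)
    (hZU : {n ∈ N | h n = 0} ⊆ U) (hUN : U ⊆ N)
    (γ : F → E × E) (hγ : ContDiffOn ℝ k γ U)
    (hγmap : Set.MapsTo γ U (M ×ˢ M))
    (σ : E → F) (hσ : ContDiffOn ℝ k σ M)
    (hσim : σ '' M = {n ∈ N | h n = 0})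
    (hγσ : ∀ m ∈ M, γ (σ m) = (m, m))
    (hσγ : ∀ n ∈ N, h n = 0 → σ (γ n).1 = n) :
    ∃ U' : Set F, IsOpen U' ∧ {n ∈ N | h n = 0} ⊆ U' ∧ U' ⊆ U ∧
      ∃ V : Set (E × ℝ), IsOpen V ∧ (∀ m ∈ M, (m, (0 : ℝ)) ∈ V) ∧
        (∀ p ∈ V, p.1 ∈ M) ∧
        ∃ fγ : E × ℝ → E, ContDiffOn ℝ k fγ V ∧
          ∀ p ∈ V, fγ p ∈ M ∧
            (∃ n ∈ U', γ n = (p.1, fγ p) ∧ h n = p.2) ∧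
            ∀ m' ∈ M, (∃ n ∈ U', γ n = (p.1, m') ∧ h n = p.2) → m' = fγ p := by
  have hk0 : ((k : ℕ) : WithTop ℕ∞) ≠ 0 := by exact_mod_cast (by omega : k ≠ 0)
  have hσZ : ∀ m ∈ M, σ m ∈ N ∧ h (σ m) = 0 := fun m hm => by
    have : σ m ∈ σ '' M := mem_image_of_mem σ hm
    rw [hσim] at this
    exact this
  let G : F → E × ℝ := fun n => ((γ n).1, h n)
  have hγat : ∀ n ∈ U, ContDiffAt ℝ k γ n := fun n hn => hγ.contDiffAt (hUopen.mem_nhds hn)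
  have hhat : ∀ n ∈ N, ContDiffAt ℝ k h n := fun n hn => hh.contDiffAt (hNopen.mem_nhds hn)
  have hGat : ∀ n ∈ U, ContDiffAt ℝ k G n := fun n hn =>
    (hγat n hn).fst.prodMk (hhat n (hUN hn))
  have hloc : ∀ z ∈ {n ∈ N | h n = 0}, ∃ g : E × ℝ → F, ∀ᶠ n in 𝓝 z,
      g (G n) = n ∧ (∀ᶠ p in 𝓝 (G n), G (g p) = p) ∧ ContDiffAt ℝ k g (G n) := by
    intro z hz
    obtain ⟨m, hm, rfl⟩ : z ∈ σ '' M := by rw [hσim]; exact hz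
    have hzU := hZU hz
    have hMn := hMopen.mem_nhds hm
    have dσ : HasFDerivAt σ (fderiv ℝ σ m) m :=
      ((hσ.contDiffAt hMn).differentiableAt hk0).hasFDerivAt
    have dγ : HasFDerivAt (fun n => (γ n).1) (fderiv ℝ (fun n => (γ n).1) (σ m)) (σ m) :=
      ((hγat _ hzU).fst.differentiableAt hk0).hasFDerivAt
    have sh : HasStrictFDerivAt h (fderiv ℝ h (σ m)) (σ m) := (hhat _ hz.1).hasStrictFDerivAt hk0
    set A := fderiv ℝ (fun n => (γ n).1) (σ m)
    set B := fderiv ℝ σ m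
    set l := fderiv ℝ h (σ m) with hl
    obtain ⟨w, hw⟩ : ∃ w, l w = 1 := by
      obtain ⟨w, hw⟩ : ∃ w, l w ≠ 0 := by
        by_contra hcon
        push Not at hcon
        exact hreg _ hz.1 hz.2 (ContinuousLinearMap.ext hcon)
      exact ⟨(l w)⁻¹ • w, by simp [hw]⟩
    have hAB : A.comp B = ContinuousLinearMap.id ℝ E := by
      have h1 : HasFDerivAt ((fun n => (γ n).1) ∘ σ) (A.comp B) m := dγ.comp m dσ
      refine h1.unique ((hasFDerivAt_id m).congr_of_eventuallyEq ?_)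
      filter_upwards [hMn] with x hx
      simp [hγσ x hx]
    have hlB : l.comp B = 0 := by
      have h1 : HasFDerivAt (h ∘ σ) (l.comp B) m := sh.hasFDerivAt.comp m dσ
      refine h1.unique ((hasFDerivAt_const (0 : ℝ) m).congr_of_eventuallyEq ?_)
      filter_upwards [hMn] with x hx using (hσZ x hx).2
    have hBA : ∀ v, l v = 0 → B (A v) = v := by
      have h1 : HasFDerivAt (σ ∘ fun n => (γ n).1) (B.comp A) (σ m) := by
        refine HasFDerivAt.comp (σ m) ?_ dγ
        rw [hγσ m hm]
        exact dσ
      refine fderiv_apply_eq_self_of_eqOn_levelSet sh hw h1 ?_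
      filter_upwards [hNopen.mem_nhds hz.1] with n hn hn0
      exact hσγ n hn (hn0.trans hz.2)
    obtain ⟨L, hL⟩ := exists_equiv_eq_prod A B l w (fun e => congrArg (fun T => T e) hAB)
      (fun e => congrArg (fun T => T e) hlB) hw hBA
    refine exists_local_inverse hk (L := L) (hGat _ hzU) ?_
    rw [hL]
    exact dγ.prodMk sh.hasFDerivAt
  obtain ⟨U', hU'o, hZU', hU'U, hGinj, hGloc⟩ : ∃ U' : Set F, IsOpen U' ∧
      {n ∈ N | h n = 0} ⊆ U' ∧ U' ⊆ U ∧ InjOn G U' ∧ ∀ n ∈ U', ∃ g : E × ℝ → F,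
        g (G n) = n ∧ (∀ᶠ p in 𝓝 (G n), G (g p) = p) ∧ ContDiffAt ℝ k g (G n) := by
    refine exists_open_injOn_s12 (ρ := fun n => σ (γ n).1) hUopen hZU ?_ ?_ ?_ ?_ ?_
    · exact hσ.continuousOn.comp (continuous_fst.comp_continuousOn hγ.continuousOn)
        fun n hn => (hγmap hn).1
    · exact fun z hz => hσγ z hz.1 hz.2
    · intro n n' he
      exact congrArg (fun p : E × ℝ => σ p.1) he
    · intro z hz
      obtain ⟨g, hg⟩ := hloc z hz
      refine ⟨_, hg, fun n hn n' hn' he => ?_⟩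
      rw [← hn.1, ← hn'.1, he]
    · intro z hz
      obtain ⟨g, hg⟩ := hloc z hz
      exact hg.mono fun n hn => ⟨g, hn⟩
  let inv : E × ℝ → F := Function.invFunOn G U'
  have hinv : ∀ n ∈ U', inv (G n) = n := fun n hn => hGinj.leftInvOn_invFunOn hn
  -- Since `G` is injective on `U'`, such a local inverse `g` agrees with `inv` near `G n`.
  have hnear : ∀ n ∈ U', ∃ g : E × ℝ → F, ContDiffAt ℝ k g (G n) ∧ g (G n) = n ∧
      ∀ᶠ p in 𝓝 (G n), g p ∈ U' ∧ G (g p) = p := by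
    intro n hn
    obtain ⟨g, hgn, hgr, hgc⟩ := hGloc n hn
    refine ⟨g, hgc, hgn, Filter.Eventually.and ?_ hgr⟩
    exact hgc.continuousAt.eventually_mem (by rw [hgn]; exact hU'o.mem_nhds hn)
  refine ⟨U', hU'o, hZU', hU'U, G '' U', ?_, ?_, ?_, fun p => (γ (inv p)).2, ?_, ?_⟩
  · rw [isOpen_iff_mem_nhds]
    rintro _ ⟨n, hn, rfl⟩
    obtain ⟨g, -, -, hg⟩ := hnear n hn
    filter_upwards [hg] with p hp using ⟨g p, hp.1, hp.2⟩
  · intro m hm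
    refine ⟨σ m, hZU' (hσZ m hm), ?_⟩
    simp [G, hγσ m hm, (hσZ m hm).2]
  · rintro _ ⟨n, hn, rfl⟩
    exact (hγmap (hU'U hn)).1
  · rintro _ ⟨n, hn, rfl⟩
    obtain ⟨g, hgc, hgn, hg⟩ := hnear n hn
    have hc : ContDiffAt ℝ k (fun p => (γ (g p)).2) (G n) := by
      refine ContDiffAt.snd (ContDiffAt.comp (G n) (g := γ) ?_ hgc)
      rw [hgn]
      exact hγat n (hU'U hn)
    refine (hc.congr_of_eventuallyEq ?_).contDiffWithinAt
    filter_upwards [hg] with p hp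
    have := hinv (g p) hp.1
    rw [hp.2] at this
    rw [this]
  · rintro _ ⟨n, hn, rfl⟩
    simp only [hinv n hn]
    refine ⟨(hγmap (hU'U hn)).2, ⟨n, hn, rfl, rfl⟩, ?_⟩
    rintro m' - ⟨n', hn', he, hhn'⟩
    have : n' = n := hGinj hn' hn (by simp only [G] at *; rw [he, hhn'])
    rw [← this, he]
end

section
/- In the setting of the mapping-from-graph construction, let E, F be Banach spaces, M ⊆ E open, N ⊆ F open, h : N → ℝ a C^k function with dh ≠ 0 on Z := h⁻¹(0), r ≥ 1, k ≥ r + 1, and let γ₁, γ₂ : U → M × M be C^k maps (Z ⊆ U ⊆ N open) each restricting to a C^k diffeomorphism from Z onto the diagonal of M × M, with associated C^k maps f_{γ₁}, f_{γ₂} defined on a common open neighborhood V of M × {0} in M × ℝ by the condition that f_{γᵢ}(m, s) is the unique m̃ with γᵢ(n) = (m, m̃) and h(n) = s for some n near Z. If γ₂ = γ₁ + O(h^r) at every point of Z, then f_{γ₂} = f_{γ₁} + O(s^r) at every point of M × {0} (order with respect to the function (m, s) ↦ s). If moreover the r-residual is symmetric, i.e. writing res^r(γ₂, γ₁)(n)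 = (δγ¹(n), δγ²(n)) ∈ E × E one has δγ¹(n) = δγ²(n) for every n ∈ Z, then f_{γ₂} = f_{γ₁} + O(s^(r+1)) at every point of M × {0}. -/
/-!
The map `Φ n = ((γ₂ n).1, h n)` has surjective strict derivative at each point `n₀` of
`Z = h⁻¹(0)`, because `σ₂` parametrizes `Z` and `dh ≠ 0`. Hence `Φ` pushes `𝓝 n₀` onto
`𝓝 (m₀, 0)`, and estimates on `f₂ - f₁` near `(m₀, 0)` may be checked after composing with `Φ`.
There `f₂ (Φ n) = (γ₂ n).2` and `f₁ ((γ₁ n).1, h n) = (γ₁ n).2`, so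
`f₂ (Φ n) - f₁ (Φ n) = h^r δγ² - (f₁ ((γ₂ n).1, h n) - f₁ ((γ₁ n).1, h n))`.
Since `f₁ (m, 0) = m`, strict differentiability of `f₁` turns the bracket into
`h^r δγ¹ + o(h^r)`. Thus `f₂ - f₁ = s^r (δγ² - δγ¹)(n₀) + o(s^r)` (`graph_isLittleO`), which is
the first claim.

If the residual is symmetric, `g = f₂ - f₁` is `o(s^r)` at every point of `M × {0}`. Then all the
partial derivatives `∂ₛⁱ g`, `i ≤ r`, vanish on `M × {0}`, and as `g` is of class `C^(r+1)`, Taylor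
expansion in `s`, uniform in `m` (`taylor_partialS_isLittleO`), gives
`g = s^(r+1) ∂ₛ^(r+1) g (m₀, 0) / (r+1)! + o(s^(r+1))`, the second claim.
-/

open scoped Topology
open Asymptotics

/-- The partial derivative `∂ₛ g` of a function `g (m, s)` in its real variable. -/
noncomputable def partialS {E G : Type*} [NormedAddCommGroup E] [NormedSpace ℝ E]
    [NormedAddCommGroup G] [NormedSpace ℝ G] (g : E × ℝ → G) : E × ℝ → G :=
  fun p => fderiv ℝ g p (0, 1)

/-- An expansion `g = s^j c + o(s^j)` provides a factor `δ` with `g = s^j δ`, continuous at the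
base point. -/
lemma exists_factor {E G : Type*} [NormedAddCommGroup E]
    [NormedAddCommGroup G] [NormedSpace ℝ G] {g : E × ℝ → G} {j : ℕ} (hj : 1 ≤ j)
    {m₀ : E} {c : G}
    (H : (fun p : E × ℝ => g p - p.2 ^ j • c) =o[𝓝 (m₀, (0 : ℝ))] fun p => p.2 ^ j) :
    ∃ δ : E × ℝ → G, ContinuousAt δ (m₀, 0) ∧
      ∀ᶠ p in 𝓝 (m₀, (0 : ℝ)), g p = p.2 ^ j • δ p := by
  -- where `s = 0` the junk value `0⁻¹ = 0` makes `δ = c`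
  refine ⟨fun p => c + (p.2 ^ j)⁻¹ • (g p - p.2 ^ j • c), ?_, ?_⟩
  · have h1 := (tendsto_const_nhds (x := c)).add H.tendsto_inv_smul_nhds_zero
    have hj' : j ≠ 0 := by omega
    simpa [ContinuousAt, hj'] using h1
  · filter_upwards [H.bound one_pos] with p hp
    by_cases hs : p.2 ^ j = 0
    · simpa [hs] using hp
    · rw [smul_add, smul_inv_smul₀ hs]; abel

/-- Taylor expansion in `s`, uniform in `m`, for a function whose lower order `s`-derivatives
vanish on `s = 0`. -/
lemma taylor_partialS_isLittleO {E G : Type*} [NormedAddCommGroup E] [NormedSpace ℝ E]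
    [NormedAddCommGroup G] [NormedSpace ℝ G] (j : ℕ) :
    ∀ (g : E × ℝ → G) (m₀ : E), ContDiffAt ℝ j g (m₀, 0) →
      (∀ i < j, ∀ᶠ m in 𝓝 m₀, (partialS^[i] g) (m, 0) = 0) →
      (fun p : E × ℝ => g p - p.2 ^ j • ((j.factorial : ℝ)⁻¹ • (partialS^[j] g) (m₀, 0)))
        =o[𝓝 (m₀, (0 : ℝ))] fun p => p.2 ^ j := by
  induction j with
  | zero =>
    intro g m₀ hg _
    have h1 : Filter.Tendsto g (𝓝 (m₀, 0)) (𝓝 (g (m₀, 0))) := hg.continuousAt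
    simpa using h1.sub_const (g (m₀, 0))
  | succ j ih =>
    intro g m₀ hg hz
    have hD : ContDiffAt ℝ j (partialS g) (m₀, 0) :=
      (hg.fderiv_right (m := (j : WithTop ℕ∞)) (by push_cast; exact le_rfl)).clm_apply
        contDiffAt_const
    have IH := ih (partialS g) m₀ hD (fun i hi => by
      simpa [Function.iterate_succ_apply] using hz (i + 1) (by omega))
    rw [isLittleO_iff] at IH ⊢
    intro ε hε
    have hdiff : ∀ᶠ p in 𝓝 (m₀, (0 : ℝ)), DifferentiableAt ℝ g p := by
      have := hg.of_le (m := 1) (by exact_mod_cast Nat.le_add_left 1 j)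
      filter_upwards [this.eventually (by simp)] with p hp using hp.differentiableAt (by simp)
    have h0 : ∀ᶠ p : E × ℝ in 𝓝 (m₀, (0 : ℝ)), g (p.1, 0) = 0 :=
      (continuousAt_fst (p := (m₀, (0 : ℝ)))).eventually (hz 0 (by omega))
    obtain ⟨η, hη, hball⟩ := Metric.eventually_nhds_iff_ball.1 ((IH hε).and (hdiff.and h0))
    refine Metric.eventually_nhds_iff_ball.2 ⟨η, hη, ?_⟩
    rintro ⟨m, s⟩ hp
    set L := (partialS^[j + 1] g) (m₀, 0) with hL
    have hmem : ∀ t ∈ Metric.closedBall (0 : ℝ) |s|, (m, t) ∈ Metric.ball (m₀, (0 : ℝ)) η := by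
      intro t ht
      simp only [Metric.mem_ball, Prod.dist_eq, max_lt_iff, Metric.mem_closedBall,
        Real.dist_eq, sub_zero] at hp ht ⊢
      exact ⟨hp.1, ht.trans_lt hp.2⟩
    have key := (convex_closedBall (0 : ℝ) |s|).norm_image_sub_le_of_norm_hasDerivWithin_le
      (f := fun t => g (m, t) - t ^ (j + 1) • (((j + 1).factorial : ℝ)⁻¹ • L))
      (f' := fun t => partialS g (m, t) - t ^ j • ((j.factorial : ℝ)⁻¹ • L))
      (C := ε * |s| ^ j) (x := 0) (y := s) ?_ ?_ (by simp) (by simp)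
    · have hg0 : g (m, 0) = 0 := (hball _ hp).2.2
      simpa [hg0, pow_succ, mul_assoc] using key
    · intro t ht
      have hd := (hball _ (hmem t ht)).2.1.hasFDerivAt
      have h1 : HasDerivAt (fun t : ℝ => (m, t)) ((0 : E), (1 : ℝ)) t :=
        (hasDerivAt_const t m).prodMk (hasDerivAt_id t)
      have h2 := hd.comp_hasDerivAt t h1
      have h3 := (hasDerivAt_pow (j + 1) t).smul_const (((j + 1).factorial : ℝ)⁻¹ • L)
      have h4 := (h2.sub h3).hasDerivWithinAt (s := Metric.closedBall (0 : ℝ) |s|)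
      have hfac : (j.factorial : ℝ) ≠ 0 := by exact_mod_cast j.factorial_ne_zero
      have hcoef : t ^ j * (j.factorial : ℝ)⁻¹ =
          ((j + 1 : ℕ) : ℝ) * t ^ (j + 1 - 1) * ((j + 1).factorial : ℝ)⁻¹ := by
        rw [Nat.factorial_succ, Nat.add_sub_cancel]
        push_cast
        field_simp
      have hval : partialS g (m, t) - t ^ j • ((j.factorial : ℝ)⁻¹ • L) =
          fderiv ℝ g (m, t) (0, 1) - (((j + 1 : ℕ) : ℝ) * t ^ (j + 1 - 1)) •
            (((j + 1).factorial : ℝ)⁻¹ • L) := by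
        rw [smul_smul, smul_smul, hcoef, partialS]
      exact hval ▸ h4
    · intro t ht
      have := (hball _ (hmem t ht)).1
      rw [← Function.iterate_succ_apply] at this
      refine this.trans ?_
      simp only [norm_pow, Real.norm_eq_abs]
      have ht' : |t| ≤ |s| := by simpa using ht
      gcongr

/-- A `C^(r+1)` function which is `o(s^r)` at all points of `M × {0}` has an expansion
`s^(r+1) c + o(s^(r+1))` there. -/
lemma expansion_succ {E G : Type*} [NormedAddCommGroup E] [NormedSpace ℝ E]
    [NormedAddCommGroup G] [NormedSpace ℝ G] {M : Set E} (hM : IsOpen M) {g : E × ℝ → G} {r : ℕ}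
    (hg : ∀ m ∈ M, ContDiffAt ℝ (r + 1 : ℕ) g (m, 0))
    (ho : ∀ m ∈ M, g =o[𝓝 (m, (0 : ℝ))] fun p => p.2 ^ r) {m₀ : E} (hm₀ : m₀ ∈ M) :
    ∃ c : G, (fun p : E × ℝ => g p - p.2 ^ (r + 1) • c)
      =o[𝓝 (m₀, (0 : ℝ))] fun p => p.2 ^ (r + 1) := by
  have hz : ∀ i < r + 1, ∀ m ∈ M, (partialS^[i] g) (m, 0) = 0 := by
    intro i
    induction i using Nat.strong_induction_on with
    | _ i ih =>
      intro hi m hm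
      have h1 := taylor_partialS_isLittleO i g m ((hg m hm).of_le (by exact_mod_cast hi.le))
        (fun l hl => by
          filter_upwards [hM.mem_nhds hm] with m' hm' using ih l hl (by omega) m' hm')
      have h2 : (fun p : E × ℝ => p.2 ^ r) =O[𝓝 (m, (0 : ℝ))] fun p => p.2 ^ i := by
        have hsplit : (fun p : E × ℝ => p.2 ^ r) = fun p => p.2 ^ (r - i) * p.2 ^ i := by
          funext p; rw [← pow_add]; congr 1; omega
        rw [hsplit]
        have hb : (fun p : E × ℝ => p.2 ^ (r - i)) =O[𝓝 (m, (0 : ℝ))] fun _ => (1 : ℝ) :=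
          (ContinuousAt.tendsto (by fun_prop)).isBigO_one ℝ
        simpa using hb.mul (isBigO_refl (fun p : E × ℝ => p.2 ^ i) _)
      have h3 := ((ho m hm).trans_isBigO h2).sub h1
      simp only [sub_sub_cancel] at h3
      -- restrict to the line `{m} × ℝ`, punctured at `0`, and divide by `s ^ i`
      have hline : Filter.Tendsto (fun t : ℝ => (m, t)) (𝓝[≠] 0) (𝓝 (m, 0)) :=
        (ContinuousAt.tendsto (by fun_prop)).mono_left nhdsWithin_le_nhds
      have h4 := (h3.comp_tendsto hline).tendsto_inv_smul_nhds_zero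
      have h5 : Filter.Tendsto (fun _ : ℝ => (i.factorial : ℝ)⁻¹ • (partialS^[i] g) (m, 0))
          (𝓝[≠] 0) (𝓝 0) := by
        refine h4.congr' ?_
        filter_upwards [self_mem_nhdsWithin] with t ht
        simpa using inv_smul_smul₀ (pow_ne_zero i (show t ≠ 0 from ht)) _
      have h6 := tendsto_nhds_unique tendsto_const_nhds h5
      have : (i.factorial : ℝ)⁻¹ ≠ 0 := inv_ne_zero (by exact_mod_cast i.factorial_ne_zero)
      exact (smul_eq_zero.1 h6).resolve_left this
  exact ⟨_, taylor_partialS_isLittleO (r + 1) g m₀ (hg m₀ hm₀) fun i hi => by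
    filter_upwards [hM.mem_nhds hm₀] with m' hm' using hz i hi m' hm'⟩

/-- `n ↦ ((γ n).1, h n)` maps neighborhoods of a regular point `σ m₀` onto neighborhoods of
`(m₀, 0)`, when `σ` is a section of `γ` with values in the zero set of `h`. -/
lemma map_nhds_graph {E F : Type*}
    [NormedAddCommGroup E] [NormedSpace ℝ E] [CompleteSpace E]
    [NormedAddCommGroup F] [NormedSpace ℝ F] [CompleteSpace F]
    {h : F → ℝ} {a : F → E} {σ : E → F} {m₀ : E}
    (hh : ContDiffAt ℝ 1 h (σ m₀)) (ha : ContDiffAt ℝ 1 a (σ m₀))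
    (hσ : DifferentiableAt ℝ σ m₀) (hreg : fderiv ℝ h (σ m₀) ≠ 0)
    (haσ : ∀ᶠ m in 𝓝 m₀, a (σ m) = m) (hhσ : ∀ᶠ m in 𝓝 m₀, h (σ m) = 0) :
    Filter.map (fun n => (a n, h n)) (𝓝 (σ m₀)) = 𝓝 (m₀, 0) := by
  have hA := ha.hasStrictFDerivAt (by simp)
  have hH := hh.hasStrictFDerivAt (by simp)
  have hS := hσ.hasFDerivAt
  have e1 : (fderiv ℝ a (σ m₀)).comp (fderiv ℝ σ m₀) = ContinuousLinearMap.id ℝ E :=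
    (hA.hasFDerivAt.comp m₀ hS).unique ((hasFDerivAt_id m₀).congr_of_eventuallyEq haσ)
  have e2 : (fderiv ℝ h (σ m₀)).comp (fderiv ℝ σ m₀) = 0 :=
    (hH.hasFDerivAt.comp m₀ hS).unique ((hasFDerivAt_const (0 : ℝ) m₀).congr_of_eventuallyEq hhσ)
  have hP := hA.prodMk hH
  have hsurj : ((fderiv ℝ a (σ m₀)).prod (fderiv ℝ h (σ m₀))).range = ⊤ := by
    rw [LinearMap.range_eq_top]
    obtain ⟨w, hw⟩ : ∃ w, fderiv ℝ h (σ m₀) w ≠ 0 := by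
      by_contra! hcon
      exact hreg (ContinuousLinearMap.ext hcon)
    rintro ⟨v, t⟩
    -- a multiple `u` of `w` hits `t`; a vector tangent to the zero set corrects the `E`-component
    set u := (t / fderiv ℝ h (σ m₀) w) • w
    refine ⟨u + fderiv ℝ σ m₀ (v - fderiv ℝ a (σ m₀) u), ?_⟩
    have e1' : ∀ x, fderiv ℝ a (σ m₀) (fderiv ℝ σ m₀ x) = x := fun x => DFunLike.congr_fun e1 x
    have e2' : ∀ x, fderiv ℝ h (σ m₀) (fderiv ℝ σ m₀ x) = 0 := fun x => DFunLike.congr_fun e2 x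
    have hu : fderiv ℝ h (σ m₀) u = t := by simp [u, hw]
    refine Prod.ext ?_ ?_
    · change fderiv ℝ a (σ m₀) _ = v
      rw [map_add, e1', add_sub_cancel]
    · change fderiv ℝ h (σ m₀) _ = t
      rw [map_add, e2', hu, add_zero]
  have := hP.map_nhds_eq_of_surj hsurj
  rw [this, haσ.self_of_nhds, hhσ.self_of_nhds]

/-- The leading order expansion `f₂ - f₁ = s^r (δγ² - δγ¹) + o(s^r)` at `(m₀, 0)`. The maps `f₁`
and `f₂` enter only through their values along the graphs `γ₁` and `γ₂`. -/
lemma graph_isLittleO {E F : Type*}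
    [NormedAddCommGroup E] [NormedSpace ℝ E] [NormedAddCommGroup F]
    {h : F → ℝ} {γ₁ γ₂ : F → E × E} {f₁ f₂ : E × ℝ → E} {n₀ : F} {m₀ : E} {r : ℕ}
    (hmap : Filter.map (fun n => ((γ₂ n).1, h n)) (𝓝 n₀) = 𝓝 (m₀, 0))
    (hlim : Filter.Tendsto (fun n => ((γ₁ n).1, h n)) (𝓝 n₀) (𝓝 (m₀, 0)))
    (hf₁ : ContDiffAt ℝ 1 f₁ (m₀, 0)) (hf₁0 : ∀ᶠ m in 𝓝 m₀, f₁ (m, 0) = m)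
    (hg₁ : ∀ᶠ n in 𝓝 n₀, f₁ ((γ₁ n).1, h n) = (γ₁ n).2)
    (hg₂ : ∀ᶠ n in 𝓝 n₀, f₂ ((γ₂ n).1, h n) = (γ₂ n).2)
    {δ : F → E × E} (hδ : ContinuousAt δ n₀)
    (hc : ∀ᶠ n in 𝓝 n₀, γ₂ n - γ₁ n = h n ^ r • δ n) :
    (fun p : E × ℝ => (f₂ p - f₁ p) - p.2 ^ r • ((δ n₀).2 - (δ n₀).1))
      =o[𝓝 (m₀, (0 : ℝ))] fun p => p.2 ^ r := by
  have hS := hf₁.hasStrictFDerivAt (by simp)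
  set A := fderiv ℝ f₁ (m₀, 0)
  have hA : ∀ v, A (v, 0) = v := by
    have h1 : HasFDerivAt (fun m : E => (m, (0 : ℝ))) (ContinuousLinearMap.inl ℝ E ℝ) m₀ :=
      (hasFDerivAt_id m₀).prodMk (hasFDerivAt_const (0 : ℝ) m₀)
    have h2 := (HasFDerivAt.comp m₀ hS.hasFDerivAt h1).unique
      ((hasFDerivAt_id m₀).congr_of_eventuallyEq hf₁0)
    intro v
    simpa using DFunLike.congr_fun h2 v
  have hlim₂ : Filter.Tendsto (fun n => ((γ₂ n).1, h n)) (𝓝 n₀) (𝓝 (m₀, 0)) := hmap.le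
  rw [← hmap, isLittleO_map]
  have o1 : ∀ {q : F → E}, ContinuousAt q n₀ →
      (fun n => h n ^ r • (q n - q n₀)) =o[𝓝 n₀] fun n => h n ^ r := by
    intro q hq
    have hq' : (fun n => q n - q n₀) =o[𝓝 n₀] fun _ => (1 : ℝ) := by
      rw [isLittleO_one_iff]
      simpa using hq.tendsto.sub_const (q n₀)
    simpa using (isBigO_refl (fun n => h n ^ r) (𝓝 n₀)).smul_isLittleO hq'
  have o2 := hS.isLittleO.comp_tendsto (hlim₂.prodMk_nhds hlim)
  have o3 : (fun n => (((γ₂ n).1, h n) - ((γ₁ n).1, h n) : E × ℝ)) =O[𝓝 n₀]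
      fun n => h n ^ r := by
    have hb : (fun n => (δ n).1) =O[𝓝 n₀] fun _ => (1 : ℝ) :=
      (hδ.fst.tendsto).isBigO_one ℝ
    have hb' := (isBigO_refl (fun n => h n ^ r) (𝓝 n₀)).smul hb
    refine (IsBigO.of_bound 1 ?_).trans
      (hb'.congr_right (g₂ := fun n => h n ^ r) (by simp))
    filter_upwards [hc] with n hn
    have : (γ₂ n).1 - (γ₁ n).1 = h n ^ r • (δ n).1 := congrArg Prod.fst hn
    simp [Prod.norm_def, this]
  have o4 := ((o1 hδ.snd).sub (o1 hδ.fst)).sub (o2.trans_isBigO o3)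
  refine o4.congr' ?_ Filter.EventuallyEq.rfl
  filter_upwards [hc, hg₁, hg₂] with n hn h1 h2
  have e1 : (γ₂ n).1 - (γ₁ n).1 = h n ^ r • (δ n).1 := congrArg Prod.fst hn
  have e2 : (γ₂ n).2 - (γ₁ n).2 = h n ^ r • (δ n).2 := congrArg Prod.snd hn
  simp only [Function.comp_apply, Prod.mk_sub_mk, sub_self, hA, h1, h2, e1]
  rw [eq_add_of_sub_eq e2]
  simp only [smul_sub]
  abel

/-- Contact of mappings constructed from graphs: if `γ₂ = γ₁ + O(h^r)` along the zero
level set `Z` of `h`, then the associated maps satisfy `f_{γ₂} = f_{γ₁} + O(s^r)` along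
`M × {0}`; if moreover a residual witness `ρ = (δγ¹, δγ²)` for `(γ₂, γ₁)` is symmetric
(`δγ¹ = δγ²` on `Z`), then `f_{γ₂} = f_{γ₁} + O(s^(r+1))` along `M × {0}`. -/
theorem mapping_from_graph_contact
    {E F : Type*}
    [NormedAddCommGroup E] [NormedSpace ℝ E] [CompleteSpace E]
    [NormedAddCommGroup F] [NormedSpace ℝ F] [CompleteSpace F]
    (M : Set E) (hMopen : IsOpen M) (N : Set F) (hNopen : IsOpen N)
    (r k : ℕ) (hr : 1 ≤ r) (hk : r + 1 ≤ k)
    (h : F → ℝ) (hh : ContDiffOn ℝ k h N)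
    (hreg : ∀ n ∈ N, h n = 0 → fderiv ℝ h n ≠ 0)
    (U : Set F) (hUopen : IsOpen U)
    (hZU : {n ∈ N | h n = 0} ⊆ U) (hUN : U ⊆ N)
    (γ₁ γ₂ : F → E × E)
    (hγ₁ : ContDiffOn ℝ k γ₁ U) (hγ₂ : ContDiffOn ℝ k γ₂ U)
    (hγ₁map : Set.MapsTo γ₁ U (M ×ˢ M)) (hγ₂map : Set.MapsTo γ₂ U (M ×ˢ M))
    (σ₁ σ₂ : E → F)
    (hσ₁ : ContDiffOn ℝ k σ₁ M) (hσ₂ : ContDiffOn ℝ k σ₂ M)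
    (hσ₁im : σ₁ '' M = {n ∈ N | h n = 0}) (hσ₂im : σ₂ '' M = {n ∈ N | h n = 0})
    (hγσ₁ : ∀ m ∈ M, γ₁ (σ₁ m) = (m, m)) (hγσ₂ : ∀ m ∈ M, γ₂ (σ₂ m) = (m, m))
    (hσγ₁ : ∀ n ∈ N, h n = 0 → σ₁ (γ₁ n).1 = n)
    (hσγ₂ : ∀ n ∈ N, h n = 0 → σ₂ (γ₂ n).1 = n)
    -- a common neighborhood `U'` of `Z` used to define both `f_{γ₁}` and `f_{γ₂}`
    (U' : Set F) (hU'open : IsOpen U') (hZU' : {n ∈ N | h n = 0} ⊆ U') (hU'U : U' ⊆ U)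
    -- the common domain `V` of `f_{γ₁}` and `f_{γ₂}`
    (V : Set (E × ℝ)) (hVopen : IsOpen V) (hMV : ∀ m ∈ M, (m, (0 : ℝ)) ∈ V)
    (hVM : ∀ p ∈ V, p.1 ∈ M)
    (f₁ f₂ : E × ℝ → E)
    (hf₁ : ContDiffOn ℝ k f₁ V) (hf₂ : ContDiffOn ℝ k f₂ V)
    (hf₁def : ∀ p ∈ V, f₁ p ∈ M ∧ (∃ n ∈ U', γ₁ n = (p.1, f₁ p) ∧ h n = p.2) ∧
      ∀ m' ∈ M, (∃ n ∈ U', γ₁ n = (p.1, m') ∧ h n = p.2) → m' = f₁ p)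
    (hf₂def : ∀ p ∈ V, f₂ p ∈ M ∧ (∃ n ∈ U', γ₂ n = (p.1, f₂ p) ∧ h n = p.2) ∧
      ∀ m' ∈ M, (∃ n ∈ U', γ₂ n = (p.1, m') ∧ h n = p.2) → m' = f₂ p)
    -- `γ₂ = γ₁ + O(h^r)` at every point of `Z`
    (hcontact : ∀ n₀ ∈ N, h n₀ = 0 → ∃ δ : F → E × E, ContinuousAt δ n₀ ∧
      ∀ᶠ n in 𝓝 n₀, γ₂ n - γ₁ n = h n ^ r • δ n) :
    (∀ m₀ ∈ M, ∃ δ : E × ℝ → E, ContinuousAt δ (m₀, 0) ∧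
      ∀ᶠ p in 𝓝 (m₀, (0 : ℝ)), f₂ p - f₁ p = p.2 ^ r • δ p) ∧
    (∀ ρ : F → E × E,
      (∀ n₀ ∈ N, h n₀ = 0 → ContinuousAt ρ n₀ ∧
        ∀ᶠ n in 𝓝 n₀, γ₂ n - γ₁ n = h n ^ r • ρ n) →
      (∀ n ∈ N, h n = 0 → (ρ n).1 = (ρ n).2) →
      ∀ m₀ ∈ M, ∃ δ : E × ℝ → E, ContinuousAt δ (m₀, 0) ∧
        ∀ᶠ p in 𝓝 (m₀, (0 : ℝ)), f₂ p - f₁ p = p.2 ^ (r + 1) • δ p) := by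
  have hk1 : (1 : WithTop ℕ∞) ≤ k := by exact_mod_cast (by omega : 1 ≤ k)
  have hr0 : r ≠ 0 := by omega
  have hZ₂ : ∀ m ∈ M, σ₂ m ∈ N ∧ h (σ₂ m) = 0 := fun m hm => by
    have : σ₂ m ∈ σ₂ '' M := ⟨m, hm, rfl⟩
    rwa [hσ₂im] at this
  -- `γ₁` and `γ₂` agree on `Z`, so that `σ₂` is a section of `γ₁` too
  have hγσ : ∀ m ∈ M, γ₁ (σ₂ m) = (m, m) := fun m hm => by
    obtain ⟨δ, -, hδ⟩ := hcontact _ (hZ₂ m hm).1 (hZ₂ m hm).2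
    have := hδ.self_of_nhds
    rw [(hZ₂ m hm).2, zero_pow hr0, zero_smul, hγσ₂ m hm] at this
    exact (sub_eq_zero.1 this).symm
  have hf0 : ∀ m ∈ M, f₁ (m, 0) = m := fun m hm =>
    ((hf₁def _ (hMV m hm)).2.2 m hm
      ⟨σ₂ m, hZU' (hZ₂ m hm), hγσ m hm, (hZ₂ m hm).2⟩).symm
  have main : ∀ m₀ ∈ M, ∀ δ : F → E × E, ContinuousAt δ (σ₂ m₀) →
      (∀ᶠ n in 𝓝 (σ₂ m₀), γ₂ n - γ₁ n = h n ^ r • δ n) →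
      (fun p : E × ℝ => (f₂ p - f₁ p) - p.2 ^ r • ((δ (σ₂ m₀)).2 - (δ (σ₂ m₀)).1))
        =o[𝓝 (m₀, (0 : ℝ))] fun p => p.2 ^ r := by
    intro m₀ hm₀ δ hδ hc
    obtain ⟨hn₀, hhn₀⟩ := hZ₂ m₀ hm₀
    have hM' := hMopen.mem_nhds hm₀
    have hU := hUopen.mem_nhds (hZU ⟨hn₀, hhn₀⟩)
    have hU' := hU'open.mem_nhds (hZU' ⟨hn₀, hhn₀⟩)
    have hV := hVopen.mem_nhds (hMV m₀ hm₀)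
    have ch := (hh.contDiffAt (hNopen.mem_nhds hn₀)).of_le hk1
    have c1 := (hγ₁.contDiffAt hU).of_le hk1
    have c2 := (hγ₂.contDiffAt hU).of_le hk1
    have hmap := map_nhds_graph ch c2.fst
      (((hσ₂.contDiffAt hM').of_le hk1).differentiableAt (by simp)) (hreg _ hn₀ hhn₀)
      (by filter_upwards [hM'] with m hm using by rw [hγσ₂ m hm])
      (by filter_upwards [hM'] with m hm using (hZ₂ m hm).2)
    have hlim : Filter.Tendsto (fun n => ((γ₁ n).1, h n)) (𝓝 (σ₂ m₀)) (𝓝 (m₀, 0)) := by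
      have := (c1.fst.continuousAt.prodMk ch.continuousAt).tendsto
      rwa [hγσ m₀ hm₀, hhn₀] at this
    refine graph_isLittleO hmap hlim ((hf₁.contDiffAt hV).of_le hk1)
      (by filter_upwards [hM'] with m hm using hf0 m hm) ?_ ?_ hδ hc
    · filter_upwards [hlim hV, hU'] with n hn hnU
      exact ((hf₁def _ hn).2.2 _ (hγ₁map (hU'U hnU)).2 ⟨n, hnU, rfl, rfl⟩).symm
    · filter_upwards [hmap.le hV, hU'] with n hn hnU
      exact ((hf₂def _ hn).2.2 _ (hγ₂map (hU'U hnU)).2 ⟨n, hnU, rfl, rfl⟩).symm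
  constructor
  · intro m₀ hm₀
    obtain ⟨δ, hδ, hc⟩ := hcontact _ (hZ₂ m₀ hm₀).1 (hZ₂ m₀ hm₀).2
    exact exists_factor hr (main m₀ hm₀ δ hδ hc)
  · intro ρ hρ hsymm m₀ hm₀
    have ho : ∀ m ∈ M, (fun p => f₂ p - f₁ p) =o[𝓝 (m, (0 : ℝ))] fun p => p.2 ^ r := by
      intro m hm
      obtain ⟨hn, hhn⟩ := hZ₂ m hm
      have := main m hm ρ (hρ _ hn hhn).1 (hρ _ hn hhn).2
      simpa [hsymm _ hn hhn] using this
    have hg : ∀ m ∈ M, ContDiffAt ℝ (r + 1 : ℕ) (fun p => f₂ p - f₁ p) (m, 0) := by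
      intro m hm
      have hV := hVopen.mem_nhds (hMV m hm)
      exact ((hf₂.contDiffAt hV).sub (hf₁.contDiffAt hV)).of_le (by exact_mod_cast hk)
    obtain ⟨c, hc⟩ := expansion_succ hMopen hg ho hm₀
    exact exists_factor (by omega) hc
end

section
/- Let D, P, F be Banach spaces and set E = D × P. Let U ⊆ E be open, h_U : U → ℝ C^∞ with 0 a regular value, V ⊆ F open, h_V : V → ℝ, and r ≥ 1. For i = 1, 2, let α^i : U → E* (the continuous dual), Δᵢ : U → L(D, P) (continuous linear maps), and gᵢ : U → V be C^k with k ≥ r, with h_V ∘ gᵢ = h_U. Define Fᵢ : U → D* × F by Fᵢ(x) = (α^i(x) ∘ (ι_D + Δᵢ(x)), gᵢ(x)), where ι_D : D → E is the inclusion d ↦ (d, 0) and Δᵢ(x) is viewed as a map D → E via p ↦ (0, p). Suppose each Fᵢ is a C^k diffeomorphism of U onto an open subset of D* × F, and let γᵢ be the C^k map, defined on an open set V' ⊆ V, determined by Fᵢ(γᵢ(y)) = (0, y). If α^2 = α^1 + O(h_U^r), Δ₂ = Δ₁ + O(h_U^r), and g₂ = g₁ + O(h_U^r) at every point of h_U⁻¹(0),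 then γ₂ = γ₁ + O(h_V^r) at every point of h_V⁻¹(0) ∩ V'. -/
/-!
Let `y₀` be a zero of `h_V`. Since `h_V ∘ gᵢ = h_U`, both `γᵢ y₀` are zeros of `h_U`; there the
data agree (as `r ≥ 1`), so `F₁ = F₂`, and injectivity of `F₂` gives a common value
`x₀ = γ₁ y₀ = γ₂ y₀`.

The contact of the data gives `F₂ = F₁ + h_U^r • δF` near `x₀`, with `δF` continuous at `x₀`.
Evaluating at `γ₂ y`, where `F₂ (γ₂ y) = (0, y)` and `h_U (γ₂ y) = h_V y`, yields
`F₁ (γ₂ y) = (0, y) - h_V y ^ r • δF (γ₂ y)`, while `F₁ (γ₁ y) = (0, y)`. Applying the inverse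
`G₁` of `F₁`, which is strictly differentiable at `(0, y₀)`, transfers the contact to
`γ₂ - γ₁` (`HasStrictFDerivAt.exists_smul_of_sub_eq_smul`).
-/

open Filter Asymptotics
open scoped Topology ContDiff

/-- A strictly differentiable map preserves contact: if `b - a = t • v` with `v` continuous at
`y₀` and `t y₀ = 0`, then `G ∘ b - G ∘ a = t • δ` with `δ` continuous at `y₀`. The scalar
function `t` need not be continuous. -/
theorem HasStrictFDerivAt.exists_smul_of_sub_eq_smul
    {Y X W : Type*} [TopologicalSpace Y]
    [NormedAddCommGroup X] [NormedSpace ℝ X] [NormedAddCommGroup W] [NormedSpace ℝ W]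
    {G : W → X} {A : W →L[ℝ] X} {w₀ : W} (hG : HasStrictFDerivAt G A w₀)
    {y₀ : Y} {a b v : Y → W} {t : Y → ℝ}
    (ha : Tendsto a (𝓝 y₀) (𝓝 w₀)) (hb : Tendsto b (𝓝 y₀) (𝓝 w₀))
    (hv : ContinuousAt v y₀) (hab : ∀ᶠ y in 𝓝 y₀, b y - a y = t y • v y)
    (ht : t y₀ = 0) :
    ∃ δ : Y → X, ContinuousAt δ y₀ ∧ ∀ᶠ y in 𝓝 y₀, G (b y) - G (a y) = t y • δ y := by
  classical
  -- Where `t` vanishes, `b = a`, and `A (v y)` is the value that keeps `δ` continuous.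
  let δ : Y → X := fun y ↦ if t y = 0 then A (v y) else (t y)⁻¹ • (G (b y) - G (a y))
  refine ⟨δ, ?_, ?_⟩
  · have h1 : (fun y ↦ G (b y) - G (a y) - A (b y - a y)) =o[𝓝 y₀] fun y ↦ b y - a y :=
      hG.isLittleO.comp_tendsto (hb.prodMk_nhds ha)
    -- Dividing the strict differentiability estimate by `t`.
    have h2 : (fun y ↦ δ y - A (v y)) =o[𝓝 y₀] v := by
      rw [isLittleO_iff] at h1 ⊢
      intro c hc
      filter_upwards [h1 hc, hab] with y hy hy'
      by_cases h0 : t y = 0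
      · simp only [δ, h0, if_true, sub_self, norm_zero]
        positivity
      · have e : G (b y) - G (a y) - A (b y - a y) = t y • (δ y - A (v y)) := by
          simp only [δ, h0, if_false, hy', map_smul, smul_sub, smul_inv_smul₀ h0]
        rw [e, hy', norm_smul, norm_smul, mul_left_comm] at hy
        exact le_of_mul_le_mul_left hy (norm_pos_iff.2 h0)
    have h3 : Tendsto (fun y ↦ δ y - A (v y)) (𝓝 y₀) (𝓝 0) :=
      (isLittleO_one_iff ℝ).1 (h2.trans_isBigO (hv.tendsto.isBigO_one ℝ))
    have h4 : Tendsto (fun y ↦ A (v y)) (𝓝 y₀) (𝓝 (A (v y₀))) :=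
      (A.continuous.tendsto _).comp hv
    have h5 := h3.add h4
    simp only [sub_add_cancel, zero_add] at h5
    simpa [ContinuousAt, δ, ht] using h5
  · filter_upwards [hab] with y hy
    by_cases h0 : t y = 0
    · rw [h0, zero_smul, sub_eq_zero] at hy
      simp [h0, hy]
    · simp only [δ, h0, if_false, smul_inv_smul₀ h0]

/-- Solutions of nondegenerate skew critical problems have the same contact as their
data (local chart form): with `E = D × P`, distributions given as graphs of
`Δᵢ : U → L(D, P)`, one-forms `αⁱ : U → E*`, constraints `gᵢ : U → F` with
`h_V ∘ gᵢ = h_U`, skew critical equations `Fᵢ(x) = (αⁱ(x) ∘ (ι_D + Δᵢ(x)), gᵢ(x)) = (0, y)`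
with `Fᵢ` a `C^k` diffeomorphism onto an open set, and solution maps `γᵢ` with
`Fᵢ(γᵢ(y)) = (0, y)`: if `α² = α¹ + O(h_U^r)`, `Δ₂ = Δ₁ + O(h_U^r)` and
`g₂ = g₁ + O(h_U^r)` at every zero of `h_U`, then `γ₂ = γ₁ + O(h_V^r)` at every zero
of `h_V` in the domain of the `γᵢ`. -/
theorem skew_critical_solutions_contact
    {D P F : Type*}
    [NormedAddCommGroup D] [NormedSpace ℝ D] [CompleteSpace D]
    [NormedAddCommGroup P] [NormedSpace ℝ P] [CompleteSpace P]
    [NormedAddCommGroup F] [NormedSpace ℝ F] [CompleteSpace F]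
    (U : Set (D × P)) (hUopen : IsOpen U)
    (hU : D × P → ℝ) (hUsm : ContDiffOn ℝ ∞ hU U)
    (hUreg : ∀ x ∈ U, hU x = 0 → fderiv ℝ hU x ≠ 0)
    (V : Set F) (hVopen : IsOpen V) (hV : F → ℝ)
    (r k : ℕ) (hr : 1 ≤ r) (hkr : r ≤ k)
    (α₁ α₂ : D × P → ((D × P) →L[ℝ] ℝ))
    (Δ₁ Δ₂ : D × P → (D →L[ℝ] P))
    (g₁ g₂ : D × P → F)
    (hα₁ : ContDiffOn ℝ k α₁ U) (hα₂ : ContDiffOn ℝ k α₂ U)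
    (hΔ₁ : ContDiffOn ℝ k Δ₁ U) (hΔ₂ : ContDiffOn ℝ k Δ₂ U)
    (hg₁ : ContDiffOn ℝ k g₁ U) (hg₂ : ContDiffOn ℝ k g₂ U)
    (hg₁map : Set.MapsTo g₁ U V) (hg₂map : Set.MapsTo g₂ U V)
    (hcompat₁ : ∀ x ∈ U, hV (g₁ x) = hU x) (hcompat₂ : ∀ x ∈ U, hV (g₂ x) = hU x)
    (F₁ F₂ : D × P → (D →L[ℝ] ℝ) × F)
    (hF₁def : ∀ x, F₁ x =
      ((α₁ x).comp ((ContinuousLinearMap.id ℝ D).prod (Δ₁ x)), g₁ x))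
    (hF₂def : ∀ x, F₂ x =
      ((α₂ x).comp ((ContinuousLinearMap.id ℝ D).prod (Δ₂ x)), g₂ x))
    -- each `Fᵢ` is a `C^k` diffeomorphism of `U` onto an open subset, with inverse `Gᵢ`
    (G₁ G₂ : (D →L[ℝ] ℝ) × F → D × P)
    (hW₁open : IsOpen (F₁ '' U)) (hW₂open : IsOpen (F₂ '' U))
    (hG₁ : ContDiffOn ℝ k G₁ (F₁ '' U)) (hG₂ : ContDiffOn ℝ k G₂ (F₂ '' U))
    (hG₁left : ∀ x ∈ U, G₁ (F₁ x) = x) (hG₁right : ∀ w ∈ F₁ '' U, F₁ (G₁ w) = w)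
    (hG₂left : ∀ x ∈ U, G₂ (F₂ x) = x) (hG₂right : ∀ w ∈ F₂ '' U, F₂ (G₂ w) = w)
    -- the solution maps `γᵢ`, defined on an open set `V' ⊆ V`
    (V' : Set F) (hV'open : IsOpen V') (hV'V : V' ⊆ V)
    (γ₁ γ₂ : F → D × P)
    (hγ₁ : ContDiffOn ℝ k γ₁ V') (hγ₂ : ContDiffOn ℝ k γ₂ V')
    (hγ₁sol : ∀ y ∈ V', γ₁ y ∈ U ∧ F₁ (γ₁ y) = (0, y))
    (hγ₂sol : ∀ y ∈ V', γ₂ y ∈ U ∧ F₂ (γ₂ y) = (0, y))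
    -- contact of the data at every point of the zero level set of `h_U`
    (hαcontact : ∀ x₀ ∈ U, hU x₀ = 0 →
      ∃ δα : D × P → ((D × P) →L[ℝ] ℝ), ContinuousAt δα x₀ ∧
        ∀ᶠ x in 𝓝 x₀, α₂ x - α₁ x = hU x ^ r • δα x)
    (hΔcontact : ∀ x₀ ∈ U, hU x₀ = 0 →
      ∃ δΔ : D × P → (D →L[ℝ] P), ContinuousAt δΔ x₀ ∧
        ∀ᶠ x in 𝓝 x₀, Δ₂ x - Δ₁ x = hU x ^ r • δΔ x)
    (hgcontact : ∀ x₀ ∈ U, hU x₀ = 0 →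
      ∃ δg : D × P → F, ContinuousAt δg x₀ ∧
        ∀ᶠ x in 𝓝 x₀, g₂ x - g₁ x = hU x ^ r • δg x) :
    ∀ y₀ ∈ V', hV y₀ = 0 →
      ∃ δγ : F → D × P, ContinuousAt δγ y₀ ∧
        ∀ᶠ y in 𝓝 y₀, γ₂ y - γ₁ y = hV y ^ r • δγ y := by
  intro y₀ hy₀ hVy₀
  have hV'n : V' ∈ 𝓝 y₀ := hV'open.mem_nhds hy₀
  have hk1 : (1 : WithTop ℕ∞) ≤ (k : WithTop ℕ∞) := by exact_mod_cast hr.trans hkr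
  have hk0 : (k : WithTop ℕ∞) ≠ 0 := (zero_lt_one.trans_le hk1).ne'
  have hUγ₂ : ∀ y ∈ V', hU (γ₂ y) = hV y := fun y hy ↦ by
    have h := (hγ₂sol y hy).2
    rw [hF₂def] at h
    rw [← hcompat₂ _ (hγ₂sol y hy).1, (Prod.mk.inj h).2]
  have hUγ₁ : hU (γ₁ y₀) = 0 := by
    have h := (hγ₁sol y₀ hy₀).2
    rw [hF₁def] at h
    rw [← hcompat₁ _ (hγ₁sol y₀ hy₀).1, (Prod.mk.inj h).2, hVy₀]
  have hF₂F₁ : ∀ x ∈ U, hU x = 0 → F₂ x = F₁ x := by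
    intro x hx hx0
    obtain ⟨_, -, h1⟩ := hαcontact x hx hx0
    obtain ⟨_, -, h2⟩ := hΔcontact x hx hx0
    obtain ⟨_, -, h3⟩ := hgcontact x hx hx0
    have h1 := h1.self_of_nhds
    have h2 := h2.self_of_nhds
    have h3 := h3.self_of_nhds
    rw [hx0, zero_pow (by omega), zero_smul, sub_eq_zero] at h1 h2 h3
    rw [hF₁def, hF₂def, h1, h2, h3]
  have hx₀eq : γ₁ y₀ = γ₂ y₀ := by
    rw [← hG₂left _ (hγ₁sol y₀ hy₀).1, hF₂F₁ _ (hγ₁sol y₀ hy₀).1 hUγ₁, (hγ₁sol y₀ hy₀).2,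
      ← (hγ₂sol y₀ hy₀).2, hG₂left _ (hγ₂sol y₀ hy₀).1]
  obtain ⟨hx₀U, hx₀sol⟩ := hγ₂sol y₀ hy₀
  have hx₀0 : hU (γ₂ y₀) = 0 := (hUγ₂ y₀ hy₀).trans hVy₀
  have hF₁x₀ : F₁ (γ₂ y₀) = (0, y₀) := by rw [← hF₂F₁ _ hx₀U hx₀0, hx₀sol]
  have hUn : U ∈ 𝓝 (γ₂ y₀) := hUopen.mem_nhds hx₀U
  have hγ₂c : ContinuousAt γ₂ y₀ := hγ₂.continuousOn.continuousAt hV'n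
  have cα₁ : ContinuousAt α₁ (γ₂ y₀) := hα₁.continuousOn.continuousAt hUn
  have cΔ₁ : ContinuousAt Δ₁ (γ₂ y₀) := hΔ₁.continuousOn.continuousAt hUn
  have cΔ₂ : ContinuousAt Δ₂ (γ₂ y₀) := hΔ₂.continuousOn.continuousAt hUn
  have cg₁ : ContinuousAt g₁ (γ₂ y₀) := hg₁.continuousOn.continuousAt hUn
  -- Writing the graph map this way exposes its continuity in `T`.
  have hprod : ∀ T : D →L[ℝ] P, (ContinuousLinearMap.id ℝ D).prod T =
      ContinuousLinearMap.inl ℝ D P + (ContinuousLinearMap.inr ℝ D P).comp T := by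
    intro T; ext x <;> simp
  have cF₁ : ContinuousAt F₁ (γ₂ y₀) := by
    rw [funext hF₁def]
    simp only [hprod]
    exact (cα₁.clm_comp (continuousAt_const.add (continuousAt_const.clm_comp cΔ₁))).prodMk cg₁
  obtain ⟨δα, cδα, eα⟩ := hαcontact _ hx₀U hx₀0
  obtain ⟨δΔ, cδΔ, eΔ⟩ := hΔcontact _ hx₀U hx₀0
  obtain ⟨δg, cδg, eg⟩ := hgcontact _ hx₀U hx₀0
  -- The remainder `δF`, from the product rule applied to `α ∘ (ι_D + Δ)`.
  let δF : D × P → (D →L[ℝ] ℝ) × F := fun x ↦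
    ((δα x).comp (ContinuousLinearMap.inl ℝ D P + (ContinuousLinearMap.inr ℝ D P).comp (Δ₂ x)) +
      (α₁ x).comp ((ContinuousLinearMap.inr ℝ D P).comp (δΔ x)), δg x)
  have cδF : ContinuousAt δF (γ₂ y₀) :=
    ((cδα.clm_comp (continuousAt_const.add (continuousAt_const.clm_comp cΔ₂))).add
      (cα₁.clm_comp (continuousAt_const.clm_comp cδΔ))).prodMk cδg
  have eF : ∀ᶠ x in 𝓝 (γ₂ y₀), F₂ x - F₁ x = hU x ^ r • δF x := by
    filter_upwards [eα, eΔ, eg] with x h1 h2 h3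
    rw [sub_eq_iff_eq_add] at h1 h2
    rw [hF₁def, hF₂def]
    refine Prod.ext ?_ h3
    simp only [δF, hprod, Prod.fst_sub, Prod.smul_fst]
    rw [h1]
    ext d
    have h2d : Δ₂ x d = hU x ^ r • δΔ x d + Δ₁ x d := by rw [h2]; simp
    have h2i : ((0 : D), Δ₂ x d) = hU x ^ r • ((0 : D), δΔ x d) + (0, Δ₁ x d) := by
      rw [h2d]; simp
    have h4 : α₁ x (0, Δ₂ x d) = hU x ^ r * α₁ x (0, δΔ x d) + α₁ x (0, Δ₁ x d) := by
      rw [h2i, map_add, map_smul, smul_eq_mul]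
    simp only [sub_apply, ContinuousLinearMap.comp_apply,
      add_apply, smul_apply, map_add,
      ContinuousLinearMap.inl_apply, ContinuousLinearMap.inr_apply, smul_eq_mul, h4]
    ring
  have hW₁n : F₁ '' U ∈ 𝓝 ((0 : D →L[ℝ] ℝ), y₀) :=
    hW₁open.mem_nhds ⟨_, hx₀U, hF₁x₀⟩
  have hGs : HasStrictFDerivAt G₁ (fderiv ℝ G₁ (0, y₀)) ((0 : D →L[ℝ] ℝ), y₀) :=
    (hG₁.contDiffAt hW₁n).hasStrictFDerivAt hk0
  have hb : Tendsto (fun y ↦ F₁ (γ₂ y)) (𝓝 y₀) (𝓝 (0, y₀)) := by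
    rw [← hF₁x₀]
    exact cF₁.tendsto.comp hγ₂c
  have ha : Tendsto (fun y : F ↦ ((0 : D →L[ℝ] ℝ), y)) (𝓝 y₀) (𝓝 (0, y₀)) :=
    (Continuous.prodMk_right _).tendsto y₀
  have hv : ContinuousAt (fun y ↦ -δF (γ₂ y)) y₀ :=
    (ContinuousAt.comp (f := γ₂) cδF hγ₂c).neg
  obtain ⟨δγ, cδγ, hδγ⟩ := hGs.exists_smul_of_sub_eq_smul (t := fun y ↦ hV y ^ r) ha hb hv
    (by
      filter_upwards [hγ₂c.eventually eF, hV'n] with y hy hyV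
      rw [(hγ₂sol y hyV).2, hUγ₂ y hyV] at hy
      rw [smul_neg, ← hy, neg_sub])
    (by simp only [hVy₀]; exact zero_pow (by omega))
  refine ⟨δγ, cδγ, ?_⟩
  filter_upwards [hδγ, hV'n] with y hy hyV
  rwa [hG₁left _ (hγ₂sol y hyV).1, ← (hγ₁sol y hyV).2, hG₁left _ (hγ₁sol y hyV).1] at hy
end

section
/- In the local setting of skew critical problems (D, P, F Banach spaces, E = D × P, U ⊆ E open, h_U : U → ℝ C^∞ with 0 a regular value, α^i : U → E*, Δᵢ : U → L(D,P), gᵢ : U → V ⊆ F all C^k with k ≥ r ≥ 1 and h_V ∘ gᵢ = h_U, Fᵢ(x) = (α^i(x) ∘ (ι_D + Δᵢ(x)), gᵢ(x)) a C^k diffeomorphism onto an open set, and γᵢ the solution maps with Fᵢ(γᵢ(y)) = (0, y)), suppose α^2 = α^1 + O(h_U^r), Δ₂ = Δ₁ + O(h_U^r), g₂ = g₁ + O(h_U^r) at every point of h_U⁻¹(0), so that γ₂ = γ₁ + O(h_V^r). Let y_c with h_V(y_c) = 0 and x_c := γ₁(y_c) = γ₂(y_c). Then u := res^r(γ₂,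 γ₁)(y_c) ∈ E is the unique solution of the pair of linear equations: D(α_{Δ₁})(x_c)(u) = −( res^r(α^2, α^1)(x_c) ∘ (ι_D + Δ₁(x_c)) + α^1(x_c) ∘ res^r(Δ₂, Δ₁)(x_c) ) in D*, and Dg₁(x_c)(u) = − res^r(g₂, g₁)(x_c) in F, where α_{Δ₁}(x) := α^1(x) ∘ (ι_D + Δ₁(x)). In particular, the residual of the solutions depends only on the residuals of the data. -/
open scoped Topology ContDiff

/-! The solutions satisfy `F₂ (γ₂ y) = (0, y) = F₁ (γ₁ y)`, hence
`F₁ (γ₂ y) - F₁ (γ₁ y) = -(F₂ - F₁) (γ₂ y)`. By strict differentiability of `F₁` at `x_c` the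
left side is `h_V(y) ^ r • DF₁(x_c) (δγ y) + o(h_V(y) ^ r)`. Since
`h_U (γ₂ y) = h_V (g₂ (γ₂ y)) = h_V y`, the right side is `-h_V(y) ^ r • δF (γ₂ y)`, where `δF` is
the residual of `F₂` against `F₁` obtained from the product rule. Dividing by `h_V(y) ^ r` and
letting `y → y_c` within `{h_V ≠ 0}` gives `DF₁(x_c) (δγ y_c) = -δF x_c`
(`fderiv_residual_eq_neg`), whose two components are the two equations. The passage to the limit
needs `y_c` to be in the closure of `{h_V ≠ 0}`, which holds because `Dh_U(x_c) ≠ 0` and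
`h_V ∘ g₁ = h_U`. Uniqueness holds since `G₁ ∘ F₁ = id` near `x_c` makes `DF₁(x_c)` injective. -/

open Filter in
/-- Division step: if `f (b y) - f (a y) = -s y • w y` and `b y - a y = s y • d y` with `s ≠ 0`
along `l`, the linear approximation of `f` can be divided by `s` and passed to the limit. Strict
differentiability is needed because neither `a y` nor `b y` is the base point. -/
theorem fderiv_residual_eq_neg {Y X Z : Type*} [NormedAddCommGroup X] [NormedSpace ℝ X]
    [NormedAddCommGroup Z] [NormedSpace ℝ Z] {l : Filter Y} [l.NeBot]
    {f : X → Z} {f' : X →L[ℝ] Z} {x : X} (hf : HasStrictFDerivAt f f' x)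
    {a b d : Y → X} {s : Y → ℝ} {w : Y → Z} {u : X} {w₀ : Z}
    (ha : Tendsto a l (𝓝 x)) (hb : Tendsto b l (𝓝 x)) (hd : Tendsto d l (𝓝 u))
    (hw : Tendsto w l (𝓝 w₀)) (hs : ∀ᶠ y in l, s y ≠ 0)
    (hab : ∀ᶠ y in l, b y - a y = s y • d y)
    (hfab : ∀ᶠ y in l, f (b y) - f (a y) = -(s y • w y)) :
    f' u = -w₀ := by
  have h1 : (fun y => f (b y) - f (a y) - f' (b y - a y)) =o[l] fun y => b y - a y :=
    hf.isLittleO.comp_tendsto (hb.prodMk_nhds ha)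
  have h2 : (fun y => b y - a y) =O[l] s := by
    have h : (fun y => s y • d y) =O[l] fun y => s y • (1 : ℝ) :=
      (Asymptotics.isBigO_refl s l).smul (hd.isBigO_one ℝ)
    refine (h.congr' (hab.mono fun y hy => hy.symm) ?_)
    exact Eventually.of_forall fun y => by simp
  have h3 := (h1.trans_isBigO h2).tendsto_inv_smul_nhds_zero
  have h4 : Tendsto (fun y => -w y - f' (d y)) l (𝓝 0) := by
    refine h3.congr' ?_
    filter_upwards [hs, hab, hfab] with y hy1 hy2 hy3
    rw [hy3, hy2, map_smul, ← smul_neg, ← smul_sub, smul_smul, inv_mul_cancel₀ hy1, one_smul]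
  have h5 : Tendsto (fun y => -w y - f' (d y)) l (𝓝 (-w₀ - f' u)) :=
    hw.neg.sub ((f'.continuous.tendsto u).comp hd)
  exact (sub_eq_zero.mp (tendsto_nhds_unique h5 h4)).symm

open Filter in
/-- If `hV ∘ g = hU` near `x` and `hU` has nonzero derivative at `x`, then `g x` is a
limit of points where `hV` does not vanish. -/
theorem neBot_nhds_inf_ne_zero {X F : Type*} [NormedAddCommGroup X] [NormedSpace ℝ X]
    [TopologicalSpace F] {hU : X → ℝ} {hV : F → ℝ} {g : X → F} {x : X}
    (hg : ContinuousAt g x) (hcompat : ∀ᶠ z in 𝓝 x, hV (g z) = hU z)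
    (hd : fderiv ℝ hU x ≠ 0) : (𝓝 (g x) ⊓ 𝓟 {y | hV y ≠ 0}).NeBot := by
  rw [← frequently_mem_iff_neBot]
  have hfr : ∃ᶠ z in 𝓝 x, hU z ≠ 0 := by
    intro h
    apply hd
    have h0 : hU =ᶠ[𝓝 x] fun _ => (0 : ℝ) := h.mono fun z hz => not_not.mp hz
    rw [h0.fderiv_eq]
    simp
  refine hg.tendsto.frequently ((hfr.and_eventually hcompat).mono ?_)
  rintro z ⟨hz, hc⟩
  simpa [hc] using hz

/-- The residual of the solutions of skew critical problems is determined by the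
residuals of the data (local chart form): with notation as in the contact theorem for
skew critical problems, at a zero `y_c` of `h_V` with `x_c = γ₁(y_c) = γ₂(y_c)`, the
residual `u = res^r(γ₂, γ₁)(y_c)` is the unique solution of
`D(α_{Δ₁})(x_c) u = -(res^r(α², α¹)(x_c) ∘ (ι_D + Δ₁(x_c)) + α¹(x_c) ∘ res^r(Δ₂, Δ₁)(x_c))`
and `Dg₁(x_c) u = -res^r(g₂, g₁)(x_c)`, where `α_{Δ₁}(x) = α¹(x) ∘ (ι_D + Δ₁(x))`. -/
theorem skew_critical_solutions_residual
    {D P F : Type*}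
    [NormedAddCommGroup D] [NormedSpace ℝ D] [CompleteSpace D]
    [NormedAddCommGroup P] [NormedSpace ℝ P] [CompleteSpace P]
    [NormedAddCommGroup F] [NormedSpace ℝ F] [CompleteSpace F]
    (U : Set (D × P)) (hUopen : IsOpen U)
    (hU : D × P → ℝ) (hUsm : ContDiffOn ℝ ∞ hU U)
    (hUreg : ∀ x ∈ U, hU x = 0 → fderiv ℝ hU x ≠ 0)
    (V : Set F) (hVopen : IsOpen V) (hV : F → ℝ)
    (r k : ℕ) (hr : 1 ≤ r) (hkr : r ≤ k)
    (α₁ α₂ : D × P → ((D × P) →L[ℝ] ℝ))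
    (Δ₁ Δ₂ : D × P → (D →L[ℝ] P))
    (g₁ g₂ : D × P → F)
    (hα₁ : ContDiffOn ℝ k α₁ U) (hα₂ : ContDiffOn ℝ k α₂ U)
    (hΔ₁ : ContDiffOn ℝ k Δ₁ U) (hΔ₂ : ContDiffOn ℝ k Δ₂ U)
    (hg₁ : ContDiffOn ℝ k g₁ U) (hg₂ : ContDiffOn ℝ k g₂ U)
    (hg₁map : Set.MapsTo g₁ U V) (hg₂map : Set.MapsTo g₂ U V)
    (hcompat₁ : ∀ x ∈ U, hV (g₁ x) = hU x) (hcompat₂ : ∀ x ∈ U, hV (g₂ x) = hU x)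
    (F₁ F₂ : D × P → (D →L[ℝ] ℝ) × F)
    (hF₁def : ∀ x, F₁ x =
      ((α₁ x).comp ((ContinuousLinearMap.id ℝ D).prod (Δ₁ x)), g₁ x))
    (hF₂def : ∀ x, F₂ x =
      ((α₂ x).comp ((ContinuousLinearMap.id ℝ D).prod (Δ₂ x)), g₂ x))
    (G₁ G₂ : (D →L[ℝ] ℝ) × F → D × P)
    (hW₁open : IsOpen (F₁ '' U)) (hW₂open : IsOpen (F₂ '' U))
    (hG₁ : ContDiffOn ℝ k G₁ (F₁ '' U)) (hG₂ : ContDiffOn ℝ k G₂ (F₂ '' U))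
    (hG₁left : ∀ x ∈ U, G₁ (F₁ x) = x) (hG₁right : ∀ w ∈ F₁ '' U, F₁ (G₁ w) = w)
    (hG₂left : ∀ x ∈ U, G₂ (F₂ x) = x) (hG₂right : ∀ w ∈ F₂ '' U, F₂ (G₂ w) = w)
    (V' : Set F) (hV'open : IsOpen V') (hV'V : V' ⊆ V)
    (γ₁ γ₂ : F → D × P)
    (hγ₁ : ContDiffOn ℝ k γ₁ V') (hγ₂ : ContDiffOn ℝ k γ₂ V')
    (hγ₁sol : ∀ y ∈ V', γ₁ y ∈ U ∧ F₁ (γ₁ y) = (0, y))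
    (hγ₂sol : ∀ y ∈ V', γ₂ y ∈ U ∧ F₂ (γ₂ y) = (0, y))
    -- the base point: a zero `y_c` of `h_V` with skew critical point `x_c`
    (y_c : F) (hy_c : y_c ∈ V') (hhy_c : hV y_c = 0)
    (x_c : D × P) (hx_c : x_c = γ₁ y_c)
    -- residuals of the data at `x_c`
    (δα : D × P → ((D × P) →L[ℝ] ℝ)) (hδαc : ContinuousAt δα x_c)
    (hδα : ∀ᶠ x in 𝓝 x_c, α₂ x - α₁ x = hU x ^ r • δα x)
    (δΔ : D × P → (D →L[ℝ] P)) (hδΔc : ContinuousAt δΔ x_c)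
    (hδΔ : ∀ᶠ x in 𝓝 x_c, Δ₂ x - Δ₁ x = hU x ^ r • δΔ x)
    (δg : D × P → F) (hδgc : ContinuousAt δg x_c)
    (hδg : ∀ᶠ x in 𝓝 x_c, g₂ x - g₁ x = hU x ^ r • δg x)
    -- residual of the solutions at `y_c`
    (δγ : F → D × P) (hδγc : ContinuousAt δγ y_c)
    (hδγ : ∀ᶠ y in 𝓝 y_c, γ₂ y - γ₁ y = hV y ^ r • δγ y)
    -- the auxiliary map `α_{Δ₁}(x) = α¹(x) ∘ (ι_D + Δ₁(x))`
    (αΔ₁ : D × P → (D →L[ℝ] ℝ))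
    (hαΔ₁def : ∀ x, αΔ₁ x =
      (α₁ x).comp ((ContinuousLinearMap.id ℝ D).prod (Δ₁ x))) :
    (fderiv ℝ αΔ₁ x_c (δγ y_c) =
      -((δα x_c).comp ((ContinuousLinearMap.id ℝ D).prod (Δ₁ x_c)) +
        (α₁ x_c).comp ((ContinuousLinearMap.inr ℝ D P).comp (δΔ x_c)))) ∧
    (fderiv ℝ g₁ x_c (δγ y_c) = -(δg x_c)) ∧
    (∀ u : D × P,
      fderiv ℝ αΔ₁ x_c u =
        -((δα x_c).comp ((ContinuousLinearMap.id ℝ D).prod (Δ₁ x_c)) +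
          (α₁ x_c).comp ((ContinuousLinearMap.inr ℝ D P).comp (δΔ x_c))) →
      fderiv ℝ g₁ x_c u = -(δg x_c) →
      u = δγ y_c) := by
  subst hx_c
  have hxU : γ₁ y_c ∈ U := (hγ₁sol y_c hy_c).1
  have hUn : U ∈ 𝓝 (γ₁ y_c) := hUopen.mem_nhds hxU
  have hV'n : V' ∈ 𝓝 y_c := hV'open.mem_nhds hy_c
  have hk : (k : WithTop ℕ∞) ≠ 0 := by
    have : k ≠ 0 := by omega
    exact_mod_cast this
  have hr0 : r ≠ 0 := by omega
  have hg₁y : ∀ y ∈ V', g₁ (γ₁ y) = y := fun y hy => by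
    have h := congrArg Prod.snd (hγ₁sol y hy).2
    rwa [hF₁def] at h
  have hg₂y : ∀ y ∈ V', g₂ (γ₂ y) = y := fun y hy => by
    have h := congrArg Prod.snd (hγ₂sol y hy).2
    rwa [hF₂def] at h
  have hUγ₂ : ∀ y ∈ V', hU (γ₂ y) = hV y := fun y hy => by
    rw [← hcompat₂ _ (hγ₂sol y hy).1, hg₂y y hy]
  have hUx : hU (γ₁ y_c) = 0 := by
    rw [← hcompat₁ _ hxU, hg₁y y_c hy_c, hhy_c]
  have hγeq : γ₂ y_c = γ₁ y_c := by
    have h := hδγ.self_of_nhds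
    rw [hhy_c, zero_pow hr0, zero_smul] at h
    exact sub_eq_zero.mp h
  have hΔeq : Δ₂ (γ₁ y_c) = Δ₁ (γ₁ y_c) := by
    have h := hδΔ.self_of_nhds
    rw [hUx, zero_pow hr0, zero_smul] at h
    exact sub_eq_zero.mp h
  have hα₁x := hα₁.contDiffAt hUn
  have hΔ₁x := hΔ₁.contDiffAt hUn
  have hg₁x := hg₁.contDiffAt hUn
  have hαΔx : ContDiffAt ℝ k αΔ₁ (γ₁ y_c) := by
    rw [funext hαΔ₁def]
    have h : ContDiffAt ℝ k
        (fun x => (ContinuousLinearMap.id ℝ D).prod (Δ₁ x)) (γ₁ y_c) := by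
      have e : (fun x => (ContinuousLinearMap.id ℝ D).prod (Δ₁ x)) =
          fun x => ContinuousLinearMap.inl ℝ D P +
            (ContinuousLinearMap.inr ℝ D P).comp (Δ₁ x) := by
        funext x; ext d <;> simp
      rw [e]
      exact contDiffAt_const.add (contDiffAt_const.clm_comp hΔ₁x)
    exact hα₁x.clm_comp h
  have hF₁fun : F₁ = fun x => (αΔ₁ x, g₁ x) := by
    funext x; rw [hF₁def, hαΔ₁def]
  have hF₁' : HasStrictFDerivAt F₁
      ((fderiv ℝ αΔ₁ (γ₁ y_c)).prod (fderiv ℝ g₁ (γ₁ y_c))) (γ₁ y_c) := by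
    rw [hF₁fun]
    exact (hαΔx.hasStrictFDerivAt hk).prodMk (hg₁x.hasStrictFDerivAt hk)
  have hinj : Function.Injective
      ((fderiv ℝ αΔ₁ (γ₁ y_c)).prod (fderiv ℝ g₁ (γ₁ y_c))) := by
    have hGd : DifferentiableAt ℝ G₁ (F₁ (γ₁ y_c)) :=
      (hG₁.contDiffAt (hW₁open.mem_nhds ⟨_, hxU, rfl⟩)).differentiableAt hk
    have hc := hGd.hasFDerivAt.comp (γ₁ y_c) hF₁'.hasFDerivAt
    have hid : HasFDerivAt (G₁ ∘ F₁) (ContinuousLinearMap.id ℝ (D × P)) (γ₁ y_c) :=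
      (hasFDerivAt_id _).congr_of_eventuallyEq
        (Filter.eventually_of_mem hUn fun x hx => hG₁left x hx)
    have he := hc.unique hid
    intro u v huv
    have hu := DFunLike.congr_fun he u
    have hv := DFunLike.congr_fun he v
    rw [ContinuousLinearMap.comp_apply] at hu hv
    rw [huv] at hu
    exact hu.symm.trans hv
  -- the approach to `y_c` through points where `hV` is nonzero
  let l : Filter F := 𝓝 y_c ⊓ Filter.principal {y | hV y ≠ 0}
  have hl : l ≤ 𝓝 y_c := inf_le_left
  have hlne : l.NeBot := by
    have h := neBot_nhds_inf_ne_zero (hV := hV) hg₁x.continuousAt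
      (Filter.eventually_of_mem hUn hcompat₁) (hUreg _ hxU hUx)
    rwa [hg₁y y_c hy_c] at h
  have ht₁ : Filter.Tendsto γ₁ (𝓝 y_c) (𝓝 (γ₁ y_c)) :=
    (hγ₁.contDiffAt hV'n).continuousAt
  have ht₂ : Filter.Tendsto γ₂ (𝓝 y_c) (𝓝 (γ₁ y_c)) := by
    have h : Filter.Tendsto γ₂ (𝓝 y_c) (𝓝 (γ₂ y_c)) := (hγ₂.contDiffAt hV'n).continuousAt
    rwa [hγeq] at h
  -- the residual of `F₂` against `F₁`; taking `Δ₂` in the first term makes the product rule exact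
  let δF : D × P → (D →L[ℝ] ℝ) × F := fun x =>
    ((δα x).comp ((ContinuousLinearMap.id ℝ D).prod (Δ₂ x)) +
      (α₁ x).comp ((ContinuousLinearMap.inr ℝ D P).comp (δΔ x)), δg x)
  have hδFc : ContinuousAt δF (γ₁ y_c) := by
    have hΔ₂c := (hΔ₂.contDiffAt hUn).continuousAt
    have h : ContinuousAt
        (fun x => (ContinuousLinearMap.id ℝ D).prod (Δ₂ x)) (γ₁ y_c) := by
      have e : (fun x => (ContinuousLinearMap.id ℝ D).prod (Δ₂ x)) =
          fun x => ContinuousLinearMap.inl ℝ D P +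
            (ContinuousLinearMap.inr ℝ D P).comp (Δ₂ x) := by
        funext x; ext d <;> simp
      rw [e]
      exact continuousAt_const.add (continuousAt_const.clm_comp hΔ₂c)
    exact ((hδαc.clm_comp h).add
      (hα₁x.continuousAt.clm_comp (continuousAt_const.clm_comp hδΔc))).prodMk hδgc
  have hδF : ∀ᶠ x in 𝓝 (γ₁ y_c), F₂ x - F₁ x = hU x ^ r • δF x := by
    filter_upwards [hδα, hδΔ, hδg] with x h1 h2 h3
    rw [hF₁def, hF₂def]
    refine Prod.ext ?_ h3
    ext d
    have h1d := DFunLike.congr_fun h1 (d, Δ₂ x d)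
    have h2d := congrArg (fun p : P => α₁ x (0, p)) (DFunLike.congr_fun h2 d)
    have e1 : α₁ x (0, Δ₂ x d - Δ₁ x d) = α₁ x (d, Δ₂ x d) - α₁ x (d, Δ₁ x d) := by
      rw [← map_sub]; simp
    have e2 : α₁ x (0, hU x ^ r • δΔ x d) = hU x ^ r * α₁ x (0, δΔ x d) := by
      rw [← smul_eq_mul, ← map_smul (α₁ x), Prod.smul_mk, smul_zero]
    simp only [sub_apply, smul_apply,
      smul_eq_mul, e1, e2] at h1d h2d
    simp only [δF, Prod.fst_sub, Prod.smul_fst, sub_apply,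
      smul_apply, add_apply,
      ContinuousLinearMap.comp_apply, ContinuousLinearMap.prod_apply,
      ContinuousLinearMap.id_apply, ContinuousLinearMap.inr_apply, smul_eq_mul]
    linarith
  have hmain := fderiv_residual_eq_neg (l := l) hF₁' (s := fun y => hV y ^ r)
    (ht₁.mono_left hl) (ht₂.mono_left hl) (hδγc.tendsto.mono_left hl)
    ((hδFc.tendsto.comp ht₂).mono_left hl)
    (Filter.eventually_of_mem (Filter.mem_inf_of_right (Filter.mem_principal_self _))
      fun y hy => pow_ne_zero r hy)
    (hl hδγ) (by
      filter_upwards [hl (ht₂.eventually hδF), hl hV'n] with y h1 hy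
      rw [hUγ₂ y hy, (hγ₂sol y hy).2] at h1
      rw [(hγ₁sol y hy).2, Function.comp_apply, ← h1, neg_sub])
  have hm1 := congrArg Prod.fst hmain
  have hm2 := congrArg Prod.snd hmain
  simp only [δF, hΔeq, ContinuousLinearMap.prod_apply, Prod.fst_neg, Prod.snd_neg] at hm1 hm2
  refine ⟨hm1, hm2, fun u hu1 hu2 => hinj ?_⟩
  rw [ContinuousLinearMap.prod_apply, ContinuousLinearMap.prod_apply, hu1, hu2, hm1, hm2]
end

section
/- Let E be a Banach space, U ⊆ E open, α : U → E* (the continuous dual of E) a C¹ map, D ⊆ E a closed subspace, and x_c ∈ U a point such that α(x_c)(d) = 0 for all d ∈ D. Let V₁, V₂ : U → D be C¹ maps with V₁(x_c) = V₂(x_c). Then the derivatives at x_c of the real-valued functions x ↦ ⟨α(x), V₁(x)⟩ and x ↦ ⟨α(x), V₂(x)⟩ coincide: d(⟨α, V₁⟩)(x_c) = d(⟨α, V₂⟩)(x_c). -/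
/-!
By the product rule, `d⟨α, V⟩(xc) h = α(xc) (dV(xc) h) + (dα(xc) h) (V(xc))`. The second term
depends only on `V(xc)`. The first one vanishes when `V` is `D`-valued, by `comp_fderiv_eq_zero`.
-/

/-- A functional vanishing on `D` kills the derivative of a `D`-valued map `V`: the composite is
the derivative of `x ↦ φ (V x)`, which is zero near `xc`. -/
lemma comp_fderiv_eq_zero {E : Type*} [NormedAddCommGroup E] [NormedSpace ℝ E]
    {U : Set E} {xc : E} (hU : U ∈ nhds xc) (φ : E →L[ℝ] ℝ) (D : Submodule ℝ E)
    (hφ : ∀ d ∈ D, φ d = 0) (V : E → E) (hV : ContDiffOn ℝ 1 V U) (hVD : ∀ x ∈ U, V x ∈ D) :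
    φ.comp (fderiv ℝ V xc) = 0 := by
  have hVd : HasFDerivAt V (fderiv ℝ V xc) xc :=
    ((hV.contDiffAt hU).differentiableAt one_ne_zero).hasFDerivAt
  have h0 : (fun x => φ (V x)) =ᶠ[nhds xc] fun _ => (0 : ℝ) := by
    filter_upwards [hU] with x hx using hφ _ (hVD x hx)
  exact (φ.hasFDerivAt.comp xc hVd).unique ((hasFDerivAt_const (0 : ℝ) xc).congr_of_eventuallyEq h0)

/-- Well-definedness of the skew Hessian: at a point where the one-form `α`
annihilates the closed subspace `D`, the derivative of the contraction of `α`
with a `D`-valued vector field depends only on the value of the field at the point. -/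
theorem skew_hessian_well_defined
    {E : Type*} [NormedAddCommGroup E] [NormedSpace ℝ E] [CompleteSpace E]
    (U : Set E) (hU : IsOpen U)
    (α : E → (E →L[ℝ] ℝ)) (hα : ContDiffOn ℝ 1 α U)
    (D : Submodule ℝ E) (hD : IsClosed (D : Set E))
    (xc : E) (hxc : xc ∈ U) (hcrit : ∀ d ∈ D, α xc d = 0)
    (V₁ V₂ : E → E) (hV₁ : ContDiffOn ℝ 1 V₁ U) (hV₂ : ContDiffOn ℝ 1 V₂ U)
    (hV₁D : ∀ x ∈ U, V₁ x ∈ D) (hV₂D : ∀ x ∈ U, V₂ x ∈ D)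
    (heq : V₁ xc = V₂ xc) :
    fderiv ℝ (fun x => α x (V₁ x)) xc = fderiv ℝ (fun x => α x (V₂ x)) xc := by
  have hU' : U ∈ nhds xc := hU.mem_nhds hxc
  have hαd : DifferentiableAt ℝ α xc := (hα.contDiffAt hU').differentiableAt one_ne_zero
  rw [fderiv_clm_apply hαd ((hV₁.contDiffAt hU').differentiableAt one_ne_zero),
    fderiv_clm_apply hαd ((hV₂.contDiffAt hU').differentiableAt one_ne_zero),
    comp_fderiv_eq_zero hU' (α xc) D hcrit V₁ hV₁ hV₁D,
    comp_fderiv_eq_zero hU' (α xc) D hcrit V₂ hV₂ hV₂D, heq]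
end
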